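/- arXiv:2401.10096 — 5 statements merged into one kernel-verified Lean document; each statement's English description precedes it below -/
import Mathlib

section
/- Let b : ℝ²×ℝ² → ℂ be smooth and compactly supported and let f, g be Schwartz functions on ℝ². Define the symbols b^Σ(ξ,η) := −(ξ·∇_ξ + η·∇_η)b(ξ,η) and b^Ω(ξ,η) := (ξ₁∂_{ξ₂} − ξ₂∂_{ξ₁} + η₁∂_{η₂} − η₂∂_{η₁})b(ξ,η). Then the bilinear commutators satisfy: Σ(B_b(f,g)) − B_b(Σf, g) − B_b(f, Σg) = B_{b^Σ}(f,g), and Ω(B_b(f,g)) − B_b(Ωf, g) − B_b(f, Ωg) = B_{b^Ω}(f,g). -/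
/-!
Both identities are instances of one, for `Lf(x) = Df(x)(Ax)` with `A` linear on `ℝ²`:
`A = id` gives `Σ` and `A = rotv` gives `Ω`. Let `A'` be the transpose of `A`. Integrating
by parts, the Fourier transform of `Lf` is `-tr(A) f̂(ξ) - Df̂(ξ)(A'ξ)`
(`ft2_linear_field`). The integrand `H(ξ,η) = e^{i x·ξ} b(ξ,η) f̂(ξ-η) ĝ(η)` of `B_b(f,g)(x)` is
`C¹` with compact support, so the divergence theorem for the field `V(ξ,η) = (A'ξ, A'η)`, of
divergence `2 tr(A)`, gives `∫ DH(V) = -2 tr(A) ∫ H` (`integral_fderiv_linear_field`).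

The product rule splits `DH(V)` into four terms. The derivative of the phase is
`i⟪x,A'ξ⟫ = i⟪Ax,ξ⟫`, which yields `L(B_b(f,g))`; since `V` commutes with
`(ξ,η) ↦ ξ-η`, the derivatives falling on `f̂(ξ-η)` and `ĝ(η)`, each together with one copy of
`tr(A) ∫ H`, yield `-B_b(Lf, g)` and `-B_b(f, Lg)`; the derivative falling on `b` is the symbol of
the commutator, up to sign. As `id` is symmetric and `rotv` antisymmetric, that
symbol is `b^Σ`, respectively `b^Ω`.
-/

/-!
STATEMENT 3: Commutation of the scaling field `Σ = x·∇` and the rotation field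
`Ω = x₁∂₂ − x₂∂₁` with bilinear pseudo-product operators: for `b` smooth compactly
supported and `f, g` Schwartz on `ℝ²`,
`Σ(B_b(f,g)) − B_b(Σf, g) − B_b(f, Σg) = B_{b^Σ}(f,g)` with
`b^Σ = −(ξ·∇_ξ + η·∇_η)b`, and
`Ω(B_b(f,g)) − B_b(Ωf, g) − B_b(f, Ωg) = B_{b^Ω}(f,g)` with
`b^Ω = (ξ₁∂_{ξ₂} − ξ₂∂_{ξ₁} + η₁∂_{η₂} − η₂∂_{η₁})b`.
-/

open MeasureTheory Complex
open scoped RealInnerProductSpace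

noncomputable section

abbrev E2 := EuclideanSpace ℝ (Fin 2)

/-- The Fourier transform on `ℝ²`, normalized `f̂(ξ) = (2π)⁻¹ ∫ e^{-i x·ξ} f(x) dx`. -/
def ft2 (f : E2 → ℂ) (ξ : E2) : ℂ :=
  (2 * Real.pi : ℂ)⁻¹ * ∫ x : E2, Complex.exp (-(Complex.I * ((⟪x, ξ⟫ : ℝ) : ℂ))) * f x

/-- The bilinear operator associated with a symbol `b` on `ℝ²×ℝ²`:
`B_b(f,g)(x) = (2π)^{-2} ∫∫ e^{i x·ξ} b(ξ,η) f̂(ξ-η) ĝ(η) dη dξ`. -/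
def Bop (b : E2 × E2 → ℂ) (f g : E2 → ℂ) (x : E2) : ℂ :=
  ((2 * Real.pi : ℂ) ^ 2)⁻¹ *
    ∫ ξ : E2, ∫ η : E2,
      Complex.exp (Complex.I * ((⟪x, ξ⟫ : ℝ) : ℂ)) * b (ξ, η) * ft2 f (ξ - η) * ft2 g η

/-- The vector `(−x₂, x₁)`, generator of rotations in the plane. -/
def rotv (x : E2) : E2 :=
  EuclideanSpace.single (0 : Fin 2) (-(x 1)) + EuclideanSpace.single (1 : Fin 2) (x 0)

/-- The scaling vector field `Σf(x) = x·∇f(x) = x₁∂₁f + x₂∂₂f`. -/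
def Sc (f : E2 → ℂ) : E2 → ℂ := fun x => fderiv ℝ f x x

/-- The rotation vector field `Ωf(x) = x₁∂₂f − x₂∂₁f`. -/
def Om (f : E2 → ℂ) : E2 → ℂ := fun x => fderiv ℝ f x (rotv x)

/-- The symbol `b^Σ(ξ,η) = −(ξ·∇_ξ + η·∇_η) b(ξ,η)`. -/
def bSc (b : E2 × E2 → ℂ) : E2 × E2 → ℂ := fun w => -(fderiv ℝ b w w)

/-- The symbol `b^Ω(ξ,η) = (ξ₁∂_{ξ₂} − ξ₂∂_{ξ₁} + η₁∂_{η₂} − η₂∂_{η₁}) b(ξ,η)`. -/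
def bOm (b : E2 × E2 → ℂ) : E2 × E2 → ℂ := fun w => fderiv ℝ b w (rotv w.1, rotv w.2)

/-! ### Linear vector fields and oscillatory integrals -/

/-- Divergence theorem for a linear vector field: `∫ DH(w)(Vw) dw = -tr(V) ∫ H`. In a basis,
`Vw = ∑ᵢ ℓᵢ(w) V eᵢ` with `ℓᵢ` the coordinates, and each summand is integrated by parts in the
constant direction `V eᵢ`; the trace appears as `∑ᵢ ℓᵢ(V eᵢ)`. -/
lemma integral_fderiv_linear_field {W : Type*} [NormedAddCommGroup W] [NormedSpace ℝ W]
    [FiniteDimensional ℝ W] [MeasurableSpace W] [BorelSpace W] (μ : Measure W)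
    [μ.IsAddHaarMeasure] (V : W →L[ℝ] W) (H : W → ℂ) (hH : ContDiff ℝ 1 H)
    (h0 : Integrable H μ) (h1 : Integrable (fun w => ‖w‖ * ‖H w‖) μ)
    (h2 : Integrable (fun w => ‖w‖ * ‖fderiv ℝ H w‖) μ) :
    ∫ w, fderiv ℝ H w (V w) ∂μ = -((LinearMap.trace ℝ W (V : W →ₗ[ℝ] W) : ℝ) : ℂ) * ∫ w, H w ∂μ := by
  classical
  let B := Module.finBasis ℝ W
  let ℓ : Fin (Module.finrank ℝ W) → W →L[ℝ] ℂ := fun i =>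
    Complex.ofRealCLM.comp (LinearMap.toContinuousLinearMap (B.coord i))
  have hcH : Continuous (fderiv ℝ H) := hH.continuous_fderiv (by norm_num)
  have hV : ∀ w, fderiv ℝ H w (V w) = ∑ i, ℓ i w * fderiv ℝ H w (V (B i)) := by
    intro w
    have h : V w = ∑ i, B.repr w i • V (B i) := by
      conv_lhs => rw [← B.sum_repr w]
      simp [map_sum, -Module.Basis.sum_repr]
    rw [h]
    simp [map_sum, ℓ]
  have hd : ∀ i w, fderiv ℝ (ℓ i) w = ℓ i := fun i w => (ℓ i).fderiv
  have hi1 : ∀ i, Integrable (fun w => ℓ i w * fderiv ℝ H w (V (B i))) μ := by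
    intro i
    refine (h2.const_mul (‖ℓ i‖ * ‖V (B i)‖)).mono' ?_ (Filter.Eventually.of_forall fun w => ?_)
    · exact ((ℓ i).continuous.mul (hcH.clm_apply continuous_const)).aestronglyMeasurable
    · rw [norm_mul]
      calc _ ≤ (‖ℓ i‖ * ‖w‖) * (‖fderiv ℝ H w‖ * ‖V (B i)‖) := by
            gcongr
            · exact (ℓ i).le_opNorm w
            · exact (fderiv ℝ H w).le_opNorm _
        _ = _ := by ring
  have hi2 : ∀ i, Integrable (fun w => ℓ i w * H w) μ := by
    intro i
    refine (h1.const_mul ‖ℓ i‖).mono' ?_ (Filter.Eventually.of_forall fun w => ?_)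
    · exact ((ℓ i).continuous.mul hH.continuous).aestronglyMeasurable
    · rw [norm_mul, ← mul_assoc]
      gcongr
      exact (ℓ i).le_opNorm w
  have key : ∀ i, ∫ w, ℓ i w * fderiv ℝ H w (V (B i)) ∂μ = -(ℓ i (V (B i)) * ∫ w, H w ∂μ) := by
    intro i
    rw [integral_mul_fderiv_eq_neg_fderiv_mul_of_integrable _ (hi1 i) (hi2 i)
      (fun w _ => (ℓ i).differentiableAt) (fun w _ => hH.differentiable (by norm_num) w)]
    · simp only [hd, integral_const_mul]
    · simp only [hd]
      exact h0.const_mul _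
  simp_rw [hV]
  rw [integral_finsetSum _ (fun i _ => hi1 i)]
  simp_rw [key]
  rw [Finset.sum_neg_distrib, ← Finset.sum_mul, neg_mul]
  congr 2
  rw [LinearMap.trace_eq_matrix_trace ℝ B, Matrix.trace]
  simp [ℓ, LinearMap.toMatrix_apply]

/-- Differentiation under the integral sign in `y ↦ ∫ e^{i L(w,y)} u(w) dw`, for `L` bilinear and
`u` with a finite first moment. It is applied to `ft2`, with `L(w,y) = -⟪w,y⟫`, and to `Bop`, with
`w = (ξ,η)` and `L(w,y) = ⟪ξ,y⟫`. -/
lemma fderiv_oscillatory_integral {W : Type*} [NormedAddCommGroup W] [NormedSpace ℝ W]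
    [FiniteDimensional ℝ W] [MeasurableSpace W] [BorelSpace W] (μ : Measure W)
    (L : W →L[ℝ] E2 →L[ℝ] ℝ) (u : W → ℂ) (hu : Continuous u)
    (h0 : Integrable u μ) (h1 : Integrable (fun w => ‖w‖ * ‖u w‖) μ) (y v : E2) :
    DifferentiableAt ℝ
      (fun y => ∫ w, Complex.exp (Complex.I * ((L w y : ℝ) : ℂ)) * u w ∂μ) y ∧
    fderiv ℝ (fun y => ∫ w, Complex.exp (Complex.I * ((L w y : ℝ) : ℂ)) * u w ∂μ) y v
      = ∫ w, Complex.I * ((L w v : ℝ) : ℂ) *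
          (Complex.exp (Complex.I * ((L w y : ℝ) : ℂ)) * u w) ∂μ := by
  let F' : E2 → W → E2 →L[ℝ] ℂ := fun y w =>
    (Complex.exp (Complex.I * ((L w y : ℝ) : ℂ)) * u w * Complex.I) •
      (Complex.ofRealCLM.comp (L w))
  have hn : ∀ y w, ‖Complex.exp (Complex.I * ((L w y : ℝ) : ℂ))‖ = 1 := by
    intro y w
    rw [mul_comm]; exact Complex.norm_exp_ofReal_mul_I _
  have hcF : ∀ y, Continuous fun w => Complex.exp (Complex.I * ((L w y : ℝ) : ℂ)) * u w := by
    intro y; fun_prop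
  have hcF' : Continuous (F' y) := by
    refine ((hcF y).mul continuous_const).smul ?_
    exact ((ContinuousLinearMap.compL ℝ E2 ℝ ℂ Complex.ofRealCLM).continuous.comp L.continuous)
  have hF'n : ∀ y w, ‖F' y w‖ ≤ ‖L‖ * (‖w‖ * ‖u w‖) := by
    intro y w
    simp only [F', norm_smul, norm_mul, hn, Complex.norm_I, one_mul, mul_one]
    calc _ ≤ ‖u w‖ * (‖Complex.ofRealCLM‖ * ‖L w‖) := by
          gcongr; exact ContinuousLinearMap.opNorm_comp_le _ _
      _ ≤ ‖u w‖ * (1 * (‖L‖ * ‖w‖)) := by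
          gcongr
          · simp
          · exact L.le_opNorm w
      _ = _ := by ring
  have hF'i : Integrable (F' y) μ :=
    (h1.const_mul ‖L‖).mono' hcF'.aestronglyMeasurable (Filter.Eventually.of_forall (hF'n y))
  have key := hasFDerivAt_integral_of_dominated_of_fderiv_le (𝕜 := ℝ) (μ := μ) (s := Set.univ)
    (F := fun y w => Complex.exp (Complex.I * ((L w y : ℝ) : ℂ)) * u w) (F' := F') (x₀ := y)
    (bound := fun w => ‖L‖ * (‖w‖ * ‖u w‖)) Filter.univ_mem
    (Filter.Eventually.of_forall fun y => (hcF y).aestronglyMeasurable)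
    (h0.mono (hcF y).aestronglyMeasurable (Filter.Eventually.of_forall fun w => by
      rw [norm_mul, hn, one_mul]))
    hcF'.aestronglyMeasurable (Filter.Eventually.of_forall fun w y _ => hF'n y w)
    (h1.const_mul _) (Filter.Eventually.of_forall fun w y _ => by
      have h := (((Complex.ofRealCLM.comp (L w)).hasFDerivAt (x := y)).const_mul
        Complex.I).cexp.mul_const (u w)
      refine h.congr_fderiv ?_
      ext z
      simp [F']
      ring)
  refine ⟨key.differentiableAt, ?_⟩
  rw [key.fderiv, ContinuousLinearMap.integral_apply hF'i]
  congr 1; ext w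
  simp [F']
  ring

/-! ### The Fourier transform of a Schwartz function -/

/-- Smoothness comes from Mathlib's Fourier transform on Schwartz space, from which `ft2` differs
by the factor `(2π)⁻¹` and the rescaling `ξ ↦ ξ/(2π)`. -/
lemma ft2_contDiff (f : SchwartzMap E2 ℂ) : ContDiff ℝ 1 (ft2 f) := by
  have h : ft2 f = fun ξ => (2 * Real.pi : ℂ)⁻¹ *
      (FourierTransform.fourier f : SchwartzMap E2 ℂ) ((2 * Real.pi)⁻¹ • ξ) := by
    ext ξ
    rw [ft2, SchwartzMap.fourier_coe, Real.fourier_eq']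
    congr 2; ext x
    rw [smul_eq_mul, inner_smul_right]
    congr 2
    have : (Real.pi : ℂ) ≠ 0 := by exact_mod_cast Real.pi_ne_zero
    push_cast
    field_simp
  rw [h]
  exact contDiff_const.mul (((FourierTransform.fourier f : SchwartzMap E2 ℂ).smooth 1).comp
    (contDiff_const_smul _))

/-- With `A'` the transpose of `A`, the Fourier transform of `x ↦ Df(x)(Ax)` is
`-tr(A) f̂ - Df̂(ξ)(A'ξ)`. This is the divergence theorem for `e^{-i x·ξ} f(x)` along the field
`Ax`, as `⟪Ax,ξ⟫ = ⟪x,A'ξ⟫` turns the derivative of the phase into a derivative in `ξ`. -/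
lemma ft2_linear_field (f : SchwartzMap E2 ℂ) (A A' : E2 →L[ℝ] E2)
    (hA : ∀ x ξ, ⟪A x, ξ⟫ = ⟪x, A' ξ⟫) (ξ : E2) :
    ft2 (fun x => fderiv ℝ f x (A x)) ξ
      = -((LinearMap.trace ℝ E2 (A : E2 →ₗ[ℝ] E2) : ℝ) : ℂ) * ft2 f ξ
        - fderiv ℝ (ft2 f) ξ (A' ξ) := by
  have hf1 : ContDiff ℝ 1 f := f.smooth 1
  have i1 : Integrable (fun w => ‖w‖ * ‖f w‖) := by simpa using f.integrable_pow_mul volume 1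
  have i2 : Integrable (fun w => ‖w‖ * ‖fderiv ℝ f w‖) := by
    simpa [norm_iteratedFDeriv_one] using f.integrable_pow_mul_iteratedFDeriv volume 1 1
  let L : E2 →L[ℝ] E2 →L[ℝ] ℝ := -(innerSL ℝ)
  let E : E2 → ℂ := fun x => Complex.exp (-(Complex.I * ((⟪x, ξ⟫ : ℝ) : ℂ)))
  have hn : ∀ x, ‖E x‖ = 1 := by
    intro x
    have := Complex.norm_exp_ofReal_mul_I (-⟪x, ξ⟫)
    rw [← this]; simp only [E]; congr 2; push_cast; ring
  have hE : ∀ x, HasFDerivAt E ((E x * -Complex.I) • (Complex.ofRealCLM.comp (innerSL ℝ ξ))) x := by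
    intro x
    have h := (((Complex.ofRealCLM.comp (innerSL ℝ ξ)).hasFDerivAt (x := x)).const_mul
        (-Complex.I)).cexp
    have e : E = fun x => Complex.exp (-Complex.I * (Complex.ofRealCLM.comp (innerSL ℝ ξ)) x) := by
      ext x; simp [E, real_inner_comm]
    rw [e]
    refine h.congr_fderiv ?_
    ext z
    simp
    ring
  have hEc : ContDiff ℝ 1 E := by
    unfold E
    exact (contDiff_const.mul (Complex.ofRealCLM.contDiff.comp
      (contDiff_id.inner ℝ contDiff_const))).neg.cexp
  have hdiff : ∀ x v, fderiv ℝ (fun x => E x * f x) x v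
      = E x * fderiv ℝ f x v - Complex.I * ((⟪v, ξ⟫ : ℝ) : ℂ) * (E x * f x) := by
    intro x v
    rw [((hE x).fun_mul (hf1.differentiable (by norm_num) x).hasFDerivAt).fderiv]
    simp [real_inner_comm]
    ring
  have hbound : ∀ x, ‖fderiv ℝ (fun x => E x * f x) x‖ ≤ ‖fderiv ℝ f x‖ + ‖ξ‖ * ‖f x‖ := by
    intro x
    refine ContinuousLinearMap.opNorm_le_bound _ (by positivity) fun v => ?_
    rw [hdiff]
    refine (norm_sub_le _ _).trans ?_
    simp only [norm_mul, hn, Complex.norm_I, one_mul, Complex.norm_real]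
    have a1 := (fderiv ℝ f x).le_opNorm v
    have a2 := norm_inner_le_norm (𝕜 := ℝ) v ξ
    have a3 := mul_le_mul_of_nonneg_right a2 (norm_nonneg (f x))
    nlinarith
  have hHc : ContDiff ℝ 1 (fun x => E x * f x) := hEc.mul hf1
  have j0 : Integrable (fun x => E x * f x) :=
    f.integrable.mono hHc.continuous.aestronglyMeasurable
      (Filter.Eventually.of_forall fun x => by simp [hn])
  have hdiv := integral_fderiv_linear_field volume A (fun x => E x * f x) hHc j0
    (by simpa [hn] using i1)
    ((i2.add (i1.const_mul ‖ξ‖)).mono'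
      ((continuous_norm.mul (hHc.continuous_fderiv (by norm_num)).norm).aestronglyMeasurable)
      (Filter.Eventually.of_forall fun x => by
        rw [norm_mul, norm_norm, norm_norm]
        have := mul_le_mul_of_nonneg_left (hbound x) (norm_nonneg x)
        simp only [Pi.add_apply]
        nlinarith))
  have ⟨_, hD⟩ := fderiv_oscillatory_integral volume L f f.continuous f.integrable i1 ξ (A' ξ)
  have e1 : ∀ x y, Complex.exp (Complex.I * ((L x y : ℝ) : ℂ))
      = Complex.exp (-(Complex.I * ((⟪x, y⟫ : ℝ) : ℂ))) := by
    intro x y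
    have : L x y = -⟪x, y⟫ := rfl
    simp [this]
  have e2 : ∀ x, ((L x (A' ξ) : ℝ) : ℂ) = -((⟪A x, ξ⟫ : ℝ) : ℂ) := by
    intro x
    have : L x (A' ξ) = -⟪x, A' ξ⟫ := rfl
    simp [this, hA]
  simp only [e1, e2] at hD
  have k1 : Integrable (fun x => E x * fderiv ℝ f x (A x)) := by
    refine (i2.const_mul ‖A‖).mono' ?_ (Filter.Eventually.of_forall fun x => ?_)
    · exact (hEc.continuous.mul ((hf1.continuous_fderiv (by norm_num)).clm_apply
        A.continuous)).aestronglyMeasurable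
    · rw [norm_mul, hn, one_mul]
      calc _ ≤ ‖fderiv ℝ f x‖ * (‖A‖ * ‖x‖) :=
            (fderiv ℝ f x).le_opNorm_of_le (A.le_opNorm x)
        _ = _ := by ring
  have k2 : Integrable (fun x => Complex.I * ((⟪A x, ξ⟫ : ℝ) : ℂ) * (E x * f x)) := by
    refine (i1.const_mul (‖A‖ * ‖ξ‖)).mono' ?_ (Filter.Eventually.of_forall fun x => ?_)
    · have := hHc.continuous
      exact Continuous.aestronglyMeasurable (by fun_prop)
    · simp only [norm_mul, hn, Complex.norm_I, one_mul, Complex.norm_real]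
      calc _ ≤ ((‖A‖ * ‖x‖) * ‖ξ‖) * ‖f x‖ := by
            gcongr
            refine (norm_inner_le_norm (𝕜 := ℝ) _ _).trans ?_
            gcongr
            exact A.le_opNorm x
        _ = _ := by ring
  simp only [hdiff] at hdiv
  rw [integral_sub k1 k2] at hdiv
  have hft : fderiv ℝ (ft2 f) ξ (A' ξ) = (2 * Real.pi : ℂ)⁻¹ *
      -∫ x, Complex.I * ((⟪A x, ξ⟫ : ℝ) : ℂ) * (E x * f x) := by
    have hh : Differentiable ℝ (ft2 f) := (ft2_contDiff f).differentiable (by norm_num)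
    have hpi : (2 * Real.pi : ℂ) ≠ 0 := by
      simp [Real.pi_ne_zero]
    have e3 : (fun y : E2 => ∫ x : E2, Complex.exp (-(Complex.I * ((⟪x, y⟫ : ℝ) : ℂ))) * f x)
        = fun y => (2 * Real.pi : ℂ) * ft2 f y := by
      ext y; rw [ft2, mul_inv_cancel_left₀ hpi]
    rw [e3, fderiv_const_mul (hh ξ)] at hD
    rw [← integral_neg, eq_inv_mul_iff_mul_eq₀ hpi]
    refine Eq.trans hD ?_
    congr 1; ext x; simp only [E]; ring
  rw [hft]
  have hft0 : ft2 f ξ = (2 * Real.pi : ℂ)⁻¹ * ∫ x, E x * f x := rfl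
  rw [hft0, ft2]
  linear_combination (2 * Real.pi : ℂ)⁻¹ * hdiv

/-! ### The commutator with a linear vector field -/

/-- `Bop` as a single integral over `ℝ² × ℝ²`, by Fubini: the integrand is continuous with compact
support. -/
lemma Bop_eq (b : E2 × E2 → ℂ) (hb : Continuous b) (hbs : HasCompactSupport b) (f g : E2 → ℂ)
    (hf : Continuous (ft2 f)) (hg : Continuous (ft2 g)) (x : E2) :
    Bop b f g x = ((2 * Real.pi : ℂ) ^ 2)⁻¹ * ∫ w : E2 × E2,
      Complex.exp (Complex.I * ((⟪x, w.1⟫ : ℝ) : ℂ)) * (b w * (ft2 f (w.1 - w.2) * ft2 g w.2)) := by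
  rw [Bop, Measure.volume_eq_prod, integral_prod]
  · simp only [mul_assoc]
  · refine Continuous.integrable_of_hasCompactSupport (by fun_prop) ?_
    exact (hbs.mul_right).mul_left

/-- The commutator identity for an arbitrary linear field `x ↦ Ax` on `ℝ²`: the symbol is
differentiated along `-(A'ξ, A'η)`, with `A'` the transpose of `A`. -/
lemma Bop_commutator (A A' : E2 →L[ℝ] E2) (hA : ∀ x ξ, ⟪A x, ξ⟫ = ⟪x, A' ξ⟫)
    (htr : LinearMap.trace ℝ E2 (A' : E2 →ₗ[ℝ] E2) = LinearMap.trace ℝ E2 (A : E2 →ₗ[ℝ] E2))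
    (b : E2 × E2 → ℂ) (hb : ContDiff ℝ 1 b) (hbs : HasCompactSupport b)
    (f g : SchwartzMap E2 ℂ) (x : E2) :
    fderiv ℝ (Bop b f g) x (A x) - Bop b (fun x => fderiv ℝ f x (A x)) g x
      - Bop b f (fun x => fderiv ℝ g x (A x)) x
      = Bop (fun w => -(fderiv ℝ b w (A' w.1, A' w.2))) f g x := by
  have hF := ft2_contDiff f
  have hG := ft2_contDiff g
  have hFt := ft2_linear_field f A A' hA
  have hGt := ft2_linear_field g A A' hA
  set t : ℂ := ((LinearMap.trace ℝ E2 (A : E2 →ₗ[ℝ] E2) : ℝ) : ℂ) with ht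
  have hF0 := hF.continuous
  have hG0 := hG.continuous
  have hF1 : Continuous fun ξ => fderiv ℝ (ft2 f) ξ (A' ξ) :=
    (hF.continuous_fderiv (by norm_num)).clm_apply A'.continuous
  have hG1 : Continuous fun ξ => fderiv ℝ (ft2 g) ξ (A' ξ) :=
    (hG.continuous_fderiv (by norm_num)).clm_apply A'.continuous
  let V : E2 × E2 →L[ℝ] E2 × E2 := A'.prodMap A'
  have hb1 : Continuous fun w => -(fderiv ℝ b w (V w)) :=
    ((hb.continuous_fderiv (by norm_num)).clm_apply V.continuous).neg
  have hb1s : HasCompactSupport fun w => -(fderiv ℝ b w (V w)) := by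
    refine (hbs.fderiv (𝕜 := ℝ)).mono fun w hw => ?_
    simp only [Function.mem_support] at hw ⊢
    intro h; exact hw (by simp [h])
  have hFc : Continuous (ft2 (fun x => fderiv ℝ f x (A x))) := by
    rw [funext hFt]; fun_prop
  have hGc : Continuous (ft2 (fun x => fderiv ℝ g x (A x))) := by
    rw [funext hGt]; fun_prop
  let E : E2 × E2 → ℂ := fun w => Complex.exp (Complex.I * ((⟪x, w.1⟫ : ℝ) : ℂ))
  let P : E2 × E2 → ℂ := fun w => ft2 f (w.1 - w.2) * ft2 g w.2
  have hEc : ContDiff ℝ 1 E := by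
    unfold E
    exact (contDiff_const.mul (Complex.ofRealCLM.contDiff.comp
      (contDiff_const.inner ℝ contDiff_fst))).cexp
  have hPc : ContDiff ℝ 1 P := by unfold P; fun_prop
  have hHc : ContDiff ℝ 1 (fun w => E w * (b w * P w)) := by fun_prop
  have hHs : HasCompactSupport (fun w => E w * (b w * P w)) := (hbs.mul_right).mul_left
  have hdH : ∀ w, fderiv ℝ (fun w => E w * (b w * P w)) w (V w)
      = Complex.I * ((⟪A x, w.1⟫ : ℝ) : ℂ) * (E w * (b w * P w))
        + E w * (fderiv ℝ b w (V w) * P w)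
        + E w * (b w * (fderiv ℝ (ft2 f) (w.1 - w.2) (A' (w.1 - w.2)) * ft2 g w.2))
        + E w * (b w * (ft2 f (w.1 - w.2) * fderiv ℝ (ft2 g) w.2 (A' w.2))) := by
    intro w
    have hE : HasFDerivAt E ((E w * Complex.I) • (Complex.ofRealCLM.comp
        ((innerSL ℝ x).comp (ContinuousLinearMap.fst ℝ E2 E2)))) w := by
      have h := (((Complex.ofRealCLM.comp ((innerSL ℝ x).comp
        (ContinuousLinearMap.fst ℝ E2 E2))).hasFDerivAt (x := w)).const_mul Complex.I).cexp
      refine h.congr_fderiv ?_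
      ext z <;> simp [E] <;> ring
    have hf' : HasFDerivAt (fun w : E2 × E2 => ft2 f (w.1 - w.2))
        ((fderiv ℝ (ft2 f) (w.1 - w.2)).comp
          (ContinuousLinearMap.fst ℝ E2 E2 - ContinuousLinearMap.snd ℝ E2 E2)) w :=
      HasFDerivAt.comp (f := fun w : E2 × E2 => w.1 - w.2) w
        (hF.differentiable (by norm_num) (w.1 - w.2)).hasFDerivAt
        (hasFDerivAt_fst.fun_sub hasFDerivAt_snd)
    have hg' : HasFDerivAt (fun w : E2 × E2 => ft2 g w.2)
        ((fderiv ℝ (ft2 g) w.2).comp (ContinuousLinearMap.snd ℝ E2 E2)) w :=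
      HasFDerivAt.comp w (hG.differentiable (by norm_num) w.2).hasFDerivAt hasFDerivAt_snd
    have hbw := (hb.differentiable (by norm_num) w).hasFDerivAt
    have h := hE.fun_mul (hbw.fun_mul (hf'.fun_mul hg'))
    have h' := h.fderiv
    rw [show fderiv ℝ (fun w => E w * (b w * P w)) w = _ from h', hA]
    simp [V, P]
    ring
  have : (volume : Measure (E2 × E2)).IsAddHaarMeasure := by
    rw [Measure.volume_eq_prod]; infer_instance
  have hdiv := integral_fderiv_linear_field volume V _ hHc
    (hHc.continuous.integrable_of_hasCompactSupport hHs)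
    ((continuous_norm.mul hHc.continuous.norm).integrable_of_hasCompactSupport hHs.norm.mul_left)
    ((continuous_norm.mul (hHc.continuous_fderiv (by norm_num)).norm).integrable_of_hasCompactSupport
      (hHs.fderiv (𝕜 := ℝ)).norm.mul_left)
  have htV : LinearMap.trace ℝ (E2 × E2) (V : E2 × E2 →ₗ[ℝ] E2 × E2)
      = 2 * LinearMap.trace ℝ E2 (A : E2 →ₗ[ℝ] E2) := by
    have : (V : E2 × E2 →ₗ[ℝ] E2 × E2) = LinearMap.prodMap (A' : E2 →ₗ[ℝ] E2) A' := rfl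
    rw [this, LinearMap.trace_prodMap', htr, two_mul]
  rw [htV] at hdiv
  have cs : ∀ Q : E2 × E2 → ℂ, Continuous Q → Integrable (fun w => E w * (b w * Q w)) :=
    fun Q hQ => Continuous.integrable_of_hasCompactSupport
      (hEc.continuous.mul (hb.continuous.mul hQ)) (hbs.mul_right).mul_left
  have m0 := cs P hPc.continuous
  have m1 : Integrable (fun w : E2 × E2 => Complex.I * ((⟪A x, w.1⟫ : ℝ) : ℂ) *
      (E w * (b w * P w))) :=
    Continuous.integrable_of_hasCompactSupport
      (by have := hHc.continuous; fun_prop) hHs.mul_left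
  have m2 : Integrable (fun w => E w * (fderiv ℝ b w (V w) * P w)) := by
    have := Continuous.integrable_of_hasCompactSupport (μ := volume)
      (hEc.continuous.mul (hb1.mul hPc.continuous)) (hb1s.mul_right (f' := P)).mul_left
    exact this.neg.congr (Filter.Eventually.of_forall fun w => by simp)
  have m3 := cs (fun w => fderiv ℝ (ft2 f) (w.1 - w.2) (A' (w.1 - w.2)) * ft2 g w.2)
    ((hF1.comp (continuous_fst.sub continuous_snd)).mul (hG0.comp continuous_snd))
  have m4 := cs (fun w => ft2 f (w.1 - w.2) * fderiv ℝ (ft2 g) w.2 (A' w.2))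
    ((hF0.comp (continuous_fst.sub continuous_snd)).mul (hG1.comp continuous_snd))
  have hsplit := integral_congr_ae (μ := volume) (Filter.Eventually.of_forall hdH)
  rw [integral_add (by exact (m1.add m2).add m3) m4, integral_add (by exact m1.add m2) m3,
    integral_add m1 m2, hdiv] at hsplit
  have ⟨hDd, hD⟩ := fderiv_oscillatory_integral volume
    ((innerSL ℝ).comp (ContinuousLinearMap.fst ℝ E2 E2)) (fun w => b w * P w)
    (hb.continuous.mul hPc.continuous)
    ((hb.continuous.mul hPc.continuous).integrable_of_hasCompactSupport hbs.mul_right)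
    ((continuous_norm.mul (hb.continuous.mul hPc.continuous).norm).integrable_of_hasCompactSupport
      (hbs.mul_right (f' := P)).norm.mul_left) x (A x)
  have q1 : Bop b f g = fun y => ((2 * Real.pi : ℂ) ^ 2)⁻¹ * ∫ w : E2 × E2,
      Complex.exp (Complex.I * (((innerSL ℝ).comp (ContinuousLinearMap.fst ℝ E2 E2) w y : ℝ) : ℂ))
        * (b w * P w) := by
    ext y
    rw [Bop_eq b hb.continuous hbs f g hF0 hG0]
    simp [P, real_inner_comm]
  have q1' : fderiv ℝ (Bop b f g) x (A x) = ((2 * Real.pi : ℂ) ^ 2)⁻¹ *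
      ∫ w : E2 × E2, Complex.I * ((⟪A x, w.1⟫ : ℝ) : ℂ) * (E w * (b w * P w)) := by
    rw [q1, fderiv_const_mul hDd]
    refine (congrArg (((2 * Real.pi : ℂ) ^ 2)⁻¹ * ·) hD).trans ?_
    simp [E, real_inner_comm]
  rw [q1', Bop_eq b hb.continuous hbs _ g hFc hG0, Bop_eq b hb.continuous hbs f _ hF0 hGc,
    Bop_eq (fun w => -(fderiv ℝ b w (A' w.1, A' w.2))) hb1 hb1s f g hF0 hG0]
  have q2 : ∫ w : E2 × E2, Complex.exp (Complex.I * ((⟪x, w.1⟫ : ℝ) : ℂ)) *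
      (b w * (ft2 (fun x => fderiv ℝ f x (A x)) (w.1 - w.2) * ft2 g w.2))
      = -t * (∫ w, E w * (b w * P w)) - ∫ w, E w * (b w *
        (fderiv ℝ (ft2 f) (w.1 - w.2) (A' (w.1 - w.2)) * ft2 g w.2)) := by
    rw [← integral_const_mul, ← integral_sub (m0.const_mul _) m3]
    congr 1; ext w; rw [hFt]; simp only [E, P]; ring
  have q3 : ∫ w : E2 × E2, Complex.exp (Complex.I * ((⟪x, w.1⟫ : ℝ) : ℂ)) *
      (b w * (ft2 f (w.1 - w.2) * ft2 (fun x => fderiv ℝ g x (A x)) w.2))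
      = -t * (∫ w, E w * (b w * P w)) - ∫ w, E w * (b w *
        (ft2 f (w.1 - w.2) * fderiv ℝ (ft2 g) w.2 (A' w.2))) := by
    rw [← integral_const_mul, ← integral_sub (m0.const_mul _) m4]
    congr 1; ext w; rw [hGt]; simp only [E, P]; ring
  have q4 : ∫ w : E2 × E2, Complex.exp (Complex.I * ((⟪x, w.1⟫ : ℝ) : ℂ)) *
      (-(fderiv ℝ b w (A' w.1, A' w.2)) * (ft2 f (w.1 - w.2) * ft2 g w.2))
      = - ∫ w, E w * (fderiv ℝ b w (V w) * P w) := by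
    rw [← integral_neg]
    congr 1; ext w
    rw [show V w = (A' w.1, A' w.2) from rfl]
    simp only [E, P]; ring
  rw [q2, q3, q4]
  push_cast at hsplit
  rw [← ht] at hsplit
  -- The terms `-t ∫ E b P` coming from `f̂` and `ĝ` add up to the `-2t ∫ E b P` of the divergence.
  linear_combination -((2 * Real.pi : ℂ) ^ 2)⁻¹ * hsplit

/-! ### The rotation field -/

/-- `rotv` as a continuous linear map. -/
def rotL : E2 →L[ℝ] E2 :=
  LinearMap.toContinuousLinearMap
    { toFun := rotv
      map_add' := fun x y => by ext i; fin_cases i <;> simp [rotv]; ring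
      map_smul' := fun c x => by ext i; fin_cases i <;> simp [rotv] }

lemma rotL_apply (x : E2) : rotL x = rotv x := rfl

lemma rotL_inner (x ξ : E2) : ⟪rotL x, ξ⟫ = ⟪x, (-rotL) ξ⟫ := by
  simp [rotL_apply, rotv, PiLp.inner_apply, Fin.sum_univ_two]
  ring

lemma rotL_trace : LinearMap.trace ℝ E2 (rotL : E2 →ₗ[ℝ] E2) = 0 := by
  rw [LinearMap.trace_eq_matrix_trace ℝ (EuclideanSpace.basisFun (Fin 2) ℝ).toBasis, Matrix.trace]
  simp [Fin.sum_univ_two, LinearMap.toMatrix_apply, rotL_apply, rotv]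

/-- **Commutation of vector fields with bilinear pseudo-products.** -/
theorem bilinear_commutator_vector_fields :
    ∀ b : E2 × E2 → ℂ, ContDiff ℝ (⊤ : ℕ∞) b → HasCompactSupport b →
      ∀ f g : SchwartzMap E2 ℂ, ∀ x : E2,
        (Sc (Bop b (⇑f) (⇑g)) x - Bop b (Sc ⇑f) (⇑g) x - Bop b (⇑f) (Sc ⇑g) x
            = Bop (bSc b) (⇑f) (⇑g) x) ∧
        (Om (Bop b (⇑f) (⇑g)) x - Bop b (Om ⇑f) (⇑g) x - Bop b (⇑f) (Om ⇑g) x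
            = Bop (bOm b) (⇑f) (⇑g) x) := by
  intro b hb hbs f g x
  have hb1 : ContDiff ℝ 1 b := hb.of_le (by exact_mod_cast le_top)
  constructor
  · exact Bop_commutator (ContinuousLinearMap.id ℝ E2) (ContinuousLinearMap.id ℝ E2)
      (fun _ _ => rfl) rfl b hb1 hbs f g x
  · have h := Bop_commutator rotL (-rotL) rotL_inner
      (by rw [ContinuousLinearMap.toLinearMap_neg, map_neg, rotL_trace, neg_zero]) b hb1 hbs f g x
    have e : bOm b = fun w => -(fderiv ℝ b w ((-rotL) w.1, (-rotL) w.2)) := by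
      ext w
      rw [← map_neg]
      simp [bOm, rotL_apply]
    rw [e]
    exact h

end
end

section
/- There exists an absolute constant c > 0 (one may take c = 2 − √2) such that for all ξ, η ∈ ℝ² and all sign choices ε₁, ε₂ ∈ {+1, −1}, the gravity-wave resonance phase satisfies the lower bound | |ξ|^{1/2} − ε₂|ξ−η|^{1/2} − ε₁|η|^{1/2} | ≥ c · min(|ξ|, |ξ−η|, |η|)^{1/2}. -/
/-!
STATEMENT 4: Lower bound for the gravity-wave resonance phase: there is an absolute
constant `c > 0` (one may take `c = 2 − √2`) such that for all `ξ, η ∈ ℝ²` and signs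
`ε₁, ε₂ ∈ {+1, −1}`,
`| |ξ|^{1/2} − ε₂|ξ−η|^{1/2} − ε₁|η|^{1/2} | ≥ c · min(|ξ|, |ξ−η|, |η|)^{1/2}`.
-/

/-!
With `x, y, z` the square roots of the three norms, the triangle inequality says that the square of
each is at most the sum of the squares of the other two. Hence (`sqrt_gap`) each of them falls short
of the sum of the other two by at least `(2 - √2)` times the minimum: for `y ≤ z`,
`x ≤ √(y² + z²) ≤ z + (√2 - 1) y`. Up to an overall sign, every choice of `ε₁, ε₂` makes the phase
either such a gap or the full sum `x + y + z`, which dominates one.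
-/

noncomputable section

/-- The quadratic form of the triangle inequality leaves a gap in `x ≤ y + z`. Equality holds for
`y = z = m` and `x = √2 m`. -/
lemma sqrt_gap {x y z m : ℝ} (hy : 0 ≤ y) (hz : 0 ≤ z)
    (h : x ^ 2 ≤ y ^ 2 + z ^ 2) (hmy : m ≤ y) (hmz : m ≤ z) :
    (2 - Real.sqrt 2) * m ≤ y + z - x := by
  have hs : Real.sqrt 2 ^ 2 = 2 := Real.sq_sqrt (by norm_num)
  have hs1 : 1 ≤ Real.sqrt 2 := Real.one_le_sqrt.mpr (by norm_num)
  have hs2 : Real.sqrt 2 ≤ 2 := by nlinarith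
  -- The ordered case: `(b + (√2 - 1) a)² - (a² + b²) = 2 (√2 - 1) a (b - a)`.
  have key : ∀ a b : ℝ, 0 ≤ a → a ≤ b → x ^ 2 ≤ a ^ 2 + b ^ 2 → m ≤ a →
      (2 - Real.sqrt 2) * m ≤ a + b - x := by
    intro a b ha hab hx hm
    have h1 : x ≤ b + (Real.sqrt 2 - 1) * a := by
      refine abs_le_of_sq_le_sq' ?_ ?_ |>.2
      · nlinarith [mul_nonneg (mul_nonneg (sub_nonneg.mpr hs1) ha) (sub_nonneg.mpr hab)]
      · nlinarith [mul_nonneg (sub_nonneg.mpr hs1) ha]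
    nlinarith [mul_le_mul_of_nonneg_left hm (sub_nonneg.mpr hs2)]
  rcases le_total y z with hyz | hyz
  · exact key y z hy hyz h hmy
  · linarith [key z y hz hyz (by linarith) hmz]

/-- **Lower bound on the phase `Φ_{ε₁ε₂}(ξ,η) = |ξ|^{1/2} − ε₂|ξ−η|^{1/2} − ε₁|η|^{1/2}`.** -/
theorem phase_lower_bound :
    ∃ c : ℝ, 0 < c ∧ c = 2 - Real.sqrt 2 ∧
      ∀ (ξ η : E2) (ε₁ ε₂ : ℝ), (ε₁ = 1 ∨ ε₁ = -1) → (ε₂ = 1 ∨ ε₂ = -1) →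
        c * Real.sqrt (min ‖ξ‖ (min ‖ξ - η‖ ‖η‖)) ≤
          |Real.sqrt ‖ξ‖ - ε₂ * Real.sqrt ‖ξ - η‖ - ε₁ * Real.sqrt ‖η‖| := by
  have hs : Real.sqrt 2 < 2 := by
    rw [Real.sqrt_lt' (by norm_num)]; norm_num
  refine ⟨2 - Real.sqrt 2, by linarith, rfl, ?_⟩
  intro ξ η ε₁ ε₂ h₁ h₂
  have t1 : ‖ξ‖ ≤ ‖ξ - η‖ + ‖η‖ := by simpa using norm_add_le (ξ - η) η
  have t2 : ‖ξ - η‖ ≤ ‖ξ‖ + ‖η‖ := norm_sub_le ξ η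
  have t3 : ‖η‖ ≤ ‖ξ‖ + ‖ξ - η‖ := by simpa using norm_sub_le ξ (ξ - η)
  have mx := Real.sqrt_le_sqrt (min_le_left ‖ξ‖ (min ‖ξ - η‖ ‖η‖))
  have my := Real.sqrt_le_sqrt
    ((min_le_right ‖ξ‖ (min ‖ξ - η‖ ‖η‖)).trans (min_le_left _ _))
  have mz := Real.sqrt_le_sqrt
    ((min_le_right ‖ξ‖ (min ‖ξ - η‖ ‖η‖)).trans (min_le_right _ _))
  rw [← Real.sq_sqrt (norm_nonneg ξ), ← Real.sq_sqrt (norm_nonneg η),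
    ← Real.sq_sqrt (norm_nonneg (ξ - η))] at t1 t2 t3
  have hx := Real.sqrt_nonneg ‖ξ‖
  have hy := Real.sqrt_nonneg ‖ξ - η‖
  have hz := Real.sqrt_nonneg ‖η‖
  have g1 := sqrt_gap hy hz t1 my mz
  have g2 := sqrt_gap hx hz t2 mx mz
  have g3 := sqrt_gap hx hy t3 mx my
  rcases h₁ with rfl | rfl <;> rcases h₂ with rfl | rfl
  · exact le_trans (by linarith) (neg_le_abs _)
  · exact le_trans (by linarith) (le_abs_self _)
  · exact le_trans (by linarith) (le_abs_self _)
  · exact le_trans (by linarith) (le_abs_self _)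

end
end

section
/- Let 1 ≤ p ≤ 2 ≤ q ≤ ∞ and σ := 1 + 1/q − 1/p. For f : ℝ² × (−∞,0] → ℂ smooth, Schwartz in x and compactly supported in z, define T_± f(x,z) := ∫_{−∞}^0 1_{±(s−z)>0} ( e^{−|z−s||∇|} f(·,s) )(x) ds. Then ‖ |∇|^σ T_± f ‖_{L^q_z L²_x((−∞,0)×ℝ²)} ≤ C ‖ f ‖_{L^p_z L²_x((−∞,0)×ℝ²)}, where ‖g‖_{L^r_z L²_x} := ( ∫_{−∞}^0 ‖g(·,z)‖_{L²(ℝ²)}^r dz )^{1/r} (with the usual modification for r = ∞), and C depends only on p and q. -/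
/-!
On the Fourier side the operator acts on each frequency `ξ` separately, as integration in `s`
against the kernel `|ξ|^σ e^{-|z-s||ξ|}` restricted to a half line. For `0 ≤ σ ≤ 1` this kernel is
at most `(|ξ| e^{-|z-s||ξ|})^σ`, and `|ξ| e^{-|z-s||ξ|}` has mass at most `2` in `z` and in `s`,
uniformly in `ξ`. Since `1 + 1/q = σ + 1/p`, Young's inequality (`young_Lq`, or
`young_pointwise` when `q = ∞`) bounds the operator from `L^p_s` to `L^q_z` by `2^σ`, uniformly
in `ξ`. As `p ≤ 2 ≤ q`, Minkowski's integral inequality (`lintegral_minkowski`) passes from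
`L^q_z L²_ξ` to `L²_ξ L^q_z` on the left and from `L²_ξ L^p_z` to `L^p_z L²_ξ` on the right.
Plancherel's theorem then gives the estimate in physical space, with constant `2`.

The Fourier integrals are Bochner integrals and `f` is Schwartz in `x` for each `z` without any
uniformity in `z`, so `T_± f(·,z)` or `|ξ|^σ 𝓕(T_± f)(·,z)` may fail to be integrable; the
corresponding integrals are then `0` and the bound is trivial at that `z` (`slice_bound`).
Otherwise `𝓕(T_± f)(ξ,z)` is the integral in `s` of the Fourier transforms for almost every `ξ`:
this holds as soon as `f ∈ L¹_s L²_x`, by testing against Schwartz functions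
(`fourier_integral_fourierInv`). Membership in `L¹_s L²_x` follows from that in `L^p_s L²_x` by
compact support in `s`, and when the `L^p_s L²_x` norm is infinite there is nothing to prove.
-/

/-!
STATEMENT 8: Weighted `L^q_z L²_x` smoothing bounds for the Poisson-type bulk
operators `T_± f(x,z) = ∫_{−∞}^0 1_{±(s−z)>0} (e^{−|z−s||∇|} f(·,s))(x) ds`:
for `1 ≤ p ≤ 2 ≤ q ≤ ∞` and `σ = 1 + 1/q − 1/p`,
`‖|∇|^σ T_± f‖_{L^q_z L²_x((−∞,0)×ℝ²)} ≤ C(p,q) ‖f‖_{L^p_z L²_x((−∞,0)×ℝ²)}`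
for `f` smooth, Schwartz in `x` and compactly supported in `z`.
-/

open MeasureTheory
open scoped FourierTransform ENNReal

noncomputable section

/-- Fourier multiplier on `ℝ²` with symbol `m`. -/
def fm (m : E2 → ℂ) (g : E2 → ℂ) : E2 → ℂ := fun x => 𝓕⁻ (fun ξ => m ξ * 𝓕 g ξ) x

/-- The operator `T_ε f(x,z) = ∫_{-∞}^0 1_{ε(s−z)>0} (e^{−|z−s||∇|} f(·,s))(x) ds`. -/
def Tpm (ε : ℝ) (f : E2 × ℝ → ℂ) (x : E2) (z : ℝ) : ℂ :=
  ∫ s in Set.Iio (0 : ℝ),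
    (if 0 < ε * (s - z) then (1 : ℂ) else 0) *
      fm (fun ξ => ((Real.exp (-|z - s| * ‖ξ‖) : ℝ) : ℂ)) (fun x' => f (x', s)) x

/-! ### Fourier integrals and Plancherel's theorem -/

lemma integral_fourier_mul_schwartz {T : E2 → ℂ} (hT : Integrable T) (φ : SchwartzMap E2 ℂ) :
    ∫ ξ, 𝓕 T ξ * φ ξ = ∫ x, T x * 𝓕 φ x := by
  simpa using! VectorFourier.integral_bilin_fourierIntegral_eq_flip
    (ContinuousLinearMap.mul ℂ ℂ) (L := innerₗ E2)
    Real.continuous_fourierChar continuous_inner hT φ.integrable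

lemma integral_fourierInv_mul_schwartz {G : E2 → ℂ} (hG : Integrable G)
    (φ : SchwartzMap E2 ℂ) :
    ∫ x, 𝓕⁻ G x * φ x = ∫ ξ, G ξ * 𝓕⁻ φ ξ := by
  have h := integral_fourier_mul_schwartz hG (𝓕⁻ (𝓕⁻ φ))
  rw [FourierTransform.fourier_fourierInv_eq] at h
  rw [← h, ← integral_neg_eq_self]
  congr 1
  ext x
  rw [Real.fourierInv_eq_fourier_neg, neg_neg]
  congr 1
  have h2 : (𝓕⁻ (𝓕⁻ φ) : SchwartzMap E2 ℂ) x = (𝓕 (𝓕⁻ φ) : SchwartzMap E2 ℂ) (-x) := by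
    rw [SchwartzMap.fourierInv_coe, SchwartzMap.fourier_coe, Real.fourierInv_eq_fourier_neg]
  rw [h2, FourierTransform.fourier_fourierInv_eq]

lemma locallyIntegrable_fourierInv {G : E2 → ℂ} (hG : Integrable G) :
    LocallyIntegrable (𝓕⁻ G) := by
  have : Continuous (𝓕⁻ G) :=
    VectorFourier.fourierIntegral_continuous Real.continuous_fourierChar
      (by exact (continuous_inner (𝕜 := ℝ) (E := E2)).neg) hG
  exact this.locallyIntegrable

lemma locallyIntegrable_fourier {G : E2 → ℂ} (hG : Integrable G) :
    LocallyIntegrable (𝓕 G) := by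
  have : Continuous (𝓕 G) :=
    VectorFourier.fourierIntegral_continuous Real.continuous_fourierChar
      (by exact continuous_inner (𝕜 := ℝ) (E := E2)) hG
  exact this.locallyIntegrable

lemma ae_eq_of_schwartz_pairing {F G : E2 → ℂ} (hF : LocallyIntegrable F)
    (hG : LocallyIntegrable G)
    (h : ∀ φ : SchwartzMap E2 ℂ, HasCompactSupport φ → ∫ x, F x * φ x = ∫ x, G x * φ x) :
    F =ᵐ[volume] G := by
  refine ae_eq_of_integral_contDiff_smul_eq hF hG fun g hg hgs => ?_
  have hc : HasCompactSupport (fun x => (g x : ℂ)) := hgs.comp_left (g := ((↑) : ℝ → ℂ)) (by simp)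
  have := h (hc.toSchwartzMap (Complex.ofRealCLM.contDiff.comp hg)) hc
  simp only [Complex.real_smul, mul_comm (Complex.ofReal _)]
  exact this

/-- Plancherel's inequality for integrable `G`. If `G ∉ L²` the right side is infinite; otherwise the
Fourier integral agrees a.e. with the isometric inverse Fourier transform on `L²`, because both
define the same tempered distribution. -/
lemma lintegral_fourierInv_sq_le {G : E2 → ℂ} (hG : Integrable G) :
    ∫⁻ x, ‖𝓕⁻ G x‖ₑ ^ (2 : ℝ) ≤ ∫⁻ ξ, ‖G ξ‖ₑ ^ (2 : ℝ) := by
  by_cases h2 : ∫⁻ ξ, ‖G ξ‖ₑ ^ (2 : ℝ) = ⊤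
  · rw [h2]; exact le_top
  have hm : MemLp G 2 volume := by
    refine ⟨hG.1, ?_⟩
    rw [eLpNorm_eq_lintegral_rpow_enorm_toReal (by simp) (by simp)]
    refine ENNReal.rpow_lt_top_of_nonneg (by simp) ?_
    simpa using h2
  set u : Lp ℂ 2 (volume : Measure E2) := 𝓕⁻ (hm.toLp G) with hu
  have key : 𝓕⁻ G =ᵐ[volume] (u : E2 → ℂ) := by
    refine ae_eq_of_schwartz_pairing (locallyIntegrable_fourierInv hG)
      ((Lp.memLp u).locallyIntegrable (by norm_num)) fun φ _ => ?_
    rw [integral_fourierInv_mul_schwartz hG]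
    have h1 := congrArg (fun D : TemperedDistribution E2 ℂ => D φ)
      (MeasureTheory.Lp.fourierInv_toTemperedDistribution_eq (hm.toLp G))
    simp only [TemperedDistribution.fourierInv_apply, Lp.toTemperedDistribution_apply] at h1
    rw [← hu] at h1
    simp only [smul_eq_mul, mul_comm] at h1 ⊢
    rw [← h1]
    refine integral_congr_ae ?_
    filter_upwards [hm.coeFn_toLp] with x hx
    rw [hx]
  have hn : eLpNorm u 2 volume = eLpNorm G 2 volume := by
    have : ‖u‖ = ‖hm.toLp G‖ := by
      rw [← Lp.norm_fourier_eq u, hu, FourierTransform.fourier_fourierInv_eq]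
    rw [← Lp.enorm_def, ← ofReal_norm, this, ofReal_norm, Lp.enorm_def]
    exact eLpNorm_congr_ae hm.coeFn_toLp
  rw [← eLpNorm_congr_ae key, eLpNorm_eq_lintegral_rpow_enorm_toReal (by simp) (by simp),
    eLpNorm_eq_lintegral_rpow_enorm_toReal (by simp) (by simp)] at hn
  have := (ENNReal.rpow_left_injective (x := 1 / (2:ℝ≥0∞).toReal) (by simp)) hn
  simpa using this.le

lemma lintegral_schwartz_fourier_sq (g : SchwartzMap E2 ℂ) :
    ∫⁻ ξ, ‖𝓕 (g : E2 → ℂ) ξ‖ₑ ^ (2 : ℝ) = ∫⁻ x, ‖g x‖ₑ ^ (2 : ℝ) := by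
  have h1 : ∀ k : SchwartzMap E2 ℂ, ∫⁻ x, ‖k x‖ₑ ^ (2 : ℝ) = ENNReal.ofReal (∫ x, ‖k x‖ ^ 2) := by
    intro k
    rw [ofReal_integral_eq_lintegral_ofReal]
    · congr 1; ext x
      rw [← ofReal_norm, ENNReal.ofReal_rpow_of_nonneg (by positivity) (by positivity)]
      norm_num
    · exact (k.memLp 2).integrable_norm_pow (by simp)
    · exact Filter.Eventually.of_forall fun x => by positivity
  rw [h1 g, ← SchwartzMap.integral_norm_sq_fourier, ← h1]
  rfl

lemma measurable_lintegral_left {X : Type*} [MeasurableSpace X] {h : X × ℝ → ℂ}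
    (hh : StronglyMeasurable h) {μ : Measure X} [SFinite μ] :
    Measurable fun s => ∫⁻ ξ, ‖h (ξ, s)‖ₑ ^ (2 : ℝ) ∂μ :=
  Measurable.lintegral_prod_left' (f := fun a => ‖h a‖ₑ ^ (2 : ℝ)) (by exact hh.enorm.pow_const _)

/-- A function in `L¹_s L²_ξ` times a function in `L²_ξ` is integrable on the product, by
Cauchy–Schwarz in `ξ`. -/
lemma integrable_prod_of_L1L2 {μ : Measure E2} [SFinite μ] {ν : Measure ℝ} [SFinite ν]
    {h : E2 × ℝ → ℂ} (hh : StronglyMeasurable h)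
    (hfin : ∫⁻ s, (∫⁻ ξ, ‖h (ξ, s)‖ₑ ^ (2 : ℝ) ∂μ) ^ (1 / 2 : ℝ) ∂ν < ⊤)
    {ψ : E2 → ℂ} (hψ : StronglyMeasurable ψ) (hψ2 : ∫⁻ ξ, ‖ψ ξ‖ₑ ^ (2 : ℝ) ∂μ < ⊤) :
    Integrable (fun a : E2 × ℝ => h a * ψ a.1) (μ.prod ν) := by
  have hm : StronglyMeasurable (fun a : E2 × ℝ => h a * ψ a.1) :=
    hh.mul (hψ.comp_measurable measurable_fst)
  refine ⟨hm.aestronglyMeasurable, ?_⟩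
  rw [hasFiniteIntegral_iff_enorm, lintegral_prod_symm' _ hm.enorm]
  calc _ ≤ ∫⁻ s, (∫⁻ ξ, ‖h (ξ, s)‖ₑ ^ (2 : ℝ) ∂μ) ^ (1 / 2 : ℝ) *
        (∫⁻ ξ, ‖ψ ξ‖ₑ ^ (2 : ℝ) ∂μ) ^ (1 / 2 : ℝ) ∂ν := by
        refine lintegral_mono fun s => ?_
        have := ENNReal.lintegral_mul_le_Lp_mul_Lq μ (p := 2) (q := 2)
          ⟨by norm_num, by norm_num, by norm_num⟩
          (f := fun ξ => ‖h (ξ, s)‖ₑ) (g := fun ξ => ‖ψ ξ‖ₑ)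
          (hh.enorm.comp measurable_prodMk_right).aemeasurable
          hψ.enorm.aemeasurable
        simpa [enorm_mul] using this
    _ < ⊤ := by
        rw [lintegral_mul_const _ ((measurable_lintegral_left hh).pow_const _)]
        exact ENNReal.mul_lt_top hfin (ENNReal.rpow_lt_top_of_nonneg (by norm_num) hψ2.ne)

lemma stronglyMeasurable_fourierInv {h : E2 × ℝ → ℂ} (hh : StronglyMeasurable h) :
    StronglyMeasurable (fun a : E2 × ℝ => 𝓕⁻ (fun ξ => h (ξ, a.2)) a.1) := by
  simp only [Real.fourierInv_eq]
  have : StronglyMeasurable (fun b : (E2 × ℝ) × E2 =>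
      (Real.fourierChar (inner ℝ b.2 b.1.1)) • h (b.2, b.1.2)) := by
    simp only [Circle.smul_def, smul_eq_mul]
    refine StronglyMeasurable.mul ?_ ?_
    · exact (by fun_prop : Continuous fun b : (E2 × ℝ) × E2 =>
        (Real.fourierChar (inner ℝ b.2 b.1.1) : ℂ)).stronglyMeasurable
    · exact hh.comp_measurable (by fun_prop)
  exact this.integral_prod_right'

lemma stronglyMeasurable_fourier {h : E2 × ℝ → ℂ} (hh : StronglyMeasurable h) :
    StronglyMeasurable (fun a : E2 × ℝ => 𝓕 (fun ξ => h (ξ, a.2)) a.1) := by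
  have := (stronglyMeasurable_fourierInv hh).comp_measurable
    (g := fun a : E2 × ℝ => (-a.1, a.2)) (by fun_prop)
  simpa [Function.comp_def, Real.fourierInv_eq_fourier_neg] using this

lemma schwartz_sq_lt_top (φ : SchwartzMap E2 ℂ) : ∫⁻ ξ, ‖φ ξ‖ₑ ^ (2 : ℝ) < ⊤ := by
  have := (φ.memLp 2).2
  rw [eLpNorm_lt_top_iff_lintegral_rpow_enorm_lt_top (by simp) (by simp)] at this
  simpa using this

/-- The Fourier transform commutes with superposition in the parameter `s`, for a family `h` in
`L¹_s L²_ξ`. Neither `h` nor its inverse Fourier transforms need be integrable on the product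
space, so Fubini's theorem is applied only after pairing with a Schwartz function. -/
lemma fourier_integral_fourierInv {ν : Measure ℝ} [SFinite ν] {h : E2 × ℝ → ℂ}
    (hh : StronglyMeasurable h) (hint : ∀ s, Integrable (fun ξ => h (ξ, s)))
    (hfin : ∫⁻ s, (∫⁻ ξ, ‖h (ξ, s)‖ₑ ^ (2 : ℝ)) ^ (1 / 2 : ℝ) ∂ν < ⊤)
    (hT : Integrable (fun x => ∫ s, 𝓕⁻ (fun ξ => h (ξ, s)) x ∂ν)) :
    𝓕 (fun x => ∫ s, 𝓕⁻ (fun ξ => h (ξ, s)) x ∂ν) =ᵐ[volume] fun ξ => ∫ s, h (ξ, s) ∂ν := by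
  have hu := stronglyMeasurable_fourierInv hh
  have hufin : ∫⁻ s, (∫⁻ x, ‖𝓕⁻ (fun ξ => h (ξ, s)) x‖ₑ ^ (2 : ℝ)) ^ (1 / 2 : ℝ) ∂ν < ⊤ := by
    refine lt_of_le_of_lt (lintegral_mono fun s => ?_) hfin
    exact ENNReal.rpow_le_rpow (lintegral_fourierInv_sq_le (hint s)) (by norm_num)
  refine ae_eq_of_schwartz_pairing (locallyIntegrable_fourier hT) ?_ fun φ _ => ?_
  · rw [locallyIntegrable_iff]
    intro K hK
    have hK' : ∫⁻ s, (∫⁻ ξ in K, ‖h (ξ, s)‖ₑ ^ (2 : ℝ)) ^ (1 / 2 : ℝ) ∂ν < ⊤ := by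
      refine lt_of_le_of_lt (lintegral_mono fun s => ?_) hfin
      exact ENNReal.rpow_le_rpow (setLIntegral_le_lintegral _ _) (by norm_num)
    have := integrable_prod_of_L1L2 hh hK' (ψ := fun _ => 1) stronglyMeasurable_const
      (by simpa using hK.measure_lt_top)
    simpa [IntegrableOn] using this.integral_prod_left
  · rw [integral_fourier_mul_schwartz hT]
    have i1 := integrable_prod_of_L1L2 hu hufin (𝓕 φ).continuous.stronglyMeasurable
      (schwartz_sq_lt_top (𝓕 φ))
    have i2 := integrable_prod_of_L1L2 hh hfin φ.continuous.stronglyMeasurable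
      (schwartz_sq_lt_top φ)
    simp only [← integral_mul_const]
    rw [integral_integral_swap i1,
      integral_integral_swap (f := fun ξ s => h (ξ, s) * φ ξ) i2]
    congr 1
    ext s
    rw [integral_fourierInv_mul_schwartz (hint s), FourierTransform.fourierInv_fourier_eq]

/-! ### Minkowski's and Young's inequalities -/

/-- Minkowski's integral inequality. With `H` the inner integral, Hölder's inequality gives
`‖H‖_r^r ≤ M ‖H‖_r^{r-1}`; to divide by the last factor, `H` is first truncated to functions `Hn`
of finite norm. -/
lemma lintegral_minkowski {α β : Type*} [MeasurableSpace α] [MeasurableSpace β]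
    (μ : Measure α) [SigmaFinite μ] (ν : Measure β) [SFinite ν] {F : α × β → ℝ≥0∞}
    (hF : Measurable F) {r : ℝ} (hr : 1 ≤ r) :
    (∫⁻ a, (∫⁻ b, F (a, b) ∂ν) ^ r ∂μ) ^ (1 / r) ≤
      ∫⁻ b, (∫⁻ a, F (a, b) ^ r ∂μ) ^ (1 / r) ∂ν := by
  rcases hr.eq_or_lt with rfl | hr1
  · simp only [ENNReal.rpow_one, div_one]
    exact (lintegral_lintegral_swap (f := fun a b => F (a, b)) hF.aemeasurable).le
  have hr0 : 0 < r := by linarith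
  have hconj : r.HolderConjugate (r / (r - 1)) := Real.HolderConjugate.conjExponent hr1
  set M := ∫⁻ b, (∫⁻ a, F (a, b) ^ r ∂μ) ^ (1 / r) ∂ν with hM
  set H : α → ℝ≥0∞ := fun a => ∫⁻ b, F (a, b) ∂ν with hH
  have hHm : Measurable H := hF.lintegral_prod_right'
  set Hn : ℕ → α → ℝ≥0∞ := fun n =>
    (spanningSets μ n).indicator (fun a => min (H a) n) with hHn
  have hHnm : ∀ n, Measurable (Hn n) := fun n =>
    (hHm.min measurable_const).indicator (measurableSet_spanningSets μ n)
  have hle : ∀ n a, Hn n a ≤ H a := fun n a =>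
    (Set.indicator_le_self _ _ a).trans (min_le_left _ _)
  have hfin : ∀ n, ∫⁻ a, Hn n a ^ r ∂μ ≠ ⊤ := by
    intro n
    refine ne_top_of_le_ne_top (b := ∫⁻ a in spanningSets μ n, (n : ℝ≥0∞) ^ r ∂μ) ?_ ?_
    · simp only [lintegral_const, MeasurableSet.univ, Measure.restrict_apply, Set.univ_inter]
      exact ENNReal.mul_ne_top (ENNReal.rpow_ne_top_of_nonneg hr0.le (by simp))
        (measure_spanningSets_lt_top μ n).ne
    · rw [← lintegral_indicator (measurableSet_spanningSets μ n)]
      refine lintegral_mono fun a => ?_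
      by_cases ha : a ∈ spanningSets μ n
      · simp only [hHn, Set.indicator_of_mem ha]
        exact ENNReal.rpow_le_rpow (min_le_right _ _) hr0.le
      · simp [hHn, Set.indicator_of_notMem ha, hr0]
  have hA : ∀ n, ∫⁻ a, Hn n a ^ r ∂μ ≤ M ^ r := by
    intro n
    set A := ∫⁻ a, Hn n a ^ r ∂μ with hAdef
    have hmain : A ≤ M * A ^ (1 - 1 / r) := by
      calc A ≤ ∫⁻ a, H a * Hn n a ^ (r - 1) ∂μ := by
            refine lintegral_mono fun a => ?_
            calc Hn n a ^ r = Hn n a ^ (1 + (r - 1)) := by ring_nf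
              _ = Hn n a * Hn n a ^ (r - 1) := by
                rw [ENNReal.rpow_add_of_nonneg _ _ (by norm_num) (by linarith), ENNReal.rpow_one]
              _ ≤ _ := by gcongr; exact hle n a
        _ = ∫⁻ a, ∫⁻ b, F (a, b) * Hn n a ^ (r - 1) ∂ν ∂μ := by
            refine lintegral_congr fun a => ?_
            rw [lintegral_mul_const _ (by fun_prop)]
        _ = ∫⁻ b, ∫⁻ a, F (a, b) * Hn n a ^ (r - 1) ∂μ ∂ν := by
            refine lintegral_lintegral_swap (f := fun a b => F (a, b) * Hn n a ^ (r - 1)) ?_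
            exact (hF.mul (((hHnm n).comp measurable_fst).pow_const _)).aemeasurable
        _ ≤ ∫⁻ b, (∫⁻ a, F (a, b) ^ r ∂μ) ^ (1 / r) * A ^ (1 - 1 / r) ∂ν := by
            refine lintegral_mono fun b => ?_
            have := ENNReal.lintegral_mul_le_Lp_mul_Lq μ hconj (f := fun a => F (a, b))
              (g := fun a => Hn n a ^ (r - 1)) (by fun_prop)
              ((hHnm n).pow_const _).aemeasurable
            refine this.trans (le_of_eq ?_)
            have hr1' : r - 1 ≠ 0 := by linarith
            congr 2
            · simp only [← ENNReal.rpow_mul]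
              rw [mul_div_cancel₀ _ hr1']
            · field_simp
        _ = M * A ^ (1 - 1 / r) := by
            rw [lintegral_mul_const _]
            exact (Measurable.lintegral_prod_left' (f := fun a => F a ^ r)
              (hF.pow_const r)).pow_const _
    by_cases hA0 : A = 0
    · rw [hA0]; exact zero_le
    have hAeq : A = A ^ (1 / r) * A ^ (1 - 1 / r) := by
      rw [← ENNReal.rpow_add _ _ hA0 (hfin n)]; simp
    have hpos : A ^ (1 - 1 / r) ≠ 0 := by
      intro h0
      rcases ENNReal.rpow_eq_zero_iff.1 h0 with h | h
      · exact hA0 h.1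
      · exact hfin n h.1
    have hnt : A ^ (1 - 1 / r) ≠ ⊤ := by
      intro h0
      rcases ENNReal.rpow_eq_top_iff.1 h0 with h | h
      · exact hA0 h.1
      · exact hfin n h.1
    have h3 : A ^ (1 / r) ≤ M := by
      exact (ENNReal.mul_le_mul_iff_left hpos hnt).1 (hAeq.symm.le.trans hmain)
    calc A = (A ^ (1 / r)) ^ r := by rw [← ENNReal.rpow_mul]; field_simp; simp
      _ ≤ M ^ r := ENNReal.rpow_le_rpow h3 hr0.le
  have hlim : ∀ a, Filter.Tendsto (fun n => Hn n a ^ r) Filter.atTop (nhds (H a ^ r)) := by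
    intro a
    refine (ENNReal.continuous_rpow_const.tendsto _).comp ?_
    have h1 : Filter.Tendsto (fun n : ℕ => min (H a) n) Filter.atTop (nhds (min (H a) ⊤)) :=
      tendsto_const_nhds.min ENNReal.tendsto_nat_nhds_top
    rw [min_eq_left le_top] at h1
    refine h1.congr' ?_
    filter_upwards [eventually_mem_spanningSets μ a] with n hn
    simp [hHn, Set.indicator_of_mem hn]
  have : ∫⁻ a, H a ^ r ∂μ ≤ M ^ r := by
    calc ∫⁻ a, H a ^ r ∂μ = ∫⁻ a, Filter.liminf (fun n => Hn n a ^ r) Filter.atTop ∂μ := by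
          refine lintegral_congr fun a => (hlim a).liminf_eq.symm
      _ ≤ Filter.liminf (fun n => ∫⁻ a, Hn n a ^ r ∂μ) Filter.atTop :=
          lintegral_liminf_le fun n => (hHnm n).pow_const _
      _ ≤ M ^ r := by
          refine Filter.liminf_le_of_frequently_le' (Filter.Frequently.of_forall hA)
  calc _ ≤ (M ^ r) ^ (1 / r) := ENNReal.rpow_le_rpow this (by positivity)
    _ = M := by rw [← ENNReal.rpow_mul]; field_simp; simp

/-- The pointwise step of Young's inequality: Hölder's inequality with three factors applied to
`k^σ g = (k g^p)^a · k^{σ-a} · (g^p)^{1/p-a}`, with `a` in the role of `1/q`; `a = 0` is allowed. -/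
lemma young_pointwise {ν : Measure ℝ} {k g : ℝ → ℝ≥0∞} (hk : Measurable k) (hg : Measurable g)
    {p a σ : ℝ} (hp : 0 < p) (ha : 0 ≤ a) (haσ : a ≤ σ) (hab : a ≤ 1 / p)
    (hsum : σ = 1 + a - 1 / p) :
    ∫⁻ s, k s ^ σ * g s ∂ν ≤
      (∫⁻ s, k s * g s ^ p ∂ν) ^ a * (∫⁻ s, k s ∂ν) ^ (σ - a) *
        (∫⁻ s, g s ^ p ∂ν) ^ (1 / p - a) := by
  have h := ENNReal.lintegral_prod_norm_pow_le (μ := ν) (Finset.univ : Finset (Fin 3))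
    (f := ![fun s => k s * g s ^ p, k, fun s => g s ^ p])
    (p := ![a, σ - a, 1 / p - a])
    (by intro i _; fin_cases i <;> simp <;> fun_prop)
    (by simp [Fin.sum_univ_three, hsum])
    (by intro i _; fin_cases i
        · simpa using ha
        · simpa using haσ
        · simpa using hab)
  simp only [Fin.prod_univ_three, Matrix.cons_val_zero, Matrix.cons_val_one, Matrix.cons_val] at h
  refine le_trans (le_of_eq (lintegral_congr fun s => ?_)) h
  rw [ENNReal.mul_rpow_of_nonneg _ _ ha]
  have h1 : k s ^ σ = k s ^ a * k s ^ (σ - a) := by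
    rw [← ENNReal.rpow_add_of_nonneg _ _ ha (by linarith)]; ring_nf
  have h2 : g s = (g s ^ p) ^ a * (g s ^ p) ^ (1 / p - a) := by
    rw [← ENNReal.rpow_add_of_nonneg _ _ ha (by linarith), ← ENNReal.rpow_mul]
    have : p * (a + (1 / p - a)) = 1 := by field_simp; ring
    rw [this, ENNReal.rpow_one]
  rw [h1]
  nth_rewrite 1 [h2]
  ring

/-- Young's inequality for a kernel `k^σ` such that `k` has mass at most `B` in each variable. -/
lemma young_Lq {ν : Measure ℝ} [SFinite ν] {k : ℝ → ℝ → ℝ≥0∞} {g : ℝ → ℝ≥0∞}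
    (hk : Measurable (Function.uncurry k)) (hg : Measurable g) {B : ℝ≥0∞}
    (hB1 : ∀ z, ∫⁻ s, k z s ∂ν ≤ B) (hB2 : ∀ s, ∫⁻ z, k z s ∂ν ≤ B)
    {p q σ : ℝ} (hp : 1 ≤ p) (hp2 : p ≤ 2) (hq : 2 ≤ q) (hsum : σ = 1 + 1 / q - 1 / p) :
    ∫⁻ z, (∫⁻ s, k z s ^ σ * g s ∂ν) ^ q ∂ν ≤ (B ^ σ * (∫⁻ s, g s ^ p ∂ν) ^ (1 / p)) ^ q := by
  have hq0 : 0 < q := by linarith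
  have hp0 : 0 < p := by linarith
  have e1 : 1 / p ≤ 1 := by rw [div_le_one hp0]; exact hp
  have e2 : 1 / q ≤ 1 / p := one_div_le_one_div_of_le hp0 (by linarith)
  have e3 : 0 < 1 / q := by positivity
  have hkz : ∀ z, Measurable (k z) := fun z => hk.comp measurable_prodMk_left
  set I := ∫⁻ s, g s ^ p ∂ν with hI
  calc _ ≤ ∫⁻ z, (∫⁻ s, k z s * g s ^ p ∂ν) * (B ^ (σ * q - 1) * I ^ (q / p - 1)) ∂ν := by
        refine lintegral_mono fun z => ?_
        have h := young_pointwise (ν := ν) (hkz z) hg hp0 e3.le (by linarith) e2 hsum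
        refine (ENNReal.rpow_le_rpow h hq0.le).trans ?_
        rw [ENNReal.mul_rpow_of_nonneg _ _ hq0.le, ENNReal.mul_rpow_of_nonneg _ _ hq0.le,
          ← ENNReal.rpow_mul, ← ENNReal.rpow_mul, ← ENNReal.rpow_mul, mul_assoc]
        have f1 : 1 / q * q = 1 := by field_simp
        have f2 : (σ - 1 / q) * q = σ * q - 1 := by field_simp
        have f3 : (1 / p - 1 / q) * q = q / p - 1 := by field_simp
        rw [f1, f2, f3, ENNReal.rpow_one]
        gcongr
        · rw [← f2]; exact mul_nonneg (by linarith) hq0.le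
        · exact hB1 z
    _ = (∫⁻ s, ∫⁻ z, k z s * g s ^ p ∂ν ∂ν) * (B ^ (σ * q - 1) * I ^ (q / p - 1)) := by
        have hm : Measurable (Function.uncurry fun z s => k z s * g s ^ p) :=
          hk.mul ((hg.comp measurable_snd).pow_const _)
        have hm' : Measurable fun z => ∫⁻ s, k z s * g s ^ p ∂ν := hm.lintegral_prod_right'
        rw [lintegral_mul_const _ hm',
          lintegral_lintegral_swap hm.aemeasurable]
    _ ≤ (B * I) * (B ^ (σ * q - 1) * I ^ (q / p - 1)) := by
        gcongr
        rw [hI, ← lintegral_const_mul _ (by fun_prop)]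
        refine lintegral_mono fun s => ?_
        have hks : Measurable fun z => k z s := hk.comp measurable_prodMk_right
        rw [lintegral_mul_const _ hks]
        gcongr
        exact hB2 s
    _ = _ := by
        rw [ENNReal.mul_rpow_of_nonneg _ _ hq0.le, ← ENNReal.rpow_mul, ← ENNReal.rpow_mul]
        have g1 : B * B ^ (σ * q - 1) = B ^ (σ * q) := by
          nth_rewrite 1 [← ENNReal.rpow_one B]
          rw [← ENNReal.rpow_add_of_nonneg _ _ (by norm_num)]
          · ring_nf
          · have : 1 / q * q ≤ σ * q := by gcongr; linarith
            have f1 : 1 / q * q = 1 := by field_simp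
            linarith
        have g2 : I * I ^ (q / p - 1) = I ^ (1 / p * q) := by
          nth_rewrite 1 [← ENNReal.rpow_one I]
          rw [← ENNReal.rpow_add_of_nonneg _ _ (by norm_num)]
          · ring_nf
          · have : 1 ≤ q / p := by rw [le_div_iff₀ hp0]; linarith
            linarith
        rw [← g1, ← g2]; ring

lemma lintegral_poisson_kernel_le (c : ℝ) (hc : 0 ≤ c) (z : ℝ) :
    ∫⁻ s, ENNReal.ofReal (c * Real.exp (-|z - s| * c)) ≤ 2 := by
  rcases hc.eq_or_lt with rfl | hc
  · simp
  have h1 := lintegral_sub_left_eq_self (μ := (volume : Measure ℝ))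
    (fun t => ENNReal.ofReal (c * Real.exp (-|t| * c))) z
  rw [h1]
  rw [← lintegral_add_compl _ (measurableSet_Iic (a := (0 : ℝ))), Set.compl_Iic]
  have h2 : ∫⁻ t in Set.Iic (0 : ℝ), ENNReal.ofReal (c * Real.exp (-|t| * c)) = 1 := by
    rw [setLIntegral_congr_fun (g := fun t => ENNReal.ofReal (c * Real.exp (c * t)))
      measurableSet_Iic, ← ofReal_integral_eq_lintegral_ofReal
        ((integrableOn_exp_mul_Iic hc 0).const_mul c)
        (Filter.Eventually.of_forall fun t => by positivity),
      integral_const_mul, integral_exp_mul_Iic hc]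
    · simp [hc.ne']
    · intro t ht
      simp only [abs_of_nonpos (Set.mem_Iic.1 ht), neg_neg, mul_comm]
  have h3 : ∫⁻ t in Set.Ioi (0 : ℝ), ENNReal.ofReal (c * Real.exp (-|t| * c)) = 1 := by
    rw [setLIntegral_congr_fun (g := fun t => ENNReal.ofReal (c * Real.exp ((-c) * t)))
      measurableSet_Ioi, ← ofReal_integral_eq_lintegral_ofReal
        ((integrableOn_exp_mul_Ioi (neg_lt_zero.2 hc) 0).const_mul c)
        (Filter.Eventually.of_forall fun t => by positivity),
      integral_const_mul, integral_exp_mul_Ioi (neg_lt_zero.2 hc)]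
    · simp [hc.ne']
    · intro t ht
      simp only [abs_of_pos (Set.mem_Ioi.1 ht)]
      ring_nf
  rw [h2, h3]
  norm_num

/-! ### Mixed-norm bounds for the majorant -/

/-- The kernel `|ξ| e^{-|z-s||ξ|}`. Its mass in either of the variables `z`, `s` is at most `2`, and
`|ξ|^σ e^{-|z-s||ξ|}` is dominated by its `σ`-th power for `0 ≤ σ ≤ 1`. -/
def poissonKer (ξ : E2) (z s : ℝ) : ℝ≥0∞ := ENNReal.ofReal (‖ξ‖ * Real.exp (-|z - s| * ‖ξ‖))

/-- The nonnegative majorant of `|ξ|^σ` times the Fourier transform of `T_± f`, where `g` stands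
for the modulus of the Fourier transform of `f`. -/
def bulkMajorant (σ : ℝ) (g : E2 × ℝ → ℝ≥0∞) (ξ : E2) (z : ℝ) : ℝ≥0∞ :=
  ∫⁻ s in Set.Iio (0 : ℝ), poissonKer ξ z s ^ σ * g (ξ, s)

lemma measurable_poissonKer_uncurry (ξ : E2) : Measurable (Function.uncurry (poissonKer ξ)) := by
  unfold poissonKer Function.uncurry; fun_prop

lemma poissonKer_mass_right (ξ : E2) (z : ℝ) :
    ∫⁻ s in Set.Iio (0 : ℝ), poissonKer ξ z s ≤ 2 :=
  (setLIntegral_le_lintegral _ _).trans (lintegral_poisson_kernel_le _ (norm_nonneg ξ) z)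

lemma poissonKer_mass_left (ξ : E2) (s : ℝ) :
    ∫⁻ z in Set.Iio (0 : ℝ), poissonKer ξ z s ≤ 2 := by
  refine (setLIntegral_le_lintegral _ _).trans ?_
  simp only [poissonKer, abs_sub_comm _ s]
  exact lintegral_poisson_kernel_le _ (norm_nonneg ξ) s

lemma measurable_bulkMajorant {σ : ℝ} {g : E2 × ℝ → ℝ≥0∞} (hg : Measurable g) :
    Measurable fun a : ℝ × E2 => bulkMajorant σ g a.2 a.1 := by
  unfold bulkMajorant
  refine Measurable.lintegral_prod_right'
    (f := fun b : (ℝ × E2) × ℝ => poissonKer b.1.2 b.1.1 b.2 ^ σ * g (b.1.2, b.2)) ?_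
  refine Measurable.mul (Measurable.pow_const ?_ _) (hg.comp (by fun_prop))
  unfold poissonKer
  fun_prop

/-- Minkowski's inequality in the form `‖g‖_{L²_ξ L^p_s} ≤ ‖g‖_{L^p_s L²_ξ}` for `p ≤ 2`. -/
lemma L2Lp_le_LpL2 {ν : Measure ℝ} [SFinite ν] {g : E2 × ℝ → ℝ≥0∞} (hg : Measurable g)
    {p : ℝ} (hp : 1 ≤ p) (hp2 : p ≤ 2) :
    (∫⁻ ξ, ((∫⁻ s, g (ξ, s) ^ p ∂ν) ^ (1 / p)) ^ (2 : ℝ)) ^ (1 / 2 : ℝ) ≤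
      (∫⁻ s, ((∫⁻ ξ, g (ξ, s) ^ (2 : ℝ)) ^ (1 / 2 : ℝ)) ^ p ∂ν) ^ (1 / p) := by
  have hp0 : 0 < p := by linarith
  have h := lintegral_minkowski (volume : Measure E2) ν (hg.pow_const p) (r := 2 / p)
    (by rw [le_div_iff₀ hp0]; linarith)
  have h' := ENNReal.rpow_le_rpow h (z := 1 / p) (by positivity)
  simp only [← ENNReal.rpow_mul] at h' ⊢
  have e1 : 1 / (2 / p) * (1 / p) = 1 / 2 := by field_simp
  have e2 : 1 / p * 2 = 2 / p := by field_simp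
  have e3 : p * (2 / p) = 2 := by field_simp
  have e4 : 1 / (2 / p) = 1 / 2 * p := by field_simp
  rw [e1, e3, e4] at h'
  rwa [e2]

lemma bulkMajorant_Lq {g : E2 × ℝ → ℝ≥0∞} (hg : Measurable g)
    {p q σ : ℝ} (hp : 1 ≤ p) (hp2 : p ≤ 2) (hq : 2 ≤ q) (hσ : σ = 1 + 1 / q - 1 / p) :
    (∫⁻ z in Set.Iio (0 : ℝ),
        ((∫⁻ ξ, bulkMajorant σ g ξ z ^ (2 : ℝ)) ^ (1 / 2 : ℝ)) ^ q) ^ (1 / q) ≤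
      2 ^ σ * (∫⁻ s in Set.Iio (0 : ℝ),
        ((∫⁻ ξ, g (ξ, s) ^ (2 : ℝ)) ^ (1 / 2 : ℝ)) ^ p) ^ (1 / p) := by
  have hq0 : 0 < q := by linarith
  refine le_trans ?_ (mul_le_mul_right (L2Lp_le_LpL2 hg hp hp2) _)
  have hWm : Measurable fun a : ℝ × E2 => bulkMajorant σ g a.2 a.1 :=
    measurable_bulkMajorant hg
  have h := lintegral_minkowski (volume.restrict (Set.Iio (0 : ℝ))) (volume : Measure E2)
    (F := fun a => bulkMajorant σ g a.2 a.1 ^ (2 : ℝ)) (hWm.pow_const (2 : ℝ)) (r := q / 2)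
    (by linarith)
  have h' := ENNReal.rpow_le_rpow h (z := 1 / 2) (by positivity)
  simp only [← ENNReal.rpow_mul] at h'
  have e1 : 1 / (q / 2) * (1 / 2) = 1 / q := by field_simp
  have e2 : q / 2 = 1 / 2 * q := by ring
  have e3 : 2 * (1 / 2 * q) = q := by ring
  rw [e1, e2, e3] at h'
  simp only [← ENNReal.rpow_mul _ (1 / 2) q]
  refine h'.trans ?_
  calc _ ≤ (∫⁻ ξ, (2 ^ σ * (∫⁻ s in Set.Iio (0 : ℝ), g (ξ, s) ^ p) ^ (1 / p)) ^ (2 : ℝ))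
        ^ (1 / 2 : ℝ) := by
        refine ENNReal.rpow_le_rpow (lintegral_mono fun ξ => ?_) (by norm_num)
        have hy := young_Lq (ν := volume.restrict (Set.Iio (0 : ℝ)))
          (k := poissonKer ξ) (g := fun s => g (ξ, s)) (B := 2)
          (measurable_poissonKer_uncurry ξ)
          (hg.comp measurable_prodMk_left) (poissonKer_mass_right ξ) (poissonKer_mass_left ξ)
          hp hp2 hq hσ
        refine (ENNReal.rpow_le_rpow hy (z := 1 / (1 / 2 * q)) (by positivity)).trans
          (le_of_eq ?_)
        rw [← ENNReal.rpow_mul]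
        congr 1
        field_simp
    _ = _ := by
        simp only [ENNReal.mul_rpow_of_nonneg _ _ (zero_le_two (α := ℝ))]
        rw [lintegral_const_mul, ENNReal.mul_rpow_of_nonneg _ _ (by norm_num),
          ← ENNReal.rpow_mul (2 ^ σ)]
        · norm_num
        · exact ((Measurable.lintegral_prod_right' (hg.pow_const p)).pow_const _).pow_const _

lemma bulkMajorant_Linfty {g : E2 × ℝ → ℝ≥0∞} (hg : Measurable g)
    {p σ : ℝ} (hp : 1 ≤ p) (hp2 : p ≤ 2) (hσ : σ = 1 - 1 / p) (z : ℝ) :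
    (∫⁻ ξ, bulkMajorant σ g ξ z ^ (2 : ℝ)) ^ (1 / 2 : ℝ) ≤
      2 ^ σ * (∫⁻ s in Set.Iio (0 : ℝ),
        ((∫⁻ ξ, g (ξ, s) ^ (2 : ℝ)) ^ (1 / 2 : ℝ)) ^ p) ^ (1 / p) := by
  have hp0 : 0 < p := by linarith
  have e1 : 1 / p ≤ 1 := by rw [div_le_one hp0]; exact hp
  refine le_trans ?_ (mul_le_mul_right (L2Lp_le_LpL2 hg hp hp2) _)
  calc _ ≤ (∫⁻ ξ, (2 ^ σ * (∫⁻ s in Set.Iio (0 : ℝ), g (ξ, s) ^ p) ^ (1 / p)) ^ (2 : ℝ))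
        ^ (1 / 2 : ℝ) := by
        refine ENNReal.rpow_le_rpow (lintegral_mono fun ξ => ?_) (by norm_num)
        refine ENNReal.rpow_le_rpow ?_ (by norm_num)
        have hy := young_pointwise (ν := volume.restrict (Set.Iio (0 : ℝ)))
          (k := poissonKer ξ z) (g := fun s => g (ξ, s))
          ((measurable_poissonKer_uncurry ξ).comp measurable_prodMk_left)
          (hg.comp measurable_prodMk_left) hp0 le_rfl (by linarith) (by positivity)
          (σ := σ) (by linarith)
        simp only [ENNReal.rpow_zero, one_mul, sub_zero] at hy
        refine hy.trans ?_
        gcongr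
        · linarith
        · exact poissonKer_mass_right ξ z
    _ = _ := by
        simp only [ENNReal.mul_rpow_of_nonneg _ _ (zero_le_two (α := ℝ))]
        rw [lintegral_const_mul, ENNReal.mul_rpow_of_nonneg _ _ (by norm_num),
          ← ENNReal.rpow_mul (2 ^ σ)]
        · norm_num
        · exact ((Measurable.lintegral_prod_right' (hg.pow_const p)).pow_const _).pow_const _

/-! ### Reduction to the majorant -/

lemma symbol_le_poissonKer {σ : ℝ} (h0 : 0 ≤ σ) (h1 : σ ≤ 1) (ξ : E2) (z s : ℝ) :
    ENNReal.ofReal (‖ξ‖ ^ σ) * ENNReal.ofReal (Real.exp (-|z - s| * ‖ξ‖)) ≤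
      poissonKer ξ z s ^ σ := by
  rw [poissonKer, ENNReal.ofReal_rpow_of_nonneg (by positivity) h0,
    Real.mul_rpow (norm_nonneg _) (Real.exp_pos _).le, ← ENNReal.ofReal_mul (by positivity)]
  refine ENNReal.ofReal_le_ofReal ?_
  gcongr
  rw [← Real.exp_mul]
  refine Real.exp_le_exp.2 ?_
  have : 0 ≤ |z - s| * ‖ξ‖ := by positivity
  nlinarith

/-- No integrability is needed: if `‖F‖²` is not integrable, the left side is `0`. -/
lemma enorm_sqrt_integral_le {F : E2 → ℂ} :
    ‖(∫ x, ‖F x‖ ^ 2) ^ ((1 : ℝ) / 2)‖ₑ ≤ (∫⁻ x, ‖F x‖ₑ ^ (2 : ℝ)) ^ (1 / 2 : ℝ) := by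
  have h0 : 0 ≤ ∫ x, ‖F x‖ ^ 2 := integral_nonneg fun x => by positivity
  rw [Real.enorm_of_nonneg (by positivity), ← ENNReal.ofReal_rpow_of_nonneg h0 (by norm_num)]
  refine ENNReal.rpow_le_rpow ?_ (by norm_num)
  rw [← Real.enorm_of_nonneg h0]
  refine (enorm_integral_le_lintegral_enorm _).trans (le_of_eq (lintegral_congr fun x => ?_))
  rw [enorm_pow, enorm_norm]; norm_cast

lemma enorm_sqrt_integral_schwartz (g : SchwartzMap E2 ℂ) :
    ‖(∫ x, ‖g x‖ ^ 2) ^ ((1 : ℝ) / 2)‖ₑ =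
      (∫⁻ ξ, ‖𝓕 (g : E2 → ℂ) ξ‖ₑ ^ (2 : ℝ)) ^ (1 / 2 : ℝ) := by
  have h0 : 0 ≤ ∫ x, ‖g x‖ ^ 2 := integral_nonneg fun x => by positivity
  rw [lintegral_schwartz_fourier_sq, Real.enorm_of_nonneg (by positivity),
    ← ENNReal.ofReal_rpow_of_nonneg h0 (by norm_num), ofReal_integral_eq_lintegral_ofReal]
  · congr 1
    refine lintegral_congr fun x => ?_
    rw [← ofReal_norm, ENNReal.ofReal_rpow_of_nonneg (by positivity) (by positivity)]
    norm_num
  · exact (g.memLp 2).integrable_norm_pow (by simp)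
  · exact Filter.Eventually.of_forall fun x => by positivity

lemma fourierInv_zero_of_not_integrable {G : E2 → ℂ} (hG : ¬ Integrable G) (x : E2) :
    𝓕⁻ G x = 0 := by
  rw [Real.fourierInv_eq]
  refine integral_undef fun h => hG ?_
  have h2 := (VectorFourier.fourierIntegral_convergent_iff (μ := (volume : Measure E2))
    (f := G) Real.continuous_fourierChar
    (L := -innerₗ E2) (by exact (continuous_inner (𝕜 := ℝ) (E := E2)).neg) x).1
  refine h2 (by simpa using! h)

lemma fourier_zero_of_not_integrable {G : E2 → ℂ} (hG : ¬ Integrable G) (x : E2) :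
    𝓕 G x = 0 := by
  rw [← neg_neg x, ← Real.fourierInv_eq_fourier_neg, fourierInv_zero_of_not_integrable hG]

/-- For each fixed `z`, the `L²_x` norm of `|∇|^σ T_ε f(·,z)` is bounded by the `L²_ξ` norm of the
majorant. The indicator in the definition of `T_ε` is simply bounded by `1`. -/
lemma slice_bound {ε σ : ℝ} (hσ0 : 0 ≤ σ) (hσ1 : σ ≤ 1) {f : E2 × ℝ → ℂ} (hf : Continuous f)
    (hS : ∀ z : ℝ, ∃ g : SchwartzMap E2 ℂ, ∀ x : E2, f (x, z) = g x)
    (hfin : ∫⁻ s in Set.Iio (0 : ℝ),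
      (∫⁻ ξ, ‖𝓕 (fun x => f (x, s)) ξ‖ₑ ^ (2 : ℝ)) ^ (1 / 2 : ℝ) < ⊤) (z : ℝ) :
    ‖(∫ x : E2, ‖fm (fun ξ => ((‖ξ‖ ^ σ : ℝ) : ℂ)) (fun x' => Tpm ε f x' z) x‖ ^ 2)
        ^ ((1 : ℝ) / 2)‖ₑ ≤
      (∫⁻ ξ, bulkMajorant σ (fun a => ‖𝓕 (fun x => f (x, a.2)) a.1‖ₑ) ξ z ^ (2 : ℝ))
        ^ (1 / 2 : ℝ) := by
  refine enorm_sqrt_integral_le.trans (ENNReal.rpow_le_rpow ?_ (by norm_num))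
  unfold fm
  by_cases hG : Integrable fun ξ : E2 =>
      ((‖ξ‖ ^ σ : ℝ) : ℂ) * 𝓕 (fun x' => Tpm ε f x' z) ξ
  swap
  · simp [fourierInv_zero_of_not_integrable hG]
  refine (lintegral_fourierInv_sq_le hG).trans ?_
  by_cases hT : Integrable fun x' => Tpm ε f x' z
  swap
  · simp [fourier_zero_of_not_integrable hT]
  set h : E2 × ℝ → ℂ := fun a => (if 0 < ε * (a.2 - z) then (1 : ℂ) else 0) *
    (((Real.exp (-|z - a.2| * ‖a.1‖) : ℝ) : ℂ) * 𝓕 (fun x => f (x, a.2)) a.1) with hh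
  have hfm : StronglyMeasurable fun a : E2 × ℝ => 𝓕 (fun x => f (x, a.2)) a.1 :=
    stronglyMeasurable_fourier hf.stronglyMeasurable
  have hhm : StronglyMeasurable h := by
    refine StronglyMeasurable.mul ?_ (StronglyMeasurable.mul ?_ hfm)
    · refine StronglyMeasurable.ite ?_ stronglyMeasurable_const stronglyMeasurable_const
      exact measurableSet_lt measurable_const (by fun_prop)
    · exact (by fun_prop : Continuous fun a : E2 × ℝ =>
        ((Real.exp (-|z - a.2| * ‖a.1‖) : ℝ) : ℂ)).stronglyMeasurable
  have hexp : ∀ a : E2 × ℝ, ‖((Real.exp (-|z - a.2| * ‖a.1‖) : ℝ) : ℂ)‖ ≤ 1 := by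
    intro a
    rw [Complex.norm_real, Real.norm_of_nonneg (Real.exp_pos _).le, Real.exp_le_one_iff]
    have : 0 ≤ |z - a.2| * ‖a.1‖ := by positivity
    linarith
  have hite : ∀ s : ℝ, ‖(if 0 < ε * (s - z) then (1 : ℂ) else 0)‖ ≤ 1 := by
    intro s; split_ifs <;> simp
  have hle : ∀ a, ‖h a‖ ≤ ‖𝓕 (fun x => f (x, a.2)) a.1‖ := by
    intro a
    simp only [hh, norm_mul]
    calc _ ≤ 1 * (1 * ‖𝓕 (fun x => f (x, a.2)) a.1‖) := by
          gcongr
          · exact hite a.2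
          · exact hexp a
      _ = _ := by ring
  have hSl : ∀ s, Integrable fun ξ => 𝓕 (fun x => f (x, s)) ξ := by
    intro s
    obtain ⟨g, hg⟩ := hS s
    simp only [hg]
    exact (𝓕 g).integrable
  have hint : ∀ s, Integrable fun ξ => h (ξ, s) := fun s =>
    (hSl s).mono (hhm.comp_measurable measurable_prodMk_right).aestronglyMeasurable
      (Filter.Eventually.of_forall fun ξ => hle (ξ, s))
  have hhfin : ∫⁻ s in Set.Iio (0 : ℝ), (∫⁻ ξ, ‖h (ξ, s)‖ₑ ^ (2 : ℝ)) ^ (1 / 2 : ℝ) < ⊤ := by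
    refine lt_of_le_of_lt (lintegral_mono fun s => ?_) hfin
    gcongr with ξ
    exact enorm_le_iff_norm_le.2 (hle (ξ, s))
  have hTeq : (fun x' => Tpm ε f x' z) =
      fun x => ∫ s in Set.Iio (0 : ℝ), 𝓕⁻ (fun ξ => h (ξ, s)) x := by
    ext x
    unfold Tpm
    congr 1
    ext s
    simp only [fm, hh, Real.fourierInv_eq]
    split_ifs <;> simp
  rw [hTeq] at hT ⊢
  have key := fourier_integral_fourierInv hhm hint hhfin hT
  refine lintegral_mono_ae ?_
  filter_upwards [key] with ξ hξ
  rw [hξ]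
  refine ENNReal.rpow_le_rpow ?_ (by norm_num)
  rw [enorm_mul]
  calc _ ≤ ENNReal.ofReal (‖ξ‖ ^ σ) * ∫⁻ s in Set.Iio (0 : ℝ), ‖h (ξ, s)‖ₑ := by
        gcongr
        · rw [← ofReal_norm, Complex.norm_real, Real.norm_of_nonneg (by positivity)]
        · exact enorm_integral_le_lintegral_enorm _
    _ = ∫⁻ s in Set.Iio (0 : ℝ), ENNReal.ofReal (‖ξ‖ ^ σ) * ‖h (ξ, s)‖ₑ := by
        rw [lintegral_const_mul]
        exact (hhm.comp_measurable measurable_prodMk_left).enorm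
    _ ≤ _ := by
        refine lintegral_mono fun s => ?_
        calc _ ≤ ENNReal.ofReal (‖ξ‖ ^ σ) * (ENNReal.ofReal (Real.exp (-|z - s| * ‖ξ‖)) *
              ‖𝓕 (fun x => f (x, s)) ξ‖ₑ) := by
              gcongr
              simp only [hh, enorm_mul]
              rw [← ofReal_norm ((Real.exp (-|z - s| * ‖ξ‖) : ℝ) : ℂ), Complex.norm_real,
                Real.norm_of_nonneg (Real.exp_pos _).le]
              refine mul_le_of_le_one_left zero_le ?_
              have := enorm_le_iff_norm_le.2
                (show ‖(if 0 < ε * (s - z) then (1 : ℂ) else 0)‖ ≤ ‖(1 : ℂ)‖ by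
                  simpa using hite s)
              simpa using this
          _ ≤ _ := by
              rw [← mul_assoc]
              gcongr
              exact symbol_le_poissonKer hσ0 hσ1 ξ z s

/-- On a bounded set `L^p ⊆ L¹` for `p ≥ 1`, since `ρ ≤ 1 + ρ^p`. -/
lemma lintegral_lt_top_of_rpow {ρ : ℝ → ℝ≥0∞} {p R : ℝ} (hp : 1 ≤ p)
    (hR : ∀ s, R < |s| → ρ s = 0)
    (hfin : ∫⁻ s in Set.Iio (0 : ℝ), ρ s ^ p < ⊤) :
    ∫⁻ s in Set.Iio (0 : ℝ), ρ s < ⊤ := by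
  calc _ ≤ ∫⁻ s in Set.Iio (0 : ℝ), ((Set.Icc (-R) R).indicator 1 s + ρ s ^ p) := by
        refine lintegral_mono fun s => ?_
        by_cases hs : R < |s|
        · simp [hR s hs]
        · rw [Set.indicator_of_mem (by simpa [← abs_le] using hs)]
          rcases le_total (ρ s) 1 with h | h
          · exact h.trans le_self_add
          · refine le_trans ?_ le_add_self
            simpa using ENNReal.rpow_le_rpow_of_exponent_le h hp
    _ = (∫⁻ s in Set.Iio (0 : ℝ), (Set.Icc (-R) R).indicator 1 s) +
        ∫⁻ s in Set.Iio (0 : ℝ), ρ s ^ p :=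
        lintegral_add_left (measurable_one.indicator measurableSet_Icc) _
    _ < ⊤ := by
        refine ENNReal.add_lt_top.2 ⟨?_, hfin⟩
        refine (setLIntegral_le_lintegral _ _).trans_lt ?_
        rw [lintegral_indicator_one measurableSet_Icc]
        exact measure_Icc_lt_top

/-- **`L^p_z L²_x → L^q_z L²_x` bounds with a gain of `σ = 1 + 1/q − 1/p` derivatives.** -/
theorem poisson_bulk_LqL2_bound :
    ∀ p q : ℝ≥0∞, 1 ≤ p → p ≤ 2 → 2 ≤ q →
      ∃ C : ℝ, 0 < C ∧
        ∀ ε : ℝ, (ε = 1 ∨ ε = -1) →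
          ∀ f : E2 × ℝ → ℂ, ContDiff ℝ (⊤ : ℕ∞) f →
            (∀ z : ℝ, ∃ g : SchwartzMap E2 ℂ, ∀ x : E2, f (x, z) = g x) →
            (∃ R : ℝ, ∀ (x : E2) (z : ℝ), R < |z| → f (x, z) = 0) →
            eLpNorm
                (fun z : ℝ =>
                  (∫ x : E2,
                      ‖fm (fun ξ => ((‖ξ‖ ^ (1 + (1 / q).toReal - (1 / p).toReal) : ℝ) : ℂ))
                          (fun x' => Tpm ε f x' z) x‖ ^ 2) ^ ((1 : ℝ) / 2))
                q (volume.restrict (Set.Iio 0)) ≤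
              ENNReal.ofReal C *
                eLpNorm (fun z : ℝ => (∫ x : E2, ‖f (x, z)‖ ^ 2) ^ ((1 : ℝ) / 2)) p
                  (volume.restrict (Set.Iio 0)) := by
  intro p q hp hp2 hq
  refine ⟨2, by norm_num, fun ε _ f hf hS ⟨R, hR⟩ => ?_⟩
  have hpt : p ≠ ⊤ := ne_top_of_le_ne_top (by simp) hp2
  have hp0 : p ≠ 0 := (zero_lt_one.trans_le hp).ne'
  have hq0 : q ≠ 0 := (zero_lt_two.trans_le hq).ne'
  have hp' : 1 ≤ p.toReal := by simpa using ENNReal.toReal_mono hpt hp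
  have hp2' : p.toReal ≤ 2 := by simpa using ENNReal.toReal_mono (by simp) hp2
  have hpi1 : 1 / p.toReal ≤ 1 := by rw [div_le_one (by linarith)]; exact hp'
  have hpi2 : 1 / 2 ≤ 1 / p.toReal := one_div_le_one_div_of_le (by linarith) hp2'
  have hpr : (1 / p).toReal = 1 / p.toReal := by simp
  have hqr0 : 0 ≤ (1 / q).toReal := ENNReal.toReal_nonneg
  have hqr1 : (1 / q).toReal ≤ 1 / 2 := by
    have : (1 / q) ≤ 1 / 2 := ENNReal.div_le_div_left hq 1
    simpa using ENNReal.toReal_mono (by simp) this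
  set σ := 1 + (1 / q).toReal - (1 / p).toReal with hσ
  have hσ0 : 0 ≤ σ := by linarith
  have hσ1 : σ ≤ 1 := by linarith
  set g : E2 × ℝ → ℝ≥0∞ := fun a => ‖𝓕 (fun x => f (x, a.2)) a.1‖ₑ with hg
  have hgm : Measurable g := (stronglyMeasurable_fourier hf.continuous.stronglyMeasurable).enorm
  have hrhs : ∀ z, ‖(∫ x : E2, ‖f (x, z)‖ ^ 2) ^ ((1 : ℝ) / 2)‖ₑ =
      (∫⁻ ξ, g (ξ, z) ^ (2 : ℝ)) ^ (1 / 2 : ℝ) := by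
    intro z
    obtain ⟨k, hk⟩ := hS z
    simp only [hg, hk]
    exact enorm_sqrt_integral_schwartz k
  rw [eLpNorm_eq_lintegral_rpow_enorm_toReal hp0 hpt]
  simp only [hrhs]
  set Y := ∫⁻ s in Set.Iio (0 : ℝ), ((∫⁻ ξ, g (ξ, s) ^ (2 : ℝ)) ^ (1 / 2 : ℝ)) ^ p.toReal with hY
  by_cases hYt : Y = ⊤
  · rw [hYt, ENNReal.top_rpow_of_pos (by positivity), ENNReal.mul_top (by simp)]
    exact le_top
  have hfin : ∫⁻ s in Set.Iio (0 : ℝ), (∫⁻ ξ, g (ξ, s) ^ (2 : ℝ)) ^ (1 / 2 : ℝ) < ⊤ := by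
    refine lintegral_lt_top_of_rpow (R := R) hp' (fun s hs => ?_) (lt_top_iff_ne_top.2 hYt)
    rw [← hrhs]
    simp [hR _ s hs]
  have hlhs := slice_bound (ε := ε) hσ0 hσ1 hf.continuous hS hfin
  have hC : (2 : ℝ≥0∞) ^ σ * Y ^ (1 / p.toReal) ≤ ENNReal.ofReal 2 * Y ^ (1 / p.toReal) := by
    gcongr
    simpa using ENNReal.rpow_le_rpow_of_exponent_le (one_le_two (α := ℝ≥0∞)) hσ1
  refine le_trans ?_ hC
  by_cases hqt : q = ⊤
  · have hσ' : σ = 1 - 1 / p.toReal := by rw [hσ, hpr, hqt]; simp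
    rw [hqt, eLpNorm_exponent_top]
    refine eLpNormEssSup_le_of_ae_enorm_bound (Filter.Eventually.of_forall fun z => ?_)
    exact (hlhs z).trans (bulkMajorant_Linfty hgm hp' hp2' hσ' z)
  · have hq' : 2 ≤ q.toReal := by simpa using ENNReal.toReal_mono hqt hq
    rw [eLpNorm_eq_lintegral_rpow_enorm_toReal hq0 hqt]
    refine le_trans ?_ (bulkMajorant_Lq hgm hp' hp2' hq' (σ := σ) (by rw [hσ]; simp))
    gcongr with z
    exact hlhs z

end
end

section
/- For all Schwartz functions f, g on ℝ², the fractional product estimate ‖ |∇|^{1/2} (f g) ‖_{L²(ℝ²)} ≤ C ( ‖f‖_{L³(ℝ²)} + ‖∇f‖_{L³(ℝ²)} ) ‖ |∇|^{1/2} g ‖_{L²(ℝ²)} holds, with C an absolute constant. -/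
/-!
The proof runs in physical space. By Plancherel, `‖|∇|^{1/2} u‖_{L²}² = ∫ |ξ| |û|²` (`fm_facts`) is a
constant multiple of the squared Gagliardo seminorm `gag u = ∬ |u(x + h) - u(x)|² |h|⁻³ dx dh`
(`gag_eq`), so it suffices to show `gag (f g) ≲ ‖f‖_{W^{1,3}}² gag g` (`gag_mul_le`).

Split `(fg)(x+h) - (fg)(x) = f(x+h) (g(x+h) - g(x)) + g(x) (f(x+h) - f(x))`. The first term is bounded
with the Morrey embedding `‖f‖_∞ ≲ ‖f‖_{W^{1,3}}` (`sup_bound`). For the second, Cauchy–Schwarz in `x`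
gives the factor `‖g‖_{L⁴}² ‖f(· + h) - f‖_{L⁴}²`. Here `‖g‖_{L⁴}² ≲ gag g` is the Sobolev embedding
(`sobolev`), proved by comparing `g` with its averages over balls and optimising the radius, and
`‖f(· + h) - f‖_{L⁴}² ≲ min(1, |h|^{3/2}) ‖f‖_{W^{1,3}}²` (`diff_four_le`), which is integrable against
`|h|⁻³ dh` on the plane.
-/

open MeasureTheory
open scoped FourierTransform

noncomputable section

/-! ### Plancherel for functions in `L¹ ∩ L²` -/

/-- Plancherel for the integral Fourier transform of an `L¹ ∩ L²` function. This transform agrees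
almost everywhere with the `L²` transform, since both pair in the same way with test functions. -/
lemma lintegral_enorm_sq_fourier {u : E2 → ℂ} (h1 : Integrable u) (h2 : MemLp u 2) :
    ∫⁻ x, ‖𝓕 u x‖ₑ ^ 2 = ∫⁻ x, ‖u x‖ₑ ^ 2 := by
  set U : Lp (α := E2) ℂ 2 volume := h2.toLp u with hU
  set v : Lp (α := E2) ℂ 2 volume := 𝓕 U with hv
  have hcont : Continuous (𝓕 u) :=
    VectorFourier.fourierIntegral_continuous Real.continuous_fourierChar
      (by exact continuous_inner) h1
  have hae : ∀ᵐ x, 𝓕 u x = v x := by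
    refine ae_eq_of_integral_contDiff_smul_eq (hcont.locallyIntegrable)
      ((Lp.memLp v).locallyIntegrable (by norm_num)) fun φ hφ hφc => ?_
    have hc : HasCompactSupport (fun x => (φ x : ℂ)) :=
      hφc.comp_left (g := fun r : ℝ => (r : ℂ)) (by simp)
    set Φ : SchwartzMap E2 ℂ := hc.toSchwartzMap (Complex.ofRealCLM.contDiff.comp hφ) with hΦ
    have e1 : ∫ x, Φ x • v x = ∫ x, (𝓕 Φ) x • U x := by
      rw [← Lp.toTemperedDistribution_apply, ← Lp.toTemperedDistribution_apply, hv,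
        ← Lp.fourier_toTemperedDistribution_eq, TemperedDistribution.fourier_apply]
    have e2 : ∫ x, (𝓕 Φ) x • U x = ∫ x, (𝓕 (Φ : E2 → ℂ)) x • u x := by
      refine integral_congr_ae ?_
      filter_upwards [h2.coeFn_toLp] with x hx
      rw [hx, SchwartzMap.fourier_coe]
    have e3 : ∫ x, (𝓕 (Φ : E2 → ℂ)) x • u x = ∫ x, Φ x • 𝓕 u x := by
      have := VectorFourier.integral_fourierIntegral_smul_eq_flip (μ := volume) (ν := volume)
        (L := innerₗ E2) (f := (Φ : E2 → ℂ)) (g := u) Real.continuous_fourierChar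
        (by exact continuous_inner) Φ.integrable h1
      rw [flip_innerₗ] at this
      exact this
    have key := e1.trans (e2.trans e3)
    have hΦφ : ∀ x, Φ x = (φ x : ℂ) := fun x => rfl
    simp only [hΦφ] at key
    simpa using key.symm
  have n1 : eLpNorm (𝓕 u) 2 volume = eLpNorm u 2 volume := by
    rw [eLpNorm_congr_ae hae, ← Lp.enorm_def, ← eLpNorm_congr_ae h2.coeFn_toLp, ← Lp.enorm_def,
      ← ofReal_norm, ← ofReal_norm, hv, Lp.norm_fourier_eq]
  have n2 := n1
  simp only [eLpNorm_eq_lintegral_rpow_enorm_toReal (p := 2) (by norm_num) (by norm_num)] at n2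
  have n3 := ENNReal.rpow_left_injective (by norm_num) n2
  simpa using n3

/-! ### The Gagliardo seminorm on the Fourier side -/

lemma lintegral_comp_smul_E2 (F : E2 → ENNReal) {r : ℝ} (hr : 0 < r) :
    ∫⁻ x, F (r • x) = ENNReal.ofReal ((r ^ 2)⁻¹) * ∫⁻ x, F x := by
  have h := Measure.map_addHaar_smul (volume : Measure E2) hr.ne'
  rw [← (measurableEmbedding_const_smul₀ hr.ne').lintegral_map F, h, lintegral_smul_measure]
  simp [abs_of_pos (pow_pos hr 2)]

/-- The kernel `|h|⁻³`; its value at the origin is `0`. -/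
def kern (h : E2) : ENNReal := ENNReal.ofReal ((‖h‖ ^ 3)⁻¹)

lemma measurable_kern : Measurable kern := by unfold kern; fun_prop

/-- The squared Gagliardo seminorm of order `1/2`, `∬ |u(x + h) - u(x)|² |h|⁻³ dx dh`. -/
def gag (u : E2 → ℂ) : ENNReal := ∫⁻ h, kern h * ∫⁻ x, ‖u (x + h) - u x‖ₑ ^ 2

/-- The multiplier `e^{2πi h·ξ} - 1` of the difference operator `g ↦ g(· + h) - g`. -/
def chi (h ξ : E2) : ℂ := (Real.fourierChar (inner ℝ h ξ) : ℂ) - 1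

lemma continuous_chi : Continuous (fun p : E2 × E2 => chi p.1 p.2) := by
  unfold chi
  have := Real.continuous_fourierChar
  fun_prop

/-- A fixed unit vector. -/
def e0 : E2 := EuclideanSpace.single 0 1

lemma norm_e0 : ‖e0‖ = 1 := by simp [e0]

/-- The ratio between the squared Gagliardo seminorm and `∫ |ξ| |ĝ(ξ)|² dξ`. -/
def cst : ENNReal := ∫⁻ h, kern h * ‖chi h e0‖ₑ ^ 2

/-- The symbol of the Gagliardo seminorm is invariant under isometries and homogeneous of degree one,
hence a multiple of `|ξ|`. -/
lemma symbol_eq (ξ : E2) : ∫⁻ h, kern h * ‖chi h ξ‖ₑ ^ 2 = cst * ‖ξ‖ₑ := by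
  rcases eq_or_ne ξ 0 with rfl | hξ
  · simp [chi]
  have hpos : 0 < ‖ξ‖ := norm_pos_iff.2 hξ
  set v : E2 := ‖ξ‖ • e0
  have hv : ‖v‖ = ‖ξ‖ := by simp [v, norm_smul, norm_e0]
  set R : E2 ≃ₗᵢ[ℝ] E2 := (Submodule.span ℝ {v - ξ})ᗮ.reflection with hR
  have hRv : R v = ξ := Submodule.reflection_sub hv
  have e1 : ∫⁻ h, kern h * ‖chi h ξ‖ₑ ^ 2 = ∫⁻ h, kern h * ‖chi h v‖ₑ ^ 2 := by
    rw [← (R.measurePreserving).lintegral_comp_emb R.toHomeomorph.measurableEmbedding]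
    refine lintegral_congr fun h => ?_
    have : chi (R h) ξ = chi h v := by
      unfold chi
      rw [← hRv, R.inner_map_map]
    rw [this]
    simp [kern]
  have e2 : ∀ h, kern h * ‖chi h v‖ₑ ^ 2 =
      ENNReal.ofReal (‖ξ‖ ^ 3) * (kern (‖ξ‖ • h) * ‖chi (‖ξ‖ • h) e0‖ₑ ^ 2) := by
    intro h
    have : chi (‖ξ‖ • h) e0 = chi h v := by
      simp only [chi, v, inner_smul_left, inner_smul_right]
      rfl
    rw [this, ← mul_assoc]
    congr 1
    unfold kern
    rw [← ENNReal.ofReal_mul (by positivity), norm_smul, norm_norm, mul_pow, mul_inv,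
      ← mul_assoc, mul_inv_cancel₀ (by positivity), one_mul]
  rw [e1, lintegral_congr e2, lintegral_const_mul' _ _ (by simp),
    lintegral_comp_smul_E2 (fun h => kern h * ‖chi h e0‖ₑ ^ 2) hpos, ← mul_assoc,
    ← ENNReal.ofReal_mul (by positivity), mul_comm, ← ofReal_norm, cst]
  congr 2
  field_simp

lemma fourier_diff (g : SchwartzMap E2 ℂ) (h ξ : E2) :
    𝓕 (fun x => g (x + h) - g x) ξ = chi h ξ * 𝓕 (g : E2 → ℂ) ξ := by
  have hi : Integrable (fun x => g (x + h)) := g.integrable.comp_add_right h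
  have h1 : 𝓕 (fun x => g (x + h)) ξ = (Real.fourierChar (inner ℝ h ξ) : ℂ) * 𝓕 (g : E2 → ℂ) ξ := by
    have := congrFun (VectorFourier.fourierIntegral_comp_add_right Real.fourierChar volume
      (innerₗ E2) (g : E2 → ℂ) h) ξ
    exact this
  have h2 : 𝓕 (fun x => g (x + h) - g x) ξ = 𝓕 (fun x => g (x + h)) ξ - 𝓕 (g : E2 → ℂ) ξ := by
    simp only [Real.fourier_eq]
    rw [← integral_sub]
    · simp [smul_sub]
    · exact (Real.fourierIntegral_convergent_iff ξ).2 hi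
    · exact (Real.fourierIntegral_convergent_iff ξ).2 g.integrable
  rw [h2, h1, chi]; ring

/-- Plancherel in `x` for each difference `g(· + h) - g`, then Tonelli and `symbol_eq`. -/
lemma gag_eq (g : SchwartzMap E2 ℂ) :
    gag g = cst * ∫⁻ ξ, ‖ξ‖ₑ * ‖𝓕 (g : E2 → ℂ) ξ‖ₑ ^ 2 := by
  have hF : Continuous (𝓕 (g : E2 → ℂ)) := by
    rw [← SchwartzMap.fourier_coe]; exact (𝓕 g).continuous
  have e1 : ∀ h, ∫⁻ x, ‖g (x + h) - g x‖ₑ ^ 2 =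
      ∫⁻ ξ, ‖chi h ξ‖ₑ ^ 2 * ‖𝓕 (g : E2 → ℂ) ξ‖ₑ ^ 2 := by
    intro h
    have hm : MemLp (fun x => g (x + h)) 2 volume :=
      (g.memLp 2).comp_measurePreserving (measurePreserving_add_right volume h)
    rw [← lintegral_enorm_sq_fourier (u := fun x => g (x + h) - g x) ((g.integrable.comp_add_right h).sub g.integrable)
      (hm.sub (g.memLp 2))]
    refine lintegral_congr fun ξ => ?_
    rw [fourier_diff, enorm_mul, mul_pow]
  unfold gag
  simp_rw [e1]
  have hc := continuous_chi
  have hk := measurable_kern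
  have hc1 : ∀ h, Continuous (fun ξ => chi h ξ) := fun h => by fun_prop
  calc _ = ∫⁻ h, ∫⁻ ξ, kern h * (‖chi h ξ‖ₑ ^ 2 * ‖𝓕 (g : E2 → ℂ) ξ‖ₑ ^ 2) := by
        refine lintegral_congr fun h => ?_
        rw [lintegral_const_mul]
        have := hc1 h
        fun_prop
    _ = ∫⁻ ξ, ∫⁻ h, kern h * (‖chi h ξ‖ₑ ^ 2 * ‖𝓕 (g : E2 → ℂ) ξ‖ₑ ^ 2) := by
        rw [lintegral_lintegral_swap]
        refine Measurable.aemeasurable ?_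
        have := hc.measurable
        have h3 : Measurable (fun p : E2 × E2 => kern p.1) := hk.comp measurable_fst
        have h4 : Measurable (fun p : E2 × E2 => 𝓕 (g : E2 → ℂ) p.2) :=
          hF.measurable.comp measurable_snd
        simp only [Function.uncurry_def]
        fun_prop
    _ = ∫⁻ ξ, cst * (‖ξ‖ₑ * ‖𝓕 (g : E2 → ℂ) ξ‖ₑ ^ 2) := by
        refine lintegral_congr fun ξ => ?_
        simp_rw [← mul_assoc]
        rw [lintegral_mul_const', symbol_eq]
        simp
    _ = _ := by
        rw [lintegral_const_mul]
        fun_prop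

lemma integrable_wt : Integrable (fun h : E2 => (‖h‖ ^ 3)⁻¹ * min 1 (‖h‖ ^ (3 / 2 : ℝ))) := by
  refine (integrable_fun_norm_addHaar (volume : Measure E2)
    (f := fun r => (r ^ 3)⁻¹ * min 1 (r ^ (3 / 2 : ℝ)))).2 ?_
  rw [← Set.Ioc_union_Ioi_eq_Ioi zero_le_one]
  refine IntegrableOn.union ?_ ?_
  · have h1 : IntegrableOn (fun y : ℝ => y ^ (-1 / 2 : ℝ)) (Set.Ioc 0 1) :=
      (intervalIntegrable_iff_integrableOn_Ioc_of_le zero_le_one).1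
        (intervalIntegral.intervalIntegrable_rpow' (by norm_num))
    refine h1.congr_fun (fun y hy => ?_) measurableSet_Ioc
    have hy0 : 0 < y := hy.1
    have : y ^ (3 / 2 : ℝ) ≤ 1 := Real.rpow_le_one hy0.le hy.2 (by norm_num)
    simp only [finrank_euclideanSpace, Fintype.card_fin, smul_eq_mul, min_eq_right this]
    rw [show (3 / 2 : ℝ) = 2 + (-1 / 2) by norm_num, Real.rpow_add hy0]
    norm_cast
    field_simp
    norm_num
  · have h1 : IntegrableOn (fun y : ℝ => y ^ (-2 : ℝ)) (Set.Ioi 1) :=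
      integrableOn_Ioi_rpow_of_lt (by norm_num) one_pos
    refine h1.congr_fun (fun y hy => ?_) measurableSet_Ioi
    have hy1 : 1 < y := hy
    have hy0 : 0 < y := one_pos.trans hy1
    have : 1 ≤ y ^ (3 / 2 : ℝ) := Real.one_le_rpow hy1.le (by norm_num)
    simp only [finrank_euclideanSpace, Fintype.card_fin, smul_eq_mul, min_eq_left this]
    rw [Real.rpow_neg hy0.le]
    norm_cast
    field_simp
    norm_num

/-- The integral `∫ |h|⁻³ min(1, |h|^{3/2}) dh`. -/
def wt : ENNReal := ∫⁻ h : E2, kern h * ENNReal.ofReal (min 1 (‖h‖ ^ (3 / 2 : ℝ)))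

lemma wt_ne_top : wt ≠ ⊤ := by
  have h := integrable_wt.lintegral_lt_top
  refine ne_of_lt (lt_of_eq_of_lt (lintegral_congr fun h => ?_) h)
  rw [kern, ENNReal.ofReal_mul (by positivity)]

lemma norm_chi_sq_le (h : E2) :
    ‖chi h e0‖ ^ 2 ≤ 4 * Real.pi ^ 2 * min 1 (‖h‖ ^ (3 / 2 : ℝ)) := by
  have hpi : 1 ≤ Real.pi ^ 2 := by nlinarith [Real.pi_gt_three]
  have h2 : ‖chi h e0‖ ≤ 2 := by
    unfold chi
    refine (norm_sub_le _ _).trans ?_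
    rw [Circle.norm_coe, norm_one]; norm_num
  have h1 : ‖chi h e0‖ ≤ 2 * Real.pi * ‖h‖ := by
    unfold chi
    rw [Real.fourierChar_apply, mul_comm]
    refine (Real.norm_exp_I_mul_ofReal_sub_one_le).trans ?_
    rw [Real.norm_eq_abs, abs_mul, abs_of_pos Real.two_pi_pos]
    gcongr
    have := abs_real_inner_le_norm h e0
    rwa [norm_e0, mul_one] at this
  rcases le_total 1 ‖h‖ with hh | hh
  · rw [min_eq_left (Real.one_le_rpow hh (by norm_num))]
    nlinarith [norm_nonneg (chi h e0)]
  · rw [min_eq_right (Real.rpow_le_one (norm_nonneg _) hh (by norm_num))]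
    have h3 : ‖h‖ ^ 2 ≤ ‖h‖ ^ (3 / 2 : ℝ) := by
      rw [← Real.rpow_natCast]
      exact Real.rpow_le_rpow_of_exponent_ge' (norm_nonneg _) hh (by norm_num) (by norm_num)
    calc ‖chi h e0‖ ^ 2 ≤ (2 * Real.pi * ‖h‖) ^ 2 := by gcongr
      _ = 4 * Real.pi ^ 2 * ‖h‖ ^ 2 := by ring
      _ ≤ _ := by gcongr

lemma cst_ne_top : cst ≠ ⊤ := by
  have : cst ≤ ENNReal.ofReal (4 * Real.pi ^ 2) * wt := by
    unfold cst wt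
    rw [← lintegral_const_mul' _ _ ENNReal.ofReal_ne_top]
    refine lintegral_mono fun h => ?_
    rw [mul_left_comm]
    gcongr
    rw [← ENNReal.ofReal_mul (by positivity), ← ofReal_norm, ← ENNReal.ofReal_pow (norm_nonneg _)]
    exact ENNReal.ofReal_le_ofReal (norm_chi_sq_le h)
  exact ne_top_of_le_ne_top (ENNReal.mul_ne_top ENNReal.ofReal_ne_top wt_ne_top) this

lemma cst_ne_zero : cst ≠ 0 := by
  have hc : Continuous (fun h => chi h e0) := by
    have := continuous_chi
    fun_prop
  intro h0
  unfold cst at h0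
  rw [lintegral_eq_zero_iff (by have := measurable_kern; have := hc.measurable; fun_prop)] at h0
  have hopen : IsOpen ({h : E2 | h ≠ 0} ∩ {h | chi h e0 ≠ 0}) :=
    isOpen_ne.inter (isOpen_ne_fun hc continuous_const)
  have hne : ({h : E2 | h ≠ 0} ∩ {h | chi h e0 ≠ 0}).Nonempty := by
    refine ⟨(1 / 2 : ℝ) • e0, ?_, ?_⟩
    · have : e0 ≠ 0 := by rw [← norm_ne_zero_iff, norm_e0]; norm_num
      simpa using this
    · simp only [chi, Set.mem_ofPred_eq, inner_smul_left, real_inner_self_eq_norm_sq, norm_e0,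
        Real.fourierChar_apply]
      have : ((2 * Real.pi * ((1 / 2 : ℝ) * 1 ^ 2) : ℝ) : ℂ) * Complex.I = Real.pi * Complex.I := by
        push_cast; ring
      simp only [conj_trivial]
      rw [this, Complex.exp_pi_mul_I]
      norm_num
  refine (hopen.measure_pos volume hne).ne' (measure_mono_null ?_ (ae_iff.1 h0))
  rintro h ⟨h1, h2⟩
  have hpos : 0 < ‖h‖ := norm_pos_iff.2 h1
  have hchi : chi h e0 ≠ 0 := h2
  have hk : kern h ≠ 0 := by
    have : 0 < (‖h‖ ^ 3)⁻¹ := by positivity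
    exact (ENNReal.ofReal_pos.2 this).ne'
  simp [hk, hchi]

/-- `‖|∇|^{1/2} g‖_{L²}² = ∫ |ξ| |ĝ(ξ)|² dξ`, with finite right-hand side; this is Plancherel applied
to `|ξ|^{1/2} ĝ`, which is integrable and square integrable but not Schwartz. -/
lemma fm_facts (g : SchwartzMap E2 ℂ) :
    (∫ x : E2, ‖fm (fun ξ => ((Real.sqrt ‖ξ‖ : ℝ) : ℂ)) g x‖ ^ 2) =
      (∫⁻ ξ, ‖ξ‖ₑ * ‖𝓕 (g : E2 → ℂ) ξ‖ₑ ^ 2).toReal ∧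
    (∫⁻ ξ, ‖ξ‖ₑ * ‖𝓕 (g : E2 → ℂ) ξ‖ₑ ^ 2) ≠ ⊤ := by
  set u : E2 → ℂ := fun ξ => ((Real.sqrt ‖ξ‖ : ℝ) : ℂ) * 𝓕 (g : E2 → ℂ) ξ with hu
  have hF : Continuous (𝓕 (g : E2 → ℂ)) := by
    rw [← SchwartzMap.fourier_coe]; exact (𝓕 g).continuous
  have huc : Continuous u := by fun_prop
  have hint : Integrable (fun ξ => ‖ξ‖ * ‖𝓕 (g : E2 → ℂ) ξ‖) := by
    have := (𝓕 g).integrable_pow_mul volume 1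
    simp only [pow_one] at this
    exact this
  have hint0 : Integrable (𝓕 (g : E2 → ℂ)) := by
    rw [← SchwartzMap.fourier_coe]; exact (𝓕 g).integrable
  have h1 : Integrable u := by
    refine (hint.add hint0.norm).mono' huc.aestronglyMeasurable (.of_forall fun ξ => ?_)
    simp only [hu, norm_mul, Complex.norm_real, Real.norm_eq_abs, abs_of_nonneg (Real.sqrt_nonneg _),
      Pi.add_apply]
    have : Real.sqrt ‖ξ‖ ≤ ‖ξ‖ + 1 := by
      rw [Real.sqrt_le_left (by positivity)]
      nlinarith [norm_nonneg ξ]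
    nlinarith [norm_nonneg (𝓕 (g : E2 → ℂ) ξ)]
  have hsq : ∀ ξ, ‖u ξ‖ ^ 2 = ‖ξ‖ * ‖𝓕 (g : E2 → ℂ) ξ‖ ^ 2 := fun ξ => by
    simp only [hu, norm_mul, Complex.norm_real, Real.norm_eq_abs, abs_of_nonneg (Real.sqrt_nonneg _),
      mul_pow, Real.sq_sqrt (norm_nonneg ξ)]
  have h2 : MemLp u 2 := by
    rw [memLp_two_iff_integrable_sq_norm huc.aestronglyMeasurable]
    simp_rw [hsq]
    obtain ⟨M, hM⟩ : ∃ M, ∀ ξ, ‖𝓕 (g : E2 → ℂ) ξ‖ ≤ M := by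
      obtain ⟨M, hM⟩ := (𝓕 g).decay 0 0
      refine ⟨M, fun ξ => ?_⟩
      simpa [SchwartzMap.fourier_coe] using hM.2 ξ
    refine (hint.mul_const M).mono' (by fun_prop) (.of_forall fun ξ => ?_)
    rw [Real.norm_of_nonneg (by positivity), pow_two, ← mul_assoc]
    gcongr
    exact hM ξ
  have hsqe : ∀ ξ, ‖u ξ‖ₑ ^ 2 = ‖ξ‖ₑ * ‖𝓕 (g : E2 → ℂ) ξ‖ₑ ^ 2 := fun ξ => by
    simp_rw [← ofReal_norm]
    rw [← ENNReal.ofReal_pow (norm_nonneg _), ← ENNReal.ofReal_pow (norm_nonneg _),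
      ← ENNReal.ofReal_mul (norm_nonneg _), hsq]
  have hpl := lintegral_enorm_sq_fourier h1 h2
  have hcont : Continuous (𝓕 u) :=
    VectorFourier.fourierIntegral_continuous Real.continuous_fourierChar
      (by exact continuous_inner) h1
  have hfm : ∀ x, fm (fun ξ => ((Real.sqrt ‖ξ‖ : ℝ) : ℂ)) g x = 𝓕 u (-x) := fun x => by
    rw [fm, Real.fourierInv_eq_fourier_neg]
  constructor
  · simp_rw [hfm]
    rw [integral_neg_eq_self (fun x => ‖𝓕 u x‖ ^ 2) volume,
      integral_eq_lintegral_of_nonneg_ae (.of_forall fun x => by positivity) (by fun_prop)]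
    simp_rw [← hsqe]
    rw [← hpl]
    congr 1
    refine lintegral_congr fun x => ?_
    rw [← ofReal_norm, ← ENNReal.ofReal_pow (norm_nonneg _)]
  · simp_rw [← hsqe]
    have := h2.eLpNorm_lt_top
    have h3 := (eLpNorm_lt_top_iff_lintegral_rpow_enorm_lt_top (p := 2) (by norm_num)
      (by norm_num)).1 this
    simpa using h3.ne

/-! ### The Sobolev embedding of the homogeneous space of order `1/2` into `L⁴` -/

/-- The Cauchy–Schwarz inequality. -/
lemma lintegral_mul_le_sqrt {α : Type*} [MeasurableSpace α] (μ : Measure α) {F H : α → ENNReal}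
    (hF : AEMeasurable F μ) (hH : AEMeasurable H μ) :
    ∫⁻ a, F a * H a ∂μ ≤
      (∫⁻ a, F a ^ 2 ∂μ) ^ (1 / 2 : ℝ) * (∫⁻ a, H a ^ 2 ∂μ) ^ (1 / 2 : ℝ) := by
  have := ENNReal.lintegral_mul_le_Lp_mul_Lq μ Real.HolderConjugate.two_two hF hH
  simpa using this

/-- Hölder's inequality with exponents `3` and `3/2` against the constant function `1`. -/
lemma lintegral_le_cube {α : Type*} [MeasurableSpace α] (μ : Measure α) {F : α → ENNReal}
    (hF : AEMeasurable F μ) :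
    ∫⁻ a, F a ∂μ ≤ (∫⁻ a, F a ^ 3 ∂μ) ^ (1 / 3 : ℝ) * μ Set.univ ^ (2 / 3 : ℝ) := by
  have hpq : Real.HolderConjugate 3 (3 / 2) := by
    rw [Real.holderConjugate_iff]; norm_num
  have := ENNReal.lintegral_mul_le_Lp_mul_Lq μ hpq hF (aemeasurable_const (b := 1))
  simp only [Pi.mul_apply, mul_one, ENNReal.one_rpow, lintegral_const, one_mul] at this
  norm_num at this ⊢
  exact this

lemma two_mul_ofReal (a : ℝ) : 2 * ENNReal.ofReal a = ENNReal.ofReal (2 * a) := by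
  rw [ENNReal.ofReal_mul (by norm_num), ENNReal.ofReal_ofNat]

lemma enorm_add_sq_le (a b : ℂ) : ‖a + b‖ₑ ^ 2 ≤ 2 * ‖a‖ₑ ^ 2 + 2 * ‖b‖ₑ ^ 2 := by
  have h : ‖a + b‖ ^ 2 ≤ 2 * ‖a‖ ^ 2 + 2 * ‖b‖ ^ 2 := by
    have := norm_add_le a b
    nlinarith [sq_nonneg (‖a‖ - ‖b‖), norm_nonneg (a + b)]
  simp_rw [← ofReal_norm, ← ENNReal.ofReal_pow (norm_nonneg _)]
  rw [two_mul_ofReal, two_mul_ofReal, ← ENNReal.ofReal_add (by positivity) (by positivity)]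
  exact ENNReal.ofReal_le_ofReal h

lemma lintegral_enorm_pow_ne_top (g : SchwartzMap E2 ℂ) (n : ℕ) (hn : n ≠ 0) :
    ∫⁻ x, ‖g x‖ₑ ^ n ≠ ⊤ := by
  have h3 := (eLpNorm_lt_top_iff_lintegral_rpow_enorm_lt_top (p := n) (by simpa using hn)
      (by simp)).1 (g.memLp (n : ENNReal)).eLpNorm_lt_top
  simpa using h3.ne

/-- The area of the unit disc. -/
def vB : ENNReal := volume (Metric.ball (0 : E2) 1)

lemma vB_ne_top : vB ≠ ⊤ := measure_ball_lt_top.ne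

lemma vB_ne_zero : vB ≠ 0 := (Metric.measure_ball_pos _ _ one_pos).ne'

lemma volume_ball_E2 {r : ℝ} (hr : 0 < r) :
    volume (Metric.ball (0 : E2) r) = ENNReal.ofReal (r ^ 2) * vB := by
  rw [Measure.addHaar_ball _ _ hr.le]; simp [vB]

/-- The inner integral over `h` of the Gagliardo seminorm of `u`, as a function of `x`. -/
def loc (u : E2 → ℂ) (x : E2) : ENNReal := ∫⁻ h, kern h * ‖u (x + h) - u x‖ₑ ^ 2

lemma measurable_gagIntegrand (g : SchwartzMap E2 ℂ) :
    Measurable (fun p : E2 × E2 => kern p.1 * ‖g (p.2 + p.1) - g p.2‖ₑ ^ 2) := by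
  have h3 : Measurable (fun p : E2 × E2 => kern p.1) := measurable_kern.comp measurable_fst
  have := g.continuous
  fun_prop

lemma gag_eq_lintegral_loc (g : SchwartzMap E2 ℂ) : gag g = ∫⁻ x, loc g x := by
  unfold gag loc
  rw [lintegral_lintegral_swap]
  · refine lintegral_congr fun h => ?_
    rw [lintegral_const_mul]
    have := g.continuous
    fun_prop
  · exact ((measurable_gagIntegrand g).comp measurable_swap).aemeasurable

lemma measurable_loc (g : SchwartzMap E2 ℂ) : Measurable (loc g) :=
  ((measurable_gagIntegrand g).comp measurable_swap).lintegral_prod_right'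

/-- `|g x|² ≤ 2 |g (x + h) - g x|² + 2 |g (x + h)|²`, integrated over the ball `|h| < r`. On this ball
`1 ≤ r³ kern h` off the origin, and the last term is bounded by Cauchy–Schwarz. -/
lemma ball_avg (g : SchwartzMap E2 ℂ) (x : E2) {r : ℝ} (hr : 0 < r) :
    ‖g x‖ₑ ^ 2 * (ENNReal.ofReal (r ^ 2) * vB) ≤
      2 * (ENNReal.ofReal (r ^ 3) * loc g x) +
      2 * ((∫⁻ y, ‖g y‖ₑ ^ 4) ^ (1 / 2 : ℝ) * (ENNReal.ofReal (r ^ 2) * vB) ^ (1 / 2 : ℝ)) := by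
  have hg := g.continuous
  have hgm := g.continuous.measurable
  set B := Metric.ball (0 : E2) r with hB
  have hBm : MeasurableSet B := Metric.isOpen_ball.measurableSet
  have h1 : ∫⁻ h in B, ‖g (x + h) - g x‖ₑ ^ 2 ≤ ENNReal.ofReal (r ^ 3) * loc g x := by
    unfold loc
    rw [← lintegral_const_mul' _ _ ENNReal.ofReal_ne_top]
    refine (setLIntegral_mono' hBm fun h hh => ?_).trans (setLIntegral_le_lintegral B _)
    rcases eq_or_ne h 0 with rfl | h0
    · simp
    have hpos : 0 < ‖h‖ := norm_pos_iff.2 h0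
    rw [← mul_assoc]
    refine le_mul_of_one_le_left (zero_le) ?_
    rw [kern, ← ENNReal.ofReal_mul (by positivity), ENNReal.one_le_ofReal,
      ← div_eq_mul_inv, one_le_div (by positivity)]
    have : ‖h‖ < r := by simpa [hB] using hh
    gcongr
  have h2 : ∫⁻ h in B, ‖g (x + h)‖ₑ ^ 2 ≤
      (∫⁻ y, ‖g y‖ₑ ^ 4) ^ (1 / 2 : ℝ) * (ENNReal.ofReal (r ^ 2) * vB) ^ (1 / 2 : ℝ) := by
    have := lintegral_mul_le_sqrt (volume.restrict B) (F := fun h => ‖g (x + h)‖ₑ ^ 2)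
      (H := fun _ => 1) (by fun_prop) (by fun_prop)
    simp only [mul_one, one_pow, lintegral_const, Measure.restrict_apply_univ, one_mul,
      ← pow_mul, Nat.reduceMul] at this
    refine this.trans ?_
    rw [hB, volume_ball_E2 hr]
    refine mul_le_mul_left (ENNReal.rpow_le_rpow ?_ (by norm_num)) _
    refine (setLIntegral_le_lintegral _ _).trans_eq ?_
    exact lintegral_add_left_eq_self (fun y => ‖g y‖ₑ ^ 4) x
  calc ‖g x‖ₑ ^ 2 * (ENNReal.ofReal (r ^ 2) * vB) = ∫⁻ h in B, ‖g x‖ₑ ^ 2 := by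
        rw [setLIntegral_const, hB, volume_ball_E2 hr]
    _ ≤ ∫⁻ h in B, (2 * ‖g (x + h) - g x‖ₑ ^ 2 + 2 * ‖g (x + h)‖ₑ ^ 2) := by
        refine lintegral_mono fun h => ?_
        have := enorm_add_sq_le (g x - g (x + h)) (g (x + h))
        rw [sub_add_cancel, enorm_sub_rev] at this
        exact this
    _ = 2 * (∫⁻ h in B, ‖g (x + h) - g x‖ₑ ^ 2) + 2 * (∫⁻ h in B, ‖g (x + h)‖ₑ ^ 2) := by
        rw [lintegral_add_left (by fun_prop), lintegral_const_mul _ (by fun_prop),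
          lintegral_const_mul _ (by fun_prop)]
    _ ≤ _ := by gcongr

/-- The constant of the Sobolev embedding; its value comes out of the discriminant in
`pointwise_sobolev`. -/
def sobC : ℝ := 16 * Real.sqrt vB.toReal / vB.toReal ^ 2

/-- Optimising `ball_avg` over the radius `r`: an inequality `b r ≤ a r² + c` valid for all `r > 0`
forces `b² ≤ 4 a c`. -/
lemma pointwise_sobolev (g : SchwartzMap E2 ℂ) (x : E2) (hx : loc g x ≠ ⊤) :
    ‖g x‖ₑ ^ 4 ≤ ENNReal.ofReal sobC * (∫⁻ y, ‖g y‖ₑ ^ 4) ^ (1 / 2 : ℝ) * loc g x := by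
  have hM : (∫⁻ y, ‖g y‖ₑ ^ 4) ^ (1 / 2 : ℝ) ≠ ⊤ :=
    ENNReal.rpow_ne_top_of_nonneg (by norm_num) (lintegral_enorm_pow_ne_top g 4 (by norm_num))
  have havg := fun r hr => ball_avg g x (r := r) hr
  set M := (∫⁻ y, ‖g y‖ₑ ^ 4) ^ (1 / 2 : ℝ) with hMdef
  obtain ⟨m, hm0, hm⟩ : ∃ m : ℝ, 0 ≤ m ∧ M = ENNReal.ofReal m :=
    ⟨M.toReal, ENNReal.toReal_nonneg, (ENNReal.ofReal_toReal hM).symm⟩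
  obtain ⟨d, hd0, hd⟩ : ∃ d : ℝ, 0 ≤ d ∧ loc g x = ENNReal.ofReal d :=
    ⟨(loc g x).toReal, ENNReal.toReal_nonneg, (ENNReal.ofReal_toReal hx).symm⟩
  have hv := (ENNReal.ofReal_toReal vB_ne_top).symm
  have hv0 : 0 < vB.toReal := ENNReal.toReal_pos vB_ne_zero vB_ne_top
  unfold sobC
  set v := vB.toReal
  have hsv : Real.sqrt v ^ 2 = v := Real.sq_sqrt hv0.le
  have hreal : ∀ r : ℝ, 0 < r → ‖g x‖ ^ 2 * (r ^ 2 * v) ≤ 2 * (r ^ 3 * d) + 2 * (m * (r * √v)) := by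
    intro r hr
    have h := havg r hr
    rw [hm, hd, hv, ← ofReal_norm, ← ENNReal.ofReal_pow (norm_nonneg _),
      ← ENNReal.ofReal_mul (by positivity), ENNReal.ofReal_rpow_of_nonneg (by positivity)
      (by norm_num), ← ENNReal.ofReal_mul (by positivity),
      ← ENNReal.ofReal_mul (by positivity), ← ENNReal.ofReal_mul (by positivity),
      two_mul_ofReal, two_mul_ofReal, ← ENNReal.ofReal_add (by positivity) (by positivity),
      ENNReal.ofReal_le_ofReal_iff (by positivity), ← Real.sqrt_eq_rpow,
      Real.sqrt_mul (by positivity), Real.sqrt_sq hr.le] at h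
    exact h
  have hdisc : discrim (2 * d) (-(‖g x‖ ^ 2 * v)) (2 * (m * √v)) ≤ 0 := by
    refine discrim_le_zero fun r => ?_
    rcases le_or_gt r 0 with hr | hr
    · have h1 : 0 ≤ ‖g x‖ ^ 2 * v * (-r) := by
        have : 0 ≤ -r := by linarith
        positivity
      have h2 : 0 ≤ 2 * d * (r * r) := by have := mul_self_nonneg r; positivity
      have h3 : 0 ≤ 2 * (m * √v) := by positivity
      nlinarith
    · have h := hreal r hr
      have : 0 ≤ r * (2 * d * (r * r) + -(‖g x‖ ^ 2 * v) * r + 2 * (m * √v)) := by nlinarith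
      exact nonneg_of_mul_nonneg_right this hr
  unfold discrim at hdisc
  have hfin : ‖g x‖ ^ 4 ≤ 16 * √v / v ^ 2 * m * d := by
    rw [div_mul_eq_mul_div, div_mul_eq_mul_div, le_div_iff₀ (by positivity)]
    nlinarith
  rw [hm, hd, ← ofReal_norm, ← ENNReal.ofReal_pow (norm_nonneg _),
    ← ENNReal.ofReal_mul (by positivity), ← ENNReal.ofReal_mul (by positivity)]
  exact ENNReal.ofReal_le_ofReal hfin

/-- The Sobolev embedding `‖g‖_{L⁴}² ≲ gag g`. Integrating `pointwise_sobolev` gives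
`‖g‖_{L⁴}⁴ ≲ ‖g‖_{L⁴}² gag g`, and `‖g‖_{L⁴}` is finite. -/
lemma sobolev (g : SchwartzMap E2 ℂ) :
    (∫⁻ y, ‖g y‖ₑ ^ 4) ^ (1 / 2 : ℝ) ≤ ENNReal.ofReal sobC * gag g := by
  have hM0 : ∫⁻ y, ‖g y‖ₑ ^ 4 ≠ ⊤ := lintegral_enorm_pow_ne_top g 4 (by norm_num)
  have hM : (∫⁻ y, ‖g y‖ₑ ^ 4) ^ (1 / 2 : ℝ) ≠ ⊤ :=
    ENNReal.rpow_ne_top_of_nonneg (by norm_num) hM0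
  have hsob : 0 < sobC := by
    have hv0 : 0 < vB.toReal := ENNReal.toReal_pos vB_ne_zero vB_ne_top
    unfold sobC
    positivity
  rcases eq_or_ne (gag g) ⊤ with hG | hG
  · rw [hG, ENNReal.mul_top (ENNReal.ofReal_pos.2 hsob).ne']
    exact le_top
  rw [gag_eq_lintegral_loc] at hG ⊢
  have hae := ae_lt_top (measurable_loc g) hG
  have h1 : ∫⁻ y, ‖g y‖ₑ ^ 4 ≤
      ENNReal.ofReal sobC * (∫⁻ y, ‖g y‖ₑ ^ 4) ^ (1 / 2 : ℝ) * ∫⁻ x, loc g x := by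
    rw [← lintegral_const_mul _ (measurable_loc g)]
    refine lintegral_mono_ae ?_
    filter_upwards [hae] with x hx using pointwise_sobolev g x hx.ne
  set M := (∫⁻ y, ‖g y‖ₑ ^ 4) ^ (1 / 2 : ℝ) with hMdef
  have hsq : ∫⁻ y, ‖g y‖ₑ ^ 4 = M * M := by
    rw [hMdef, ← ENNReal.rpow_add_of_nonneg _ _ (by norm_num) (by norm_num)]
    norm_num
  rcases eq_or_ne M 0 with h0 | h0
  · rw [h0]; exact zero_le
  rw [hsq] at h1
  refine (ENNReal.mul_le_mul_iff_right h0 hM).1 (h1.trans_eq ?_)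
  ring

/-! ### Estimates of `f` and its differences by the `W^{1,3}` norm -/

lemma continuous_fderiv_schwartz (f : SchwartzMap E2 ℂ) : Continuous (fderiv ℝ (f : E2 → ℂ)) :=
  (f.smooth 1).continuous_fderiv one_ne_zero

/-- The fundamental theorem of calculus along the segment from `x` to `x + z`. -/
lemma enorm_sub_le_lintegral (f : SchwartzMap E2 ℂ) (x z : E2) :
    ‖f (x + z) - f x‖ₑ ≤
      ‖z‖ₑ * ∫⁻ t in Set.Ioc (0 : ℝ) 1, ‖fderiv ℝ (f : E2 → ℂ) (x + t • z)‖ₑ := by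
  have hc := continuous_fderiv_schwartz f
  have hd : ∀ t ∈ Set.uIcc (0 : ℝ) 1,
      HasDerivAt (fun t : ℝ => f (x + t • z)) (fderiv ℝ (f : E2 → ℂ) (x + t • z) z) t := by
    intro t _
    have h1 : HasDerivAt (fun t : ℝ => x + t • z) z t := by
      simpa using ((hasDerivAt_id t).smul_const z).const_add x
    exact (f.differentiableAt.hasFDerivAt).comp_hasDerivAt t h1
  have h := intervalIntegral.integral_eq_sub_of_hasDerivAt hd
    (Continuous.intervalIntegrable (by fun_prop) _ _)
  simp only [one_smul, zero_smul, add_zero] at h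
  rw [← h, intervalIntegral.integral_of_le zero_le_one]
  refine (enorm_integral_le_lintegral_enorm _).trans ?_
  rw [← lintegral_const_mul' _ _ enorm_ne_top]
  refine lintegral_mono fun t => ?_
  rw [mul_comm]
  exact ContinuousLinearMap.le_opENorm _ _

/-- The norm `‖f‖_{L³}`, as an extended nonnegative real. -/
def n3 (f : SchwartzMap E2 ℂ) : ENNReal := (∫⁻ x, ‖f x‖ₑ ^ 3) ^ (1 / 3 : ℝ)

/-- The norm `‖∇f‖_{L³}`, as an extended nonnegative real. -/
def d3 (f : SchwartzMap E2 ℂ) : ENNReal :=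
  (∫⁻ x, ‖fderiv ℝ (f : E2 → ℂ) x‖ₑ ^ 3) ^ (1 / 3 : ℝ)

lemma cbrt_pow (a : ENNReal) : (a ^ (1 / 3 : ℝ)) ^ 3 = a := by
  rw [← ENNReal.rpow_natCast, ← ENNReal.rpow_mul]; norm_num

/-- The integral of `t ^ (-2/3)` over `(0, 1]`. -/
def tC : ENNReal := ∫⁻ t in Set.Ioc (0 : ℝ) 1, ENNReal.ofReal ((t ^ 2)⁻¹) ^ (1 / 3 : ℝ)

lemma tC_ne_top : tC ≠ ⊤ := by
  have h1 : IntegrableOn (fun y : ℝ => y ^ (-2 / 3 : ℝ)) (Set.Ioc 0 1) :=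
    (intervalIntegrable_iff_integrableOn_Ioc_of_le zero_le_one).1
      (intervalIntegral.intervalIntegrable_rpow' (by norm_num))
  refine ne_of_lt (lt_of_eq_of_lt (setLIntegral_congr_fun measurableSet_Ioc fun t ht => ?_)
    h1.lintegral_lt_top)
  have ht0 : 0 < t := ht.1
  rw [ENNReal.ofReal_rpow_of_nonneg (by positivity) (by norm_num), ← Real.rpow_natCast,
    ← Real.rpow_neg ht0.le, ← Real.rpow_mul ht0.le]
  norm_num

/-- The constant of the embedding `W^{1,3} ⊂ L^∞`. -/
def supC : ENNReal := vB⁻¹ * (vB ^ (2 / 3 : ℝ) * (1 + tC))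

lemma supC_ne_top : supC ≠ ⊤ := by
  unfold supC
  refine ENNReal.mul_ne_top (ENNReal.inv_ne_top.2 vB_ne_zero) (ENNReal.mul_ne_top ?_ ?_)
  · exact ENNReal.rpow_ne_top_of_nonneg (by norm_num) vB_ne_top
  · exact ENNReal.add_ne_top.2 ⟨by simp, tC_ne_top⟩

/-- The Morrey embedding `W^{1,3} ⊂ L^∞`. Averaging `f x = f (x + z) - (f (x + z) - f x)` over the
unit ball and writing the difference as `∫₀¹ ∇f (x + t z) · z dt`, Hölder's inequality in `z` leaves
`‖∇f (x + t ·)‖_{L³} = t ^ (-2/3) ‖∇f‖_{L³}`, which is integrable in `t`. -/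
lemma sup_bound (f : SchwartzMap E2 ℂ) (x : E2) : ‖f x‖ₑ ≤ supC * (n3 f + d3 f) := by
  have hf := f.continuous
  have hfm := f.continuous.measurable
  have hc := continuous_fderiv_schwartz f
  have hcm := hc.measurable
  set B := Metric.ball (0 : E2) 1 with hB
  have hBm : MeasurableSet B := Metric.isOpen_ball.measurableSet
  have hvB : volume B = vB := rfl
  have h1 : ∫⁻ z in B, ‖f (x + z)‖ₑ ≤ n3 f * vB ^ (2 / 3 : ℝ) := by
    have := lintegral_le_cube (volume.restrict B) (F := fun z => ‖f (x + z)‖ₑ) (by fun_prop)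
    rw [Measure.restrict_apply_univ, hvB] at this
    refine this.trans (mul_le_mul_left (ENNReal.rpow_le_rpow ?_ (by norm_num)) _)
    refine (setLIntegral_le_lintegral _ _).trans_eq ?_
    exact lintegral_add_left_eq_self (fun y => ‖f y‖ₑ ^ 3) x
  have h2 : ∀ t ∈ Set.Ioc (0 : ℝ) 1, ∫⁻ z in B, ‖fderiv ℝ (f : E2 → ℂ) (x + t • z)‖ₑ ≤
      ENNReal.ofReal ((t ^ 2)⁻¹) ^ (1 / 3 : ℝ) * (d3 f * vB ^ (2 / 3 : ℝ)) := by
    intro t ht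
    have := lintegral_le_cube (volume.restrict B)
      (F := fun z => ‖fderiv ℝ (f : E2 → ℂ) (x + t • z)‖ₑ) (by fun_prop)
    rw [Measure.restrict_apply_univ, hvB] at this
    rw [← mul_assoc]
    refine this.trans (mul_le_mul_left ?_ _)
    rw [d3, ← ENNReal.mul_rpow_of_nonneg _ _ (by norm_num)]
    refine ENNReal.rpow_le_rpow ?_ (by norm_num)
    refine (setLIntegral_le_lintegral _ _).trans_eq ?_
    rw [lintegral_comp_smul_E2 (fun z => ‖fderiv ℝ (f : E2 → ℂ) (x + z)‖ₑ ^ 3) ht.1]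
    congr 1
    exact lintegral_add_left_eq_self (fun y => ‖fderiv ℝ (f : E2 → ℂ) y‖ₑ ^ 3) x
  have h3 : ∫⁻ z in B, ‖f (x + z) - f x‖ₑ ≤ tC * (d3 f * vB ^ (2 / 3 : ℝ)) := by
    calc ∫⁻ z in B, ‖f (x + z) - f x‖ₑ
        ≤ ∫⁻ z in B, ∫⁻ t in Set.Ioc (0 : ℝ) 1, ‖fderiv ℝ (f : E2 → ℂ) (x + t • z)‖ₑ := by
          refine setLIntegral_mono' hBm fun z hz => ?_
          refine (enorm_sub_le_lintegral f x z).trans ?_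
          refine mul_le_of_le_one_left zero_le ?_
          have : ‖z‖ < 1 := by simpa [hB] using hz
          rw [← ofReal_norm]
          exact ENNReal.ofReal_le_one.2 this.le
      _ = ∫⁻ t in Set.Ioc (0 : ℝ) 1, ∫⁻ z in B, ‖fderiv ℝ (f : E2 → ℂ) (x + t • z)‖ₑ := by
          rw [lintegral_lintegral_swap]
          refine Measurable.aemeasurable ?_
          simp only [Function.uncurry_def]
          fun_prop
      _ ≤ ∫⁻ t in Set.Ioc (0 : ℝ) 1,
            ENNReal.ofReal ((t ^ 2)⁻¹) ^ (1 / 3 : ℝ) * (d3 f * vB ^ (2 / 3 : ℝ)) :=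
          setLIntegral_mono' measurableSet_Ioc h2
      _ = _ := by
          rw [lintegral_mul_const _ (by fun_prop), tC]
  have h4 : ‖f x‖ₑ * vB ≤ vB ^ (2 / 3 : ℝ) * (1 + tC) * (n3 f + d3 f) := by
    calc ‖f x‖ₑ * vB = ∫⁻ z in B, ‖f x‖ₑ := by rw [setLIntegral_const, hvB]
      _ ≤ ∫⁻ z in B, (‖f (x + z) - f x‖ₑ + ‖f (x + z)‖ₑ) := by
          refine lintegral_mono fun z => ?_
          have := enorm_add_le (f x - f (x + z)) (f (x + z))
          rw [sub_add_cancel, enorm_sub_rev] at this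
          exact this
      _ = (∫⁻ z in B, ‖f (x + z) - f x‖ₑ) + ∫⁻ z in B, ‖f (x + z)‖ₑ := by
          rw [lintegral_add_left (by fun_prop)]
      _ ≤ tC * (d3 f * vB ^ (2 / 3 : ℝ)) + n3 f * vB ^ (2 / 3 : ℝ) := add_le_add h3 h1
      _ ≤ (tC * (d3 f * vB ^ (2 / 3 : ℝ)) + n3 f * vB ^ (2 / 3 : ℝ)) +
          (tC * (n3 f * vB ^ (2 / 3 : ℝ)) + d3 f * vB ^ (2 / 3 : ℝ)) := le_self_add
      _ = _ := by ring
  calc ‖f x‖ₑ = vB⁻¹ * (‖f x‖ₑ * vB) := by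
        rw [mul_comm, mul_assoc, ENNReal.mul_inv_cancel vB_ne_zero vB_ne_top, mul_one]
    _ ≤ vB⁻¹ * (vB ^ (2 / 3 : ℝ) * (1 + tC) * (n3 f + d3 f)) := by gcongr
    _ = _ := by rw [supC]; ring

lemma enorm_sub_cube_le (a b : ℂ) : ‖a - b‖ₑ ^ 3 ≤ 4 * ‖a‖ₑ ^ 3 + 4 * ‖b‖ₑ ^ 3 := by
  have h : ‖a - b‖ ^ 3 ≤ 4 * ‖a‖ ^ 3 + 4 * ‖b‖ ^ 3 := by
    have h1 := norm_sub_le a b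
    have ha := norm_nonneg a
    have hb := norm_nonneg b
    calc ‖a - b‖ ^ 3 ≤ (‖a‖ + ‖b‖) ^ 3 := by gcongr
      _ ≤ _ := by nlinarith [mul_nonneg (add_nonneg ha hb) (sq_nonneg (‖a‖ - ‖b‖))]
  simp_rw [← ofReal_norm, ← ENNReal.ofReal_pow (norm_nonneg _)]
  have h4 : ∀ c : ℝ, 4 * ENNReal.ofReal c = ENNReal.ofReal (4 * c) := fun c => by
    rw [ENNReal.ofReal_mul (by norm_num), ENNReal.ofReal_ofNat]
  rw [h4, h4, ← ENNReal.ofReal_add (by positivity) (by positivity)]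
  exact ENNReal.ofReal_le_ofReal h

lemma diff_cube_le_norm (f : SchwartzMap E2 ℂ) (h : E2) :
    ∫⁻ x, ‖f (x + h) - f x‖ₑ ^ 3 ≤ 8 * n3 f ^ 3 := by
  have hfm := f.continuous.measurable
  rw [n3, cbrt_pow]
  calc ∫⁻ x, ‖f (x + h) - f x‖ₑ ^ 3 ≤ ∫⁻ x, (4 * ‖f (x + h)‖ₑ ^ 3 + 4 * ‖f x‖ₑ ^ 3) :=
        lintegral_mono fun x => enorm_sub_cube_le _ _
    _ = 4 * (∫⁻ x, ‖f (x + h)‖ₑ ^ 3) + 4 * ∫⁻ x, ‖f x‖ₑ ^ 3 := by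
        rw [lintegral_add_left (by fun_prop), lintegral_const_mul _ (by fun_prop),
          lintegral_const_mul _ (by fun_prop)]
    _ = _ := by
        rw [lintegral_add_right_eq_self (fun y => ‖f y‖ₑ ^ 3) h]
        ring

lemma diff_cube_le_deriv (f : SchwartzMap E2 ℂ) (h : E2) :
    ∫⁻ x, ‖f (x + h) - f x‖ₑ ^ 3 ≤ ‖h‖ₑ ^ 3 * d3 f ^ 3 := by
  have hc := continuous_fderiv_schwartz f
  have hcm := hc.measurable
  rw [d3, cbrt_pow]
  calc ∫⁻ x, ‖f (x + h) - f x‖ₑ ^ 3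
      ≤ ∫⁻ x, ‖h‖ₑ ^ 3 *
          ∫⁻ t in Set.Ioc (0 : ℝ) 1, ‖fderiv ℝ (f : E2 → ℂ) (x + t • h)‖ₑ ^ 3 := by
        refine lintegral_mono fun x => ?_
        refine (pow_le_pow_left' (enorm_sub_le_lintegral f x h) 3).trans ?_
        rw [mul_pow]
        gcongr
        have := lintegral_le_cube (volume.restrict (Set.Ioc (0 : ℝ) 1))
          (F := fun t => ‖fderiv ℝ (f : E2 → ℂ) (x + t • h)‖ₑ) (by fun_prop)
        simp only [Measure.restrict_apply_univ, Real.volume_Ioc, sub_zero, ENNReal.ofReal_one,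
          ENNReal.one_rpow, mul_one] at this
        exact (pow_le_pow_left' this 3).trans_eq (cbrt_pow _)
    _ = ‖h‖ₑ ^ 3 * ∫⁻ x, ∫⁻ t in Set.Ioc (0 : ℝ) 1,
          ‖fderiv ℝ (f : E2 → ℂ) (x + t • h)‖ₑ ^ 3 :=
        lintegral_const_mul' _ _ (by simp)
    _ = ‖h‖ₑ ^ 3 * ∫⁻ t in Set.Ioc (0 : ℝ) 1, ∫⁻ x,
          ‖fderiv ℝ (f : E2 → ℂ) (x + t • h)‖ₑ ^ 3 := by
        rw [lintegral_lintegral_swap]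
        refine Measurable.aemeasurable ?_
        simp only [Function.uncurry_def]
        fun_prop
    _ = _ := by
        congr 1
        have ht : ∀ t : ℝ, ∫⁻ x, ‖fderiv ℝ (f : E2 → ℂ) (x + t • h)‖ₑ ^ 3 =
            ∫⁻ x, ‖fderiv ℝ (f : E2 → ℂ) x‖ₑ ^ 3 := fun t =>
          lintegral_add_right_eq_self (fun y => ‖fderiv ℝ (f : E2 → ℂ) y‖ₑ ^ 3) (t • h)
        simp [ht]

/-- `‖f(· + h) - f‖_{L⁴}² ≲ min(1, |h|^{3/2}) ‖f‖_{W^{1,3}}²`, from `‖u‖_4⁴ ≤ ‖u‖_∞ ‖u‖_3³`, the sup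
bound, and the two bounds for the `L³` norm of the difference (by `‖f‖_{L³}` for large `h`, by
`|h| ‖∇f‖_{L³}` for small `h`). -/
lemma diff_four_le (f : SchwartzMap E2 ℂ) (h : E2) :
    (∫⁻ x, ‖f (x + h) - f x‖ₑ ^ 4) ^ (1 / 2 : ℝ) ≤
      4 * supC ^ (1 / 2 : ℝ) * (n3 f + d3 f) ^ 2 * ENNReal.ofReal (min 1 (‖h‖ ^ (3 / 2 : ℝ))) := by
  have hfm := f.continuous.measurable
  set N := n3 f + d3 f with hN
  set w := ENNReal.ofReal (min 1 (‖h‖ ^ (3 / 2 : ℝ))) with hw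
  have h3 : ∫⁻ x, ‖f (x + h) - f x‖ₑ ^ 3 ≤ 8 * w ^ 2 * N ^ 3 := by
    rcases le_total 1 ‖h‖ with hh | hh
    · rw [min_eq_left (Real.one_le_rpow hh (by norm_num)), ENNReal.ofReal_one] at hw
      rw [hw, one_pow, mul_one]
      refine (diff_cube_le_norm f h).trans ?_
      gcongr
      exact le_self_add
    · rw [min_eq_right (Real.rpow_le_one (norm_nonneg _) hh (by norm_num))] at hw
      have hw2 : w ^ 2 = ‖h‖ₑ ^ 3 := by
        rw [hw, ← ofReal_norm, ← ENNReal.ofReal_pow (by positivity),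
          ← ENNReal.ofReal_pow (norm_nonneg _), ← Real.rpow_natCast, ← Real.rpow_mul (norm_nonneg _)]
        norm_num
      rw [hw2]
      refine (diff_cube_le_deriv f h).trans ?_
      refine mul_le_mul' ?_ (pow_le_pow_left' le_add_self 3)
      exact le_mul_of_one_le_left zero_le (by norm_num)
  have h4 : ∫⁻ x, ‖f (x + h) - f x‖ₑ ^ 4 ≤ (4 * supC ^ (1 / 2 : ℝ) * N ^ 2 * w) ^ 2 := by
    calc ∫⁻ x, ‖f (x + h) - f x‖ₑ ^ 4
        ≤ ∫⁻ x, 2 * (supC * N) * ‖f (x + h) - f x‖ₑ ^ 3 := by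
          refine lintegral_mono fun x => ?_
          rw [pow_succ' _ 3, two_mul]
          gcongr
          exact (enorm_sub_le).trans (add_le_add (sup_bound f _) (sup_bound f _))
      _ = 2 * (supC * N) * ∫⁻ x, ‖f (x + h) - f x‖ₑ ^ 3 :=
          lintegral_const_mul _ (by fun_prop)
      _ ≤ 2 * (supC * N) * (8 * w ^ 2 * N ^ 3) := by gcongr
      _ = 4 ^ 2 * supC * N ^ 4 * w ^ 2 := by ring
      _ = _ := by
          have : supC = (supC ^ (1 / 2 : ℝ)) ^ 2 := by
            rw [← ENNReal.rpow_natCast, ← ENNReal.rpow_mul]; norm_num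
          conv_lhs => rw [this]
          ring
  refine (ENNReal.rpow_le_rpow h4 (by norm_num)).trans_eq ?_
  rw [← ENNReal.rpow_natCast, ← ENNReal.rpow_mul]
  norm_num

/-! ### The product estimate -/

/-- The constant of the product estimate for the squared Gagliardo seminorms. -/
def prodC : ENNReal := 2 * supC ^ 2 + 2 * (ENNReal.ofReal sobC * (4 * supC ^ (1 / 2 : ℝ)) * wt)

lemma prodC_ne_top : prodC ≠ ⊤ := by
  unfold prodC
  have h1 := supC_ne_top
  have h2 := wt_ne_top
  have h3 : supC ^ (1 / 2 : ℝ) ≠ ⊤ := ENNReal.rpow_ne_top_of_nonneg (by norm_num) h1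
  finiteness

/-- The product estimate for the Gagliardo seminorm, from
`(fg)(x+h) - (fg)(x) = f(x+h) (g(x+h) - g(x)) + g(x) (f(x+h) - f(x))`: the first term is controlled by
`‖f‖_∞`, the second by Cauchy–Schwarz in `x`, with `‖g‖_{L⁴}` bounded by `sobolev`. -/
lemma gag_mul_le (f g : SchwartzMap E2 ℂ) :
    gag (fun x => f x * g x) ≤ prodC * (n3 f + d3 f) ^ 2 * gag g := by
  have hfm := f.continuous.measurable
  have hgm := g.continuous.measurable
  have hkm := measurable_kern
  set N := n3 f + d3 f with hN
  have hpt : ∀ h, ∫⁻ x, ‖f (x + h) * g (x + h) - f x * g x‖ₑ ^ 2 ≤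
      2 * (supC * N) ^ 2 * (∫⁻ x, ‖g (x + h) - g x‖ₑ ^ 2) +
      2 * (ENNReal.ofReal sobC * gag g *
        (4 * supC ^ (1 / 2 : ℝ) * N ^ 2 * ENNReal.ofReal (min 1 (‖h‖ ^ (3 / 2 : ℝ))))) := by
    intro h
    calc ∫⁻ x, ‖f (x + h) * g (x + h) - f x * g x‖ₑ ^ 2
        ≤ ∫⁻ x, (2 * (supC * N) ^ 2 * ‖g (x + h) - g x‖ₑ ^ 2 +
            2 * (‖g x‖ₑ ^ 2 * ‖f (x + h) - f x‖ₑ ^ 2)) := by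
          refine lintegral_mono fun x => ?_
          have h1 := enorm_add_sq_le (f (x + h) * (g (x + h) - g x)) (g x * (f (x + h) - f x))
          rw [show f (x + h) * (g (x + h) - g x) + g x * (f (x + h) - f x) =
            f (x + h) * g (x + h) - f x * g x by ring, enorm_mul, enorm_mul, mul_pow, mul_pow,
            ← mul_assoc] at h1
          refine h1.trans ?_
          gcongr
          exact sup_bound f _
      _ = 2 * (supC * N) ^ 2 * (∫⁻ x, ‖g (x + h) - g x‖ₑ ^ 2) +
            2 * ∫⁻ x, ‖g x‖ₑ ^ 2 * ‖f (x + h) - f x‖ₑ ^ 2 := by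
          rw [lintegral_add_left (by fun_prop), lintegral_const_mul _ (by fun_prop),
            lintegral_const_mul _ (by fun_prop)]
      _ ≤ _ := by
          gcongr
          have := lintegral_mul_le_sqrt volume (F := fun x => ‖g x‖ₑ ^ 2)
            (H := fun x => ‖f (x + h) - f x‖ₑ ^ 2) (by fun_prop) (by fun_prop)
          simp only [← pow_mul, Nat.reduceMul] at this
          exact this.trans (mul_le_mul' (sobolev g) (diff_four_le f h))
  have hsup := supC_ne_top
  have hinner : Measurable (fun h => ∫⁻ x, ‖g (x + h) - g x‖ₑ ^ 2) := by
    have : Measurable (fun p : E2 × E2 => ‖g (p.2 + p.1) - g p.2‖ₑ ^ 2) := by fun_prop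
    exact this.lintegral_prod_right'
  calc gag (fun x => f x * g x)
      ≤ ∫⁻ h, (2 * (supC * N) ^ 2 * (kern h * ∫⁻ x, ‖g (x + h) - g x‖ₑ ^ 2) +
          2 * (ENNReal.ofReal sobC * gag g * (4 * supC ^ (1 / 2 : ℝ) * N ^ 2)) *
            (kern h * ENNReal.ofReal (min 1 (‖h‖ ^ (3 / 2 : ℝ))))) := by
        refine lintegral_mono fun h => ?_
        refine (mul_le_mul_right (hpt h) (kern h)).trans_eq ?_
        ring
    _ = 2 * (supC * N) ^ 2 * gag g +
          2 * (ENNReal.ofReal sobC * gag g * (4 * supC ^ (1 / 2 : ℝ) * N ^ 2)) * wt := by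
        rw [lintegral_add_left (by fun_prop), lintegral_const_mul _ (by fun_prop),
          lintegral_const_mul _ (by fun_prop)]
        rfl
    _ = _ := by rw [prodC]; ring

/-- Conversion of `n3` to the Bochner integral, whose value is not a junk value. -/
lemma n3_facts (f : SchwartzMap E2 ℂ) :
    (∫ x : E2, ‖f x‖ ^ 3) ^ ((1 : ℝ) / 3) = (n3 f).toReal ∧ n3 f ≠ ⊤ := by
  have hf := f.continuous
  constructor
  · rw [integral_eq_lintegral_of_nonneg_ae (.of_forall fun x => by positivity) (by fun_prop), n3,
      ENNReal.toReal_rpow]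
    simp_rw [← ofReal_norm, ENNReal.ofReal_pow (norm_nonneg _)]
  · exact ENNReal.rpow_ne_top_of_nonneg (by norm_num)
      (lintegral_enorm_pow_ne_top f 3 (by norm_num))

/-- Conversion of `d3` to the Bochner integral, whose value is not a junk value. -/
lemma d3_facts (f : SchwartzMap E2 ℂ) :
    (∫ x : E2, ‖fderiv ℝ (⇑f) x‖ ^ 3) ^ ((1 : ℝ) / 3) = (d3 f).toReal ∧ d3 f ≠ ⊤ := by
  have hf := continuous_fderiv_schwartz f
  constructor
  · rw [integral_eq_lintegral_of_nonneg_ae (.of_forall fun x => by positivity) (by fun_prop), d3,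
      ENNReal.toReal_rpow]
    simp_rw [← ofReal_norm, ENNReal.ofReal_pow (norm_nonneg _)]
  · refine ENNReal.rpow_ne_top_of_nonneg (by norm_num) ?_
    have h3 := (eLpNorm_lt_top_iff_lintegral_rpow_enorm_lt_top (p := 3) (by norm_num)
      (by norm_num)).1 ((SchwartzMap.fderivCLM ℝ E2 ℂ f).memLp (3 : ENNReal)).eLpNorm_lt_top
    simpa using h3.ne

lemma exists_schwartz_mul (f g : SchwartzMap E2 ℂ) :
    ∃ p : SchwartzMap E2 ℂ, (p : E2 → ℂ) = fun x => f x * g x := by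
  refine ⟨SchwartzMap.smulLeftCLM ℂ (f : E2 → ℂ) g, ?_⟩
  rw [SchwartzMap.smulLeftCLM_apply f.hasTemperateGrowth]
  rfl

/-- The product estimate on the Fourier side, with both sides squared. -/
lemma main_ennreal (f g : SchwartzMap E2 ℂ) :
    ∫⁻ ξ, ‖ξ‖ₑ * ‖𝓕 (fun x => f x * g x) ξ‖ₑ ^ 2 ≤
      prodC * (n3 f + d3 f) ^ 2 * ∫⁻ ξ, ‖ξ‖ₑ * ‖𝓕 (g : E2 → ℂ) ξ‖ₑ ^ 2 := by
  obtain ⟨p, hpc⟩ := exists_schwartz_mul f g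
  have h := gag_mul_le f g
  rw [← hpc, gag_eq p, gag_eq g] at h
  rw [← hpc]
  refine (ENNReal.mul_le_mul_iff_right cst_ne_zero cst_ne_top).1 (h.trans_eq ?_)
  ring

/-- **Fractional product estimate.** -/
theorem fractional_product_estimate :
    ∃ C : ℝ, 0 < C ∧
      ∀ f g : SchwartzMap E2 ℂ,
        (∫ x : E2, ‖fm (fun ξ => ((Real.sqrt ‖ξ‖ : ℝ) : ℂ)) (fun y => f y * g y) x‖ ^ 2)
            ^ ((1 : ℝ) / 2) ≤
          C * ((∫ x : E2, ‖f x‖ ^ 3) ^ ((1 : ℝ) / 3) +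
                (∫ x : E2, ‖fderiv ℝ (⇑f) x‖ ^ 3) ^ ((1 : ℝ) / 3)) *
            (∫ x : E2, ‖fm (fun ξ => ((Real.sqrt ‖ξ‖ : ℝ) : ℂ)) (⇑g) x‖ ^ 2) ^ ((1 : ℝ) / 2) := by
  refine ⟨√prodC.toReal + 1, by positivity, fun f g => ?_⟩
  obtain ⟨p, hp⟩ := exists_schwartz_mul f g
  have h := main_ennreal f g
  have hG := (fm_facts g).2
  have hN : n3 f + d3 f ≠ ⊤ := ENNReal.add_ne_top.2 ⟨(n3_facts f).2, (d3_facts f).2⟩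
  rw [← hp] at h ⊢
  rw [(fm_facts p).1, (fm_facts g).1, (n3_facts f).1, (d3_facts f).1,
    ← ENNReal.toReal_add (n3_facts f).2 (d3_facts f).2]
  have hr := ENNReal.toReal_mono (ENNReal.mul_ne_top (ENNReal.mul_ne_top prodC_ne_top
    (ENNReal.pow_ne_top hN)) hG) h
  rw [ENNReal.toReal_mul, ENNReal.toReal_mul, ENNReal.toReal_pow] at hr
  rw [← Real.sqrt_eq_rpow, ← Real.sqrt_eq_rpow]
  refine (Real.sqrt_le_sqrt hr).trans ?_
  rw [Real.sqrt_mul (by positivity), Real.sqrt_mul (by positivity),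
    Real.sqrt_sq ENNReal.toReal_nonneg]
  gcongr
  linarith

end
end

section
/- For m ∈ ℤ and y ≥ 0 let J_m(y) := ∫₀^{2π} e^{i(y cosθ + mθ)} dθ. There exist an absolute constant C and, for each m ∈ ℤ, continuously differentiable functions J_{m,+}, J_{m,−} : [0,∞) → ℂ such that J_m(y) = e^{iy} J_{m,+}(y) + e^{−iy} J_{m,−}(y) for all y ≥ 0, and (1+y)^{1/2} |J_{m,±}(y)| + (1+y)^{3/2} |J_{m,±}'(y)| ≤ C (1+|m|)² for all y ≥ 0 and all m ∈ ℤ. -/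
/-!
Write `E = e^{i(y cos θ + mθ)}`. The amplitudes are cut out with the trigonometric partition of unity
`1 = cos²(θ/2) + sin²(θ/2)`, namely `J_{m,+}(y) = ∫ cos²(θ/2) e^{-iy} E dθ` and
`J_{m,-}(y) = ∫ sin²(θ/2) e^{iy} E dθ`, that is,
`J_{m,±} = e^{∓iy} (J_m / 2 ± (J_{m+1} + J_{m-1}) / 4)`.
The cutoff `cos²(θ/2)` vanishes to second order at the other stationary point `θ = π`, so
differentiating in `y` produces the weight `sin² θ`, which vanishes to second order at both stationary
points: `J_{m,±}' = ± (i/8) e^{∓iy} (J_{m+2} - 2 J_m + J_{m-2})`. Two uses of the recurrence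
`y (J_{k+1} - J_{k-1}) = 2ik J_k` (`Jbessel_recurrence`, an integration by parts) gain a factor
`(1 + |m|) / y`.

Everything thus follows from the van der Corput type bound `|J_m(y)| ≤ 20 (1 + |m|) / √y`
(`norm_Jbessel_le_div_sqrt`). It is obtained by integrating by parts against the regularised
multiplier `sin θ / (1 + y sin² θ)`, which avoids any splitting of the circle; the error terms are
`O(|m| / √y)` and a multiple of `∫ dθ / (1 + y sin² θ) = O(1 / √y)`.
-/

/-!
STATEMENT 14: Stationary-phase decomposition of the Bessel-type oscillatory integral
`J_m(y) = ∫₀^{2π} e^{i(y cosθ + mθ)} dθ`: there is an absolute constant `C` and, for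
each `m ∈ ℤ`, continuously differentiable functions `J_{m,±} : [0,∞) → ℂ` with
`J_m(y) = e^{iy} J_{m,+}(y) + e^{−iy} J_{m,−}(y)` and
`(1+y)^{1/2}|J_{m,±}(y)| + (1+y)^{3/2}|J_{m,±}'(y)| ≤ C (1+|m|)²` for all `y ≥ 0`.
-/

open Complex

noncomputable section

/-- The Bessel-type oscillatory integral `J_m(y) = ∫₀^{2π} e^{i(y cosθ + mθ)} dθ`. -/
def Jbessel (m : ℤ) (y : ℝ) : ℂ :=
  ∫ θ in (0 : ℝ)..(2 * Real.pi), Complex.exp (Complex.I * ((y * Real.cos θ + m * θ : ℝ) : ℂ))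

/-! ### The kernel and the classical identities -/

/-- The integrand `e^{i(y cos θ + mθ)}` of `Jbessel m y`. -/
def besselKernel (m : ℤ) (y θ : ℝ) : ℂ :=
  Complex.exp (Complex.I * ((y * Real.cos θ + m * θ : ℝ) : ℂ))

lemma Jbessel_eq (m : ℤ) (y : ℝ) :
    Jbessel m y = ∫ θ in (0 : ℝ)..(2 * Real.pi), besselKernel m y θ := rfl

lemma norm_besselKernel (m : ℤ) (y θ : ℝ) : ‖besselKernel m y θ‖ = 1 := by
  unfold besselKernel
  rw [mul_comm]
  exact Complex.norm_exp_ofReal_mul_I _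

lemma continuous_besselKernel (m : ℤ) (y : ℝ) : Continuous (besselKernel m y) := by
  unfold besselKernel
  fun_prop

lemma besselKernel_succ (m : ℤ) (y θ : ℝ) :
    besselKernel (m + 1) y θ = besselKernel m y θ * (Complex.cos θ + Complex.sin θ * Complex.I) := by
  unfold besselKernel
  rw [← Complex.exp_mul_I, ← Complex.exp_add]
  congr 1
  push_cast
  ring

lemma besselKernel_pred (m : ℤ) (y θ : ℝ) :
    besselKernel (m - 1) y θ = besselKernel m y θ * (Complex.cos θ - Complex.sin θ * Complex.I) := by
  have h : Complex.cos θ - Complex.sin θ * Complex.I = Complex.exp (-(θ : ℂ) * Complex.I) := by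
    rw [Complex.exp_mul_I, Complex.cos_neg, Complex.sin_neg]
    ring
  unfold besselKernel
  rw [h, ← Complex.exp_add]
  congr 1
  push_cast
  ring

lemma hasDerivAt_besselKernel_angle (m : ℤ) (y θ : ℝ) :
    HasDerivAt (besselKernel m y)
      (besselKernel m y θ * (Complex.I * ((y * -Real.sin θ + m : ℝ) : ℂ))) θ := by
  have h1 : HasDerivAt (fun t : ℝ => y * Real.cos t + m * t) (y * -Real.sin θ + m) θ := by
    have h2 := ((Real.hasDerivAt_cos θ).const_mul y).add ((hasDerivAt_id θ).const_mul (m : ℝ))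
    rw [mul_one] at h2
    exact h2
  exact (h1.ofReal_comp.const_mul Complex.I).cexp

lemma hasDerivAt_besselKernel_param (m : ℤ) (y θ : ℝ) :
    HasDerivAt (fun t => besselKernel m t θ)
      (besselKernel m y θ * (Complex.I * ((Real.cos θ : ℝ) : ℂ))) y := by
  have h1 : HasDerivAt (fun t : ℝ => t * Real.cos θ + m * θ) (Real.cos θ) y := by
    simpa using ((hasDerivAt_id y).mul_const (Real.cos θ)).add_const ((m : ℝ) * θ)
  exact (h1.ofReal_comp.const_mul Complex.I).cexp

/-- The classical identity `J_m' = (i/2)(J_{m+1} + J_{m-1})`, by differentiation under the integral. -/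
lemma hasDerivAt_Jbessel (m : ℤ) (y : ℝ) :
    HasDerivAt (Jbessel m) (Complex.I / 2 * (Jbessel (m + 1) y + Jbessel (m - 1) y)) y := by
  have h := (intervalIntegral.hasDerivAt_integral_of_dominated_loc_of_deriv_le
    (μ := MeasureTheory.volume) (a := 0) (b := 2 * Real.pi) (bound := fun _ => (1 : ℝ))
    (F := fun t θ => besselKernel m t θ)
    (F' := fun t θ => besselKernel m t θ * (Complex.I * ((Real.cos θ : ℝ) : ℂ)))
    (x₀ := y) (s := Set.univ) Filter.univ_mem
    (Filter.Eventually.of_forall fun t => (continuous_besselKernel m t).aestronglyMeasurable)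
    ((continuous_besselKernel m y).intervalIntegrable _ _)
    (((continuous_besselKernel m y).mul (by fun_prop)).aestronglyMeasurable)
    (Filter.Eventually.of_forall fun θ _ t _ => by
      rw [norm_mul, norm_besselKernel, norm_mul, Complex.norm_I, Complex.norm_real]
      simpa using Real.abs_cos_le_one θ)
    (by simp)
    (Filter.Eventually.of_forall fun θ _ t _ => hasDerivAt_besselKernel_param m t θ)).2
  refine h.congr_deriv (Eq.symm ?_)
  rw [Jbessel_eq, Jbessel_eq, ← intervalIntegral.integral_add
    ((continuous_besselKernel _ y).intervalIntegrable _ _)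
    ((continuous_besselKernel _ y).intervalIntegrable _ _), ← intervalIntegral.integral_const_mul]
  congr 1
  funext θ
  rw [besselKernel_succ, besselKernel_pred]
  push_cast
  ring

lemma continuous_Jbessel (m : ℤ) : Continuous (Jbessel m) :=
  continuous_iff_continuousAt.2 fun y => (hasDerivAt_Jbessel m y).continuousAt

lemma besselKernel_two_pi (m : ℤ) (y : ℝ) :
    besselKernel m y (2 * Real.pi) = besselKernel m y 0 := by
  unfold besselKernel
  rw [Complex.exp_eq_exp_iff_exists_int]
  refine ⟨m, ?_⟩
  push_cast
  simp
  ring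

/-- The integral of `∂_θ e^{i(y cos θ + mθ)}` over the circle vanishes. -/
lemma Jbessel_recurrence (m : ℤ) (y : ℝ) :
    (y : ℂ) * (Jbessel (m + 1) y - Jbessel (m - 1) y) = 2 * Complex.I * m * Jbessel m y := by
  have h := intervalIntegral.integral_eq_sub_of_hasDerivAt (a := 0) (b := 2 * Real.pi)
    (fun θ _ => hasDerivAt_besselKernel_angle m y θ)
    (((continuous_besselKernel m y).mul (by fun_prop)).intervalIntegrable _ _)
  rw [besselKernel_two_pi, sub_self] at h
  have hc := fun k => (continuous_besselKernel k y).intervalIntegrable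
    (μ := MeasureTheory.volume) 0 (2 * Real.pi)
  rw [← sub_eq_zero, Jbessel_eq, Jbessel_eq, Jbessel_eq, ← intervalIntegral.integral_sub (hc _) (hc _),
    ← intervalIntegral.integral_const_mul, ← intervalIntegral.integral_const_mul,
    ← intervalIntegral.integral_sub (((hc _).sub (hc _)).const_mul _) ((hc _).const_mul _)]
  rw [show (0 : ℂ) = (-2) * 0 by ring, ← h, ← intervalIntegral.integral_const_mul]
  congr 1
  funext θ
  rw [besselKernel_succ, besselKernel_pred]
  push_cast
  ring

/-! ### Decay of the Bessel integral -/

lemma norm_Jbessel_le (m : ℤ) (y : ℝ) : ‖Jbessel m y‖ ≤ 2 * Real.pi := by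
  have h := intervalIntegral.norm_integral_le_of_norm_le_const (a := 0) (b := 2 * Real.pi) (C := 1)
    (f := besselKernel m y) (fun θ _ => (norm_besselKernel m y θ).le)
  rwa [sub_zero, one_mul, abs_of_pos Real.two_pi_pos] at h

/-- By periodicity the integral is twice that over `[-π/2, π/2]`, where Jordan's inequality
`|sin θ| ≥ 2|θ|/π` compares the integrand with that of an arctangent. -/
lemma integral_inv_one_add_mul_sin_sq_le {y : ℝ} (hy : 0 < y) :
    ∫ θ in (0 : ℝ)..(2 * Real.pi), (1 + y * Real.sin θ ^ 2)⁻¹ ≤ Real.pi ^ 2 / √y := by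
  have hpi := Real.pi_pos
  have hr : 0 < √y := Real.sqrt_pos.2 hy
  have hrr : √y ^ 2 = y := Real.sq_sqrt hy.le
  have hcont : Continuous fun θ : ℝ => (1 + y * Real.sin θ ^ 2)⁻¹ :=
    Continuous.inv₀ (by fun_prop) fun θ => by positivity
  have hper : Function.Periodic (fun θ : ℝ => (1 + y * Real.sin θ ^ 2)⁻¹) Real.pi := by
    intro θ
    simp [Real.sin_add_pi]
  have h1 : ∫ θ in (0 : ℝ)..(2 * Real.pi), (1 + y * Real.sin θ ^ 2)⁻¹
      = 2 * ∫ θ in (-(Real.pi / 2))..(Real.pi / 2), (1 + y * Real.sin θ ^ 2)⁻¹ := by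
    rw [← intervalIntegral.integral_add_adjacent_intervals (b := Real.pi)
      (hcont.intervalIntegrable _ _) (hcont.intervalIntegrable _ _)]
    have e1 := hper.intervalIntegral_add_eq 0 (-(Real.pi / 2))
    have e2 := hper.intervalIntegral_add_eq Real.pi (-(Real.pi / 2))
    rw [show -(Real.pi / 2) + Real.pi = Real.pi / 2 by ring] at e1 e2
    rw [zero_add] at e1
    rw [show Real.pi + Real.pi = 2 * Real.pi by ring] at e2
    rw [e1, e2]
    ring
  set c : ℝ := 2 / Real.pi * √y with hc
  have hcpos : 0 < c := by positivity
  have h2 : ∫ θ in (-(Real.pi / 2))..(Real.pi / 2), (1 + y * Real.sin θ ^ 2)⁻¹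
      ≤ ∫ θ in (-(Real.pi / 2))..(Real.pi / 2), (1 + (c * θ) ^ 2)⁻¹ := by
    refine intervalIntegral.integral_mono_on (by linarith) (hcont.intervalIntegrable _ _)
      (Continuous.intervalIntegrable (Continuous.inv₀ (by fun_prop) fun θ => by positivity) _ _) ?_
    intro θ hθ
    have hj := Real.mul_abs_le_abs_sin (abs_le.2 hθ)
    have hsq : (2 / Real.pi * |θ|) ^ 2 ≤ |Real.sin θ| ^ 2 := by gcongr
    rw [mul_pow, sq_abs, sq_abs] at hsq
    have : (c * θ) ^ 2 ≤ y * Real.sin θ ^ 2 := by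
      calc (c * θ) ^ 2 = √y ^ 2 * ((2 / Real.pi) ^ 2 * θ ^ 2) := by rw [hc]; ring
        _ ≤ y * Real.sin θ ^ 2 := by rw [hrr]; gcongr
    gcongr
  have h3 : ∫ θ in (-(Real.pi / 2))..(Real.pi / 2), (1 + (c * θ) ^ 2)⁻¹ ≤ c⁻¹ * Real.pi := by
    rw [intervalIntegral.integral_comp_mul_left (fun x : ℝ => (1 + x ^ 2)⁻¹) hcpos.ne',
      integral_inv_one_add_sq, smul_eq_mul]
    gcongr
    linarith [Real.arctan_lt_pi_div_two (c * (Real.pi / 2)),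
      Real.neg_pi_div_two_lt_arctan (c * -(Real.pi / 2))]
  calc _ ≤ 2 * (c⁻¹ * Real.pi) := by rw [h1]; linarith
    _ = Real.pi ^ 2 / √y := by rw [hc]; field_simp

lemma norm_Jbessel_le_div_sqrt (m : ℤ) {y : ℝ} (hy : 0 < y) :
    ‖Jbessel m y‖ ≤ 20 * (1 + |(m : ℝ)|) / √y := by
  have hpi := Real.pi_pos
  have hr : 0 < √y := Real.sqrt_pos.2 hy
  have hrr : √y ^ 2 = y := Real.sq_sqrt hy.le
  have hD : ∀ θ : ℝ, 0 < 1 + y * Real.sin θ ^ 2 := fun θ => by positivity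
  set g : ℝ → ℝ := fun θ => Real.sin θ / (1 + y * Real.sin θ ^ 2) with hg
  set g' : ℝ → ℝ := fun θ =>
    Real.cos θ * (1 - y * Real.sin θ ^ 2) / (1 + y * Real.sin θ ^ 2) ^ 2 with hg'
  have hgd : ∀ θ, HasDerivAt g (g' θ) θ := by
    intro θ
    have h := (Real.hasDerivAt_sin θ).div
      ((((Real.hasDerivAt_sin θ).pow 2).const_mul y).const_add 1) (hD θ).ne'
    refine h.congr_deriv ?_
    rw [hg']
    congr 1
    rw [Pi.pow_apply]
    push_cast
    ring
  have hgcont : Continuous g := by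
    simp only [hg]
    exact Continuous.div (by fun_prop) (by fun_prop) fun θ => (hD θ).ne'
  have hg'cont : Continuous g' := by
    simp only [hg']
    exact Continuous.div (by fun_prop) (by fun_prop) fun θ => (pow_pos (hD θ) 2).ne'
  have hDcont : Continuous fun θ : ℝ => (1 + y * Real.sin θ ^ 2)⁻¹ :=
    Continuous.inv₀ (by fun_prop) fun θ => (hD θ).ne'
  have hΦ : ∀ θ, HasDerivAt (fun t => (g t : ℂ) * besselKernel m y t)
      ((g' θ : ℂ) * besselKernel m y θ + (g θ : ℂ) *
        (besselKernel m y θ * (Complex.I * ((y * -Real.sin θ + m : ℝ) : ℂ)))) θ := fun θ =>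
    (hgd θ).ofReal_comp.mul (hasDerivAt_besselKernel_angle m y θ)
  have hΦcont : Continuous fun θ => ((g' θ : ℂ) * besselKernel m y θ + (g θ : ℂ) *
        (besselKernel m y θ * (Complex.I * ((y * -Real.sin θ + m : ℝ) : ℂ)))) := by
    have := continuous_besselKernel m y
    fun_prop
  have hint := intervalIntegral.integral_eq_sub_of_hasDerivAt (a := 0) (b := 2 * Real.pi)
    (fun θ _ => hΦ θ) (hΦcont.intervalIntegrable _ _)
  have hz : (g (2 * Real.pi) : ℂ) * besselKernel m y (2 * Real.pi)
      - (g 0 : ℂ) * besselKernel m y 0 = 0 := by simp [hg]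
  rw [hz] at hint
  -- `y sin θ · g = 1 - 1 / (1 + y sin² θ)`, so adding `i J_m` cancels the large
  -- term of the derivative of `g E`.
  have hkey : Complex.I * Jbessel m y = ∫ θ in (0 : ℝ)..(2 * Real.pi),
      ((g' θ : ℂ) + Complex.I * ((m * g θ + (1 + y * Real.sin θ ^ 2)⁻¹ : ℝ) : ℂ))
        * besselKernel m y θ := by
    rw [← add_zero (Complex.I * Jbessel m y), ← hint, Jbessel_eq,
      ← intervalIntegral.integral_const_mul, ← intervalIntegral.integral_add
        (((continuous_besselKernel m y).const_mul _).intervalIntegrable _ _)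
        (hΦcont.intervalIntegrable _ _)]
    congr 1
    funext θ
    have hs : (1 : ℝ) - g θ * (y * Real.sin θ) = (1 + y * Real.sin θ ^ 2)⁻¹ := by
      have := (hD θ).ne'
      simp only [hg]
      field_simp
      ring
    rw [← hs]
    push_cast
    ring
  have hgb : ∀ θ, |g θ| ≤ 1 / (2 * √y) := by
    intro θ
    rw [hg, abs_div, abs_of_pos (hD θ), div_le_div_iff₀ (hD θ) (by positivity), ← sq_abs (Real.sin θ)]
    nlinarith [sq_nonneg (√y * |Real.sin θ| - 1)]
  have hg'b : ∀ θ, |g' θ| ≤ (1 + y * Real.sin θ ^ 2)⁻¹ := by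
    intro θ
    have h1 : |1 - y * Real.sin θ ^ 2| ≤ 1 + y * Real.sin θ ^ 2 := by
      have : 0 ≤ y * Real.sin θ ^ 2 := by positivity
      rw [abs_le]
      constructor <;> linarith
    have h2 := mul_le_mul (Real.abs_cos_le_one θ) h1 (abs_nonneg _) zero_le_one
    rw [hg', abs_div, abs_of_pos (pow_pos (hD θ) 2), abs_mul, div_le_iff₀ (pow_pos (hD θ) 2)]
    calc _ ≤ 1 * (1 + y * Real.sin θ ^ 2) := h2
      _ = _ := by
        have := (hD θ).ne'
        field_simp
  have hbound : ‖Complex.I * Jbessel m y‖ ≤ ∫ θ in (0 : ℝ)..(2 * Real.pi),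
      (2 * (1 + y * Real.sin θ ^ 2)⁻¹ + |(m : ℝ)| * (1 / (2 * √y))) := by
    rw [hkey]
    refine intervalIntegral.norm_integral_le_of_norm_le Real.two_pi_pos.le
      (Filter.Eventually.of_forall fun θ _ => ?_)
      (((hDcont.const_mul 2).add continuous_const).intervalIntegrable _ _)
    rw [norm_mul, norm_besselKernel, mul_one]
    refine (norm_add_le _ _).trans ?_
    rw [norm_mul, Complex.norm_I, one_mul, Complex.norm_real, Complex.norm_real, Real.norm_eq_abs,
      Real.norm_eq_abs]
    have h1 := abs_add_le (m * g θ) ((1 + y * Real.sin θ ^ 2)⁻¹)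
    rw [abs_mul, abs_of_pos (inv_pos.2 (hD θ))] at h1
    have h2 := mul_le_mul_of_nonneg_left (hgb θ) (abs_nonneg (m : ℝ))
    linarith [hg'b θ]
  rw [norm_mul, Complex.norm_I, one_mul, intervalIntegral.integral_add
    ((hDcont.const_mul 2).intervalIntegrable _ _) (continuous_const.intervalIntegrable _ _),
    intervalIntegral.integral_const_mul, intervalIntegral.integral_const, smul_eq_mul] at hbound
  have hK := integral_inv_one_add_mul_sin_sq_le hy
  calc ‖Jbessel m y‖ ≤ 2 * (Real.pi ^ 2 / √y)
        + (2 * Real.pi - 0) * (|(m : ℝ)| * (1 / (2 * √y))) := by linarith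
    _ = (2 * Real.pi ^ 2 + Real.pi * |(m : ℝ)|) / √y := by field_simp; ring
    _ ≤ 20 * (1 + |(m : ℝ)|) / √y := by
      gcongr
      nlinarith [Real.pi_lt_d2, abs_nonneg (m : ℝ)]

lemma sqrt_one_add_mul_norm_Jbessel_le (m : ℤ) (y : ℝ) :
    √(1 + y) * ‖Jbessel m y‖ ≤ 30 * (1 + |(m : ℝ)|) := by
  have hm := abs_nonneg (m : ℝ)
  rcases le_total y 1 with h | h
  · have h1 : √(1 + y) ≤ 2 := Real.sqrt_le_iff.2 ⟨by norm_num, by linarith⟩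
    calc √(1 + y) * ‖Jbessel m y‖ ≤ 2 * (2 * Real.pi) := by
          gcongr
          exact norm_Jbessel_le m y
      _ ≤ _ := by linarith [Real.pi_lt_d2]
  · have hy0 : 0 < y := by linarith
    have hr : 0 < √y := Real.sqrt_pos.2 hy0
    have h1 : √(1 + y) ≤ 1.5 * √y := by
      rw [Real.sqrt_le_iff]
      refine ⟨by positivity, ?_⟩
      rw [mul_pow, Real.sq_sqrt hy0.le]
      linarith
    calc √(1 + y) * ‖Jbessel m y‖ ≤ (1.5 * √y) * (20 * (1 + |(m : ℝ)|) / √y) := by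
          gcongr
          exact norm_Jbessel_le_div_sqrt m hy0
      _ = _ := by field_simp; norm_num

/-! ### The second difference in the order -/

/-- `J_{m+2} - 2 J_m + J_{m-2} = -4 ∫ sin² θ e^{i(y cos θ + mθ)} dθ`, the quantity to which both
amplitude derivatives are proportional. -/
def besselSecondDiff (m : ℤ) (y : ℝ) : ℂ :=
  Jbessel (m + 2) y - 2 * Jbessel m y + Jbessel (m - 2) y

lemma mul_besselSecondDiff (m : ℤ) (y : ℝ) :
    (y : ℂ) * besselSecondDiff m y = 2 * Complex.I *
      (((m + 1 : ℤ) : ℂ) * Jbessel (m + 1) y - ((m - 1 : ℤ) : ℂ) * Jbessel (m - 1) y) := by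
  have h1 := Jbessel_recurrence (m + 1) y
  have h2 := Jbessel_recurrence (m - 1) y
  rw [show m + 1 + 1 = m + 2 by ring, show m + 1 - 1 = m by ring] at h1
  rw [show m - 1 + 1 = m by ring, show m - 1 - 1 = m - 2 by ring] at h2
  unfold besselSecondDiff
  linear_combination h1 - h2

lemma norm_besselSecondDiff_le (m : ℤ) {y : ℝ} (hy : 0 ≤ y) :
    √(1 + y) * (1 + y) * ‖besselSecondDiff m y‖ ≤ 720 * (1 + |(m : ℝ)|) ^ 2 := by
  have hm := abs_nonneg (m : ℝ)
  have hs := Real.sqrt_nonneg (1 + y)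
  have hp2 : |((m + 2 : ℤ) : ℝ)| ≤ |(m : ℝ)| + 2 := by
    push_cast
    simpa using abs_add_le (m : ℝ) 2
  have hm2 : |((m - 2 : ℤ) : ℝ)| ≤ |(m : ℝ)| + 2 := by
    push_cast
    simpa using abs_sub (m : ℝ) 2
  have hp1 : |((m + 1 : ℤ) : ℝ)| ≤ |(m : ℝ)| + 1 := by
    push_cast
    simpa using abs_add_le (m : ℝ) 1
  have hm1 : |((m - 1 : ℤ) : ℝ)| ≤ |(m : ℝ)| + 1 := by
    push_cast
    simpa using abs_sub (m : ℝ) 1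
  have b0 := sqrt_one_add_mul_norm_Jbessel_le m y
  have bp2 := sqrt_one_add_mul_norm_Jbessel_le (m + 2) y
  have bm2 := sqrt_one_add_mul_norm_Jbessel_le (m - 2) y
  have bp1 := sqrt_one_add_mul_norm_Jbessel_le (m + 1) y
  have bm1 := sqrt_one_add_mul_norm_Jbessel_le (m - 1) y
  have hA : √(1 + y) * ‖besselSecondDiff m y‖ ≤ 360 * (1 + |(m : ℝ)|) := by
    have h : ‖besselSecondDiff m y‖
        ≤ ‖Jbessel (m + 2) y‖ + 2 * ‖Jbessel m y‖ + ‖Jbessel (m - 2) y‖ := by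
      unfold besselSecondDiff
      refine (norm_add_le _ _).trans ?_
      gcongr
      refine (norm_sub_le _ _).trans ?_
      rw [norm_mul, Complex.norm_ofNat]
    linarith [mul_le_mul_of_nonneg_left h hs]
  have hB : √(1 + y) * (y * ‖besselSecondDiff m y‖) ≤ 240 * (1 + |(m : ℝ)|) ^ 2 := by
    have h : y * ‖besselSecondDiff m y‖ ≤ 2 * ((|(m : ℝ)| + 1) * ‖Jbessel (m + 1) y‖
        + (|(m : ℝ)| + 1) * ‖Jbessel (m - 1) y‖) := by
      have e : y * ‖besselSecondDiff m y‖ = ‖(y : ℂ) * besselSecondDiff m y‖ := by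
        rw [norm_mul, Complex.norm_real, Real.norm_eq_abs, abs_of_nonneg hy]
      rw [e, mul_besselSecondDiff, norm_mul, norm_mul, Complex.norm_I, Complex.norm_ofNat, mul_one]
      gcongr
      refine (norm_sub_le _ _).trans ?_
      rw [norm_mul, norm_mul, Complex.norm_intCast, Complex.norm_intCast]
      gcongr
    have h' := mul_le_mul_of_nonneg_left h hs
    have k1 : (|(m : ℝ)| + 1) * (√(1 + y) * ‖Jbessel (m + 1) y‖)
        ≤ (|(m : ℝ)| + 1) * (30 * (2 + |(m : ℝ)|)) :=
      mul_le_mul_of_nonneg_left (by linarith) (by linarith)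
    have k2 : (|(m : ℝ)| + 1) * (√(1 + y) * ‖Jbessel (m - 1) y‖)
        ≤ (|(m : ℝ)| + 1) * (30 * (2 + |(m : ℝ)|)) :=
      mul_le_mul_of_nonneg_left (by linarith) (by linarith)
    nlinarith
  nlinarith

/-! ### The amplitudes -/

/-- With `ε = 1` or `ε = -1`, the amplitude `J_{m,ε}` of `e^{iεy}`, i.e.
`∫ (1 + ε cos θ)/2 · e^{iy(cos θ - ε) + imθ} dθ`. -/
def besselAmplitude (ε : ℝ) (m : ℤ) (y : ℝ) : ℂ :=
  Complex.exp (-(Complex.I * (ε * y))) *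
    (Jbessel m y / 2 + ε / 4 * (Jbessel (m + 1) y + Jbessel (m - 1) y))

lemma hasDerivAt_besselAmplitude {ε : ℝ} (hε : ε ^ 2 = 1) (m : ℤ) (y : ℝ) :
    HasDerivAt (besselAmplitude ε m) (Complex.exp (-(Complex.I * (ε * y))) *
      (ε * Complex.I / 8 * besselSecondDiff m y)) y := by
  have hε' : (ε : ℂ) ^ 2 = 1 := by exact_mod_cast hε
  have hexp : HasDerivAt (fun t : ℝ => Complex.exp (-(Complex.I * (ε * t))))
      (Complex.exp (-(Complex.I * (ε * y))) * (-(Complex.I * (ε * 1)))) y :=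
    ((((hasDerivAt_id y).ofReal_comp.const_mul (ε : ℂ)).const_mul Complex.I).neg).cexp
  have hp := hasDerivAt_Jbessel (m + 1) y
  have hq := hasDerivAt_Jbessel (m - 1) y
  rw [show m + 1 + 1 = m + 2 by ring, show m + 1 - 1 = m by ring] at hp
  rw [show m - 1 + 1 = m by ring, show m - 1 - 1 = m - 2 by ring] at hq
  have h := hexp.mul (((hasDerivAt_Jbessel m y).div_const 2).add
    ((hp.add hq).const_mul ((ε : ℂ) / 4)))
  refine h.congr_deriv ?_
  simp only [Pi.add_apply]
  unfold besselSecondDiff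
  linear_combination (-Complex.exp (-(Complex.I * (ε * y))) * Complex.I / 4
    * (Jbessel (m + 1) y + Jbessel (m - 1) y)) * hε'

lemma contDiff_besselAmplitude {ε : ℝ} (hε : ε ^ 2 = 1) (m : ℤ) :
    ContDiff ℝ 1 (besselAmplitude ε m) := by
  rw [contDiff_one_iff_deriv]
  refine ⟨fun y => (hasDerivAt_besselAmplitude hε m y).differentiableAt, ?_⟩
  rw [funext fun y => (hasDerivAt_besselAmplitude hε m y).deriv]
  unfold besselSecondDiff
  have := continuous_Jbessel
  fun_prop

lemma besselAmplitude_bound {ε : ℝ} (hε : ε ^ 2 = 1) (m : ℤ) {y : ℝ} (hy : 0 ≤ y) :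
    (1 + y) ^ ((1 : ℝ) / 2) * ‖besselAmplitude ε m y‖
      + (1 + y) ^ ((3 : ℝ) / 2) * ‖derivWithin (besselAmplitude ε m) (Set.Ici 0) y‖ ≤
        150 * (1 + |(m : ℝ)|) ^ 2 := by
  have hm := abs_nonneg (m : ℝ)
  have hs := Real.sqrt_nonneg (1 + y)
  have hεabs : |ε| = 1 := by
    nlinarith [sq_abs ε, abs_nonneg ε]
  have hexp : ‖Complex.exp (-(Complex.I * (ε * y)))‖ = 1 := by
    have := Complex.norm_exp_ofReal_mul_I (-(ε * y))
    rw [← this]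
    congr 2
    push_cast
    ring
  have h32 : (1 + y) ^ ((3 : ℝ) / 2) = √(1 + y) * (1 + y) := by
    rw [show (3 : ℝ) / 2 = 1 / 2 + 1 by norm_num, Real.rpow_add (by linarith), Real.rpow_one,
      Real.sqrt_eq_rpow]
  rw [h32, ← Real.sqrt_eq_rpow,
    (hasDerivAt_besselAmplitude hε m y).hasDerivWithinAt.derivWithin (uniqueDiffOn_Ici 0 y hy)]
  have hd : ‖Complex.exp (-(Complex.I * (ε * y))) * (ε * Complex.I / 8 * besselSecondDiff m y)‖
      = 1 / 8 * ‖besselSecondDiff m y‖ := by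
    simp [hexp, hεabs]
  have ha : ‖besselAmplitude ε m y‖
      ≤ 1 / 2 * ‖Jbessel m y‖ + 1 / 4 * (‖Jbessel (m + 1) y‖ + ‖Jbessel (m - 1) y‖) := by
    unfold besselAmplitude
    rw [norm_mul, hexp, one_mul]
    refine (norm_add_le _ _).trans ?_
    have e1 : ‖Jbessel m y / 2‖ = 1 / 2 * ‖Jbessel m y‖ := by
      rw [norm_div, Complex.norm_ofNat]
      ring
    have e2 : ‖(ε : ℂ) / 4‖ = 1 / 4 := by simp [hεabs]
    rw [norm_mul, e1, e2]
    gcongr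
    exact norm_add_le _ _
  have hp1 : |((m + 1 : ℤ) : ℝ)| ≤ |(m : ℝ)| + 1 := by
    push_cast
    simpa using abs_add_le (m : ℝ) 1
  have hm1 : |((m - 1 : ℤ) : ℝ)| ≤ |(m : ℝ)| + 1 := by
    push_cast
    simpa using abs_sub (m : ℝ) 1
  have b0 := sqrt_one_add_mul_norm_Jbessel_le m y
  have bp1 := sqrt_one_add_mul_norm_Jbessel_le (m + 1) y
  have bm1 := sqrt_one_add_mul_norm_Jbessel_le (m - 1) y
  have bD := norm_besselSecondDiff_le m hy
  have ha' := mul_le_mul_of_nonneg_left ha hs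
  rw [hd]
  nlinarith

/-- **Bessel function decomposition with uniform symbol bounds.** -/
theorem bessel_decomposition :
    ∃ C : ℝ, 0 < C ∧
      ∀ m : ℤ, ∃ Jp Jm : ℝ → ℂ,
        ContDiffOn ℝ 1 Jp (Set.Ici 0) ∧ ContDiffOn ℝ 1 Jm (Set.Ici 0) ∧
        (∀ y : ℝ, 0 ≤ y →
          Jbessel m y = Complex.exp (Complex.I * (y : ℂ)) * Jp y
            + Complex.exp (-(Complex.I * (y : ℂ))) * Jm y) ∧
        (∀ y : ℝ, 0 ≤ y →
          (1 + y) ^ ((1 : ℝ) / 2) * ‖Jp y‖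
              + (1 + y) ^ ((3 : ℝ) / 2) * ‖derivWithin Jp (Set.Ici 0) y‖ ≤
            C * (1 + |(m : ℝ)|) ^ 2) ∧
        (∀ y : ℝ, 0 ≤ y →
          (1 + y) ^ ((1 : ℝ) / 2) * ‖Jm y‖
              + (1 + y) ^ ((3 : ℝ) / 2) * ‖derivWithin Jm (Set.Ici 0) y‖ ≤
            C * (1 + |(m : ℝ)|) ^ 2) := by
  refine ⟨150, by norm_num, fun m => ⟨besselAmplitude 1 m, besselAmplitude (-1) m,
    (contDiff_besselAmplitude (by norm_num) m).contDiffOn,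
    (contDiff_besselAmplitude (by norm_num) m).contDiffOn, fun y _ => ?_,
    fun y hy => besselAmplitude_bound (by norm_num) m hy,
    fun y hy => besselAmplitude_bound (by norm_num) m hy⟩⟩
  have h1 : Complex.exp (Complex.I * (y : ℂ)) * Complex.exp (-(Complex.I * (y : ℂ))) = 1 := by
    rw [← Complex.exp_add, add_neg_cancel, Complex.exp_zero]
  have e1 : Complex.exp (-(Complex.I * (((1 : ℝ) : ℂ) * y))) = Complex.exp (-(Complex.I * (y : ℂ))) := by
    simp
  have e2 : Complex.exp (-(Complex.I * (((-1 : ℝ) : ℂ) * y))) = Complex.exp (Complex.I * (y : ℂ)) := by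
    simp
  unfold besselAmplitude
  rw [e1, e2]
  push_cast
  linear_combination (-Jbessel m y) * h1

end
end
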